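/- The map V ↦ P_V induces a bijection from the set of isomorphism classes of finite-dimensional irreducible □_q-modules of type 1 onto the set of polynomials in F[z] that have constant coefficient 1 and do not vanish at z = 1. -/

import Mathlib

/-!
A type 1 module of diameter `d` is treated as a family of four operators `x i` that satisfy the relations
of `□_q` and are annihilated by `∏ (X - q^(2n-d))` (`IsBox`). The relation between `x i` and `x (i+1)`
attaches a flag `Fl i` to each arrow `x i → x (i+1)`, and consecutive flags are opposite. If the module is
irreducible and the extreme eigenvalues occur, then `Fl 0` and `Fl 2` are opposite too (`Fl_opp`). Their
intersections are then the weight spaces of an operator `K₀`, and the action extends to `U_q(L(sl₂))`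
(`exists_uq`), because, given the weight relations, the Chevalley relations are equivalent to those of
`□_q` (`isUq_iff`).

Let `EE` be the projection to the lowest weight space `Fl 0 1`, the `q^d`-eigenspace of `x 1`. On this
space `(e₁⁺)^j (e₀⁺)^j` equals an operator `T_j` that is a multiple of `EE ∏_{n<j} (x₃ - q^(2n-d))`
(`IsUqMod.Tt_eq`), so the Drinfel'd polynomial can be read off from the `x i`. The `q`-Serre relations allow
every `EE w EE`, with `w` a word in `x 1` and `x 3`, to be written in terms of the `EE (x 3)^j EE` (`words`);
and a subspace stable under `x 1` and `x 3` is stable under all generators (`inv_of_odd`). Hence a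
`T_j`-stable subspace `X` of the lowest weight space generates a submodule whose projection by `EE` is
contained in `X` (`EE_gen13`). Consequently the `T_j` act irreducibly on the lowest weight space of an
irreducible module (`Tt_irr`), and any subspace on which they act irreducibly is the lowest weight space
of an irreducible subquotient (`exists_subquot`).

The `T_j` are not known to commute in advance, so the one-dimensionality of the lowest weight space
(`dim_one`) is proved by induction on `d`. Over an algebraically closed field there are `ζ ≠ 0` and a
lowest weight vector `u` with `∑ (-1)^i ζ^i T_i u / ([i]_q!)² = 0` (`exists_pencil`). Twisting by `ζ` gives a
module with an irreducible subquotient that has the same lowest weight space; the vanishing makes the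
vector `eta u` disappear in it, and a dimension count shows that its diameter is smaller.

The number `P_V(1)` is the scalar by which `EE (eta u)` differs from `u` (`EE_eta_poly`); it is nonzero
because the flags `Fl 1` and `Fl 3` are opposite. For injectivity, if two irreducible modules have the same
scalars `σ_j` on lowest weight vectors `u`, `u'`, then the submodule of the direct sum generated by
`(u, u')` is the graph of an isomorphism (`exists_iso`). For surjectivity, a tensor product of
two-dimensional evaluation modules, one for each root, contains a lowest weight vector with the
prescribed `σ_j` (`exists_uqMod`), and `P(1) ≠ 0` ensures that the irreducible subquotient containing it has
full diameter (`exists_irr`).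
-/

noncomputable section

open FreeAlgebra

variable (F : Type) [Field F]

/-- The defining relations of the algebra `□_q` (Terwilliger), on the free algebra
with generators `x_i`, `i ∈ ℤ/4ℤ`. -/
inductive BoxRel (q : F) : FreeAlgebra F (ZMod 4) → FreeAlgebra F (ZMod 4) → Prop
  | rel1 (i : ZMod 4) : BoxRel q
      (q • (ι F i * ι F (i + 1)) - q⁻¹ • (ι F (i + 1) * ι F i))
      ((q - q⁻¹) • (1 : FreeAlgebra F (ZMod 4)))
  | rel2 (i : ZMod 4) : BoxRel q
      (ι F i ^ 3 * ι F (i + 2) +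
        ((q ^ 3 - (q⁻¹) ^ 3) / (q - q⁻¹)) • (ι F i * ι F (i + 2) * ι F i ^ 2))
      (((q ^ 3 - (q⁻¹) ^ 3) / (q - q⁻¹)) • (ι F i ^ 2 * ι F (i + 2) * ι F i) +
        ι F (i + 2) * ι F i ^ 3)

/-- The algebra `□_q`, presented by generators and relations. -/
abbrev BoxQ (q : F) : Type := RingQuot (BoxRel F q)

/-- The generators `x_i` of `□_q`. -/
def bx (q : F) (i : ZMod 4) : BoxQ F q :=
  RingQuot.mkAlgHom F (BoxRel F q) (ι F i)

/-- `f` acts semisimply: `V` is spanned by the eigenspaces of `f`. -/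
def SemisimpleOn {V : Type} [AddCommGroup V] [Module F V] (f : Module.End F V) : Prop :=
  (⨆ θ : F, Module.End.eigenspace f θ) = ⊤

/-- The set of (distinct) eigenvalues of `f`. -/
def EigSet {V : Type} [AddCommGroup V] [Module F V] (f : Module.End F V) : Set F :=
  {θ : F | Module.End.eigenspace f θ ≠ ⊥}

/-- The representation `π` of `A` on `V` is irreducible. -/
def IsIrrep {A V : Type} [Ring A] [Algebra F A] [AddCommGroup V] [Module F V]
    (π : A →ₐ[F] Module.End F V) : Prop :=
  Nontrivial V ∧ ∀ W : Submodule F V, (∀ a : A, ∀ v ∈ W, π a v ∈ W) → W = ⊥ ∨ W = ⊤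

/-- Isomorphism of representations of `A`. -/
def RepIso {A V W : Type} [Ring A] [Algebra F A] [AddCommGroup V] [Module F V]
    [AddCommGroup W] [Module F W]
    (π : A →ₐ[F] Module.End F V) (π' : A →ₐ[F] Module.End F W) : Prop :=
  ∃ σ : V ≃ₗ[F] W, ∀ (a : A) (v : V), σ (π a v) = π' a (σ v)

/-- The `□_q`-module given by `π` has type `1` and diameter `d`: each generator `x_i`
acts semisimply with set of distinct eigenvalues `{q^(d-2n) : 0 ≤ n ≤ d}`. -/
def Type1Diam (q : F) {V : Type} [AddCommGroup V] [Module F V]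
    (π : BoxQ F q →ₐ[F] Module.End F V) (d : ℕ) : Prop :=
  ∀ i : ZMod 4, SemisimpleOn F (π (bx F q i)) ∧
    EigSet F (π (bx F q i)) =
      {θ : F | ∃ n : ℕ, n ≤ d ∧ θ = q ^ ((d : ℤ) - 2 * (n : ℤ))}

/-- The Chevalley generators of `U_q(L(sl₂))`. -/
inductive LGen : Type
  | e0p | e0m | e1p | e1m | k0 | k0i | k1 | k1i

/-- The defining (Chevalley) relations of `U_q(L(sl₂))`. -/
inductive UqLRel (q : F) : FreeAlgebra F LGen → FreeAlgebra F LGen → Prop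
  | k0inv : UqLRel q (ι F LGen.k0 * ι F LGen.k0i) 1
  | k0inv' : UqLRel q (ι F LGen.k0i * ι F LGen.k0) 1
  | k1inv : UqLRel q (ι F LGen.k1 * ι F LGen.k1i) 1
  | k1inv' : UqLRel q (ι F LGen.k1i * ι F LGen.k1) 1
  | k01 : UqLRel q (ι F LGen.k0 * ι F LGen.k1) 1
  | k10 : UqLRel q (ι F LGen.k1 * ι F LGen.k0) 1
  | conj00p : UqLRel q (ι F LGen.k0 * ι F LGen.e0p * ι F LGen.k0i) ((q ^ 2) • ι F LGen.e0p)
  | conj00m : UqLRel q (ι F LGen.k0 * ι F LGen.e0m * ι F LGen.k0i) ((q ^ 2)⁻¹ • ι F LGen.e0m)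
  | conj11p : UqLRel q (ι F LGen.k1 * ι F LGen.e1p * ι F LGen.k1i) ((q ^ 2) • ι F LGen.e1p)
  | conj11m : UqLRel q (ι F LGen.k1 * ι F LGen.e1m * ι F LGen.k1i) ((q ^ 2)⁻¹ • ι F LGen.e1m)
  | conj01p : UqLRel q (ι F LGen.k0 * ι F LGen.e1p * ι F LGen.k0i) ((q ^ 2)⁻¹ • ι F LGen.e1p)
  | conj01m : UqLRel q (ι F LGen.k0 * ι F LGen.e1m * ι F LGen.k0i) ((q ^ 2) • ι F LGen.e1m)
  | conj10p : UqLRel q (ι F LGen.k1 * ι F LGen.e0p * ι F LGen.k1i) ((q ^ 2)⁻¹ • ι F LGen.e0p)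
  | conj10m : UqLRel q (ι F LGen.k1 * ι F LGen.e0m * ι F LGen.k1i) ((q ^ 2) • ι F LGen.e0m)
  | heis0 : UqLRel q (ι F LGen.e0p * ι F LGen.e0m - ι F LGen.e0m * ι F LGen.e0p)
      ((q - q⁻¹)⁻¹ • (ι F LGen.k0 - ι F LGen.k0i))
  | heis1 : UqLRel q (ι F LGen.e1p * ι F LGen.e1m - ι F LGen.e1m * ι F LGen.e1p)
      ((q - q⁻¹)⁻¹ • (ι F LGen.k1 - ι F LGen.k1i))
  | pm : UqLRel q (ι F LGen.e0p * ι F LGen.e1m) (ι F LGen.e1m * ι F LGen.e0p)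
  | mp : UqLRel q (ι F LGen.e0m * ι F LGen.e1p) (ι F LGen.e1p * ι F LGen.e0m)
  | serre (a b : LGen)
      (hab : (a = LGen.e0p ∧ b = LGen.e1p) ∨ (a = LGen.e1p ∧ b = LGen.e0p) ∨
             (a = LGen.e0m ∧ b = LGen.e1m) ∨ (a = LGen.e1m ∧ b = LGen.e0m)) :
      UqLRel q
        (ι F a ^ 3 * ι F b +
          ((q ^ 3 - (q⁻¹) ^ 3) / (q - q⁻¹)) • (ι F a * ι F b * ι F a ^ 2))
        (((q ^ 3 - (q⁻¹) ^ 3) / (q - q⁻¹)) • (ι F a ^ 2 * ι F b * ι F a) +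
          ι F b * ι F a ^ 3)

/-- The quantum loop algebra `U_q(L(sl₂))`. -/
abbrev UqL (q : F) : Type := RingQuot (UqLRel F q)

/-- The Chevalley generators, as elements of `U_q(L(sl₂))`. -/
def lg (q : F) (g : LGen) : UqL F q := RingQuot.mkAlgHom F (UqLRel F q) (ι F g)

/-- `ψ : □_q → U_q(L(sl₂))` is the embedding coming from the equitable presentation:
it sends `x₀ ↦ K₀ + q(q-q⁻¹)K₀e₀⁻`, `x₁ ↦ K₁ - (q-q⁻¹)e₁⁺`,
`x₂ ↦ K₁ + q(q-q⁻¹)K₁e₁⁻`, `x₃ ↦ K₀ - (q-q⁻¹)e₀⁺`. -/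
def IsPsi (q : F) (ψ : BoxQ F q →ₐ[F] UqL F q) : Prop :=
  ψ (bx F q 0) = lg F q LGen.k0 + (q * (q - q⁻¹)) • (lg F q LGen.k0 * lg F q LGen.e0m) ∧
  ψ (bx F q 1) = lg F q LGen.k1 - (q - q⁻¹) • lg F q LGen.e1p ∧
  ψ (bx F q 2) = lg F q LGen.k1 + (q * (q - q⁻¹)) • (lg F q LGen.k1 * lg F q LGen.e1m) ∧
  ψ (bx F q 3) = lg F q LGen.k0 - (q - q⁻¹) • lg F q LGen.e0p

/-- The `U_q(L(sl₂))`-module given by `Φ` has type `1` and diameter `d`: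
`K₀` acts semisimply with set of distinct eigenvalues `{q^(2i-d) : 0 ≤ i ≤ d}`. -/
def UqLType1 (q : F) {V : Type} [AddCommGroup V] [Module F V]
    (Φ : UqL F q →ₐ[F] Module.End F V) (d : ℕ) : Prop :=
  SemisimpleOn F (Φ (lg F q LGen.k0)) ∧
  EigSet F (Φ (lg F q LGen.k0)) =
    {θ : F | ∃ i : ℕ, i ≤ d ∧ θ = q ^ (2 * (i : ℤ) - (d : ℤ))}

/-- The lowest weight space `U₀`: the eigenspace of `K₀` with eigenvalue `q^(-d)`. -/
def U0 (q : F) {V : Type} [AddCommGroup V] [Module F V]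
    (Φ : UqL F q →ₐ[F] Module.End F V) (d : ℕ) : Submodule F V :=
  Module.End.eigenspace (Φ (lg F q LGen.k0)) (q ^ (-(d : ℤ)))

/-- `σ j` is the eigenvalue of `(e₁⁺)^j (e₀⁺)^j` on `U₀`. -/
def IsSigma (q : F) {V : Type} [AddCommGroup V] [Module F V]
    (Φ : UqL F q →ₐ[F] Module.End F V) (d : ℕ) (σ : ℕ → F) : Prop :=
  ∀ j : ℕ, ∀ v ∈ U0 F q Φ d,
    Φ (lg F q LGen.e1p ^ j * lg F q LGen.e0p ^ j) v = σ j • v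

/-- The `q`-integer `[n]_q`. -/
def qInt (q : F) (n : ℕ) : F := (q ^ (n : ℤ) - q ^ (-(n : ℤ))) / (q - q⁻¹)

/-- The `q`-factorial `[n]_q!`. -/
def qFact (q : F) (n : ℕ) : F := ∏ i ∈ Finset.range n, qInt F q (i + 1)

/-- The Drinfel'd polynomial `Σ_{i=0}^d (-1)^i σ_i z^i / ([i]_q!)²`. -/
def polyOf (q : F) (d : ℕ) (σ : ℕ → F) : Polynomial F :=
  ∑ i ∈ Finset.range (d + 1),
    Polynomial.C ((-1) ^ i * σ i / (qFact F q i) ^ 2) * Polynomial.X ^ i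

/-- `f` is the Drinfel'd polynomial of the type-1 irreducible `□_q`-module given by `π`:
`π` is the pullback along `ψ` of a `U_q(L(sl₂))`-module structure `Φ`, which is of type 1
and diameter `d`, has 1-dimensional lowest weight space `U₀`, and `f` is built from the
eigenvalues `σ_j` of `(e₁⁺)^j(e₀⁺)^j` on `U₀`. -/
def DrinOf (q : F) {V : Type} [AddCommGroup V] [Module F V]
    (π : BoxQ F q →ₐ[F] Module.End F V) (f : Polynomial F) : Prop :=
  ∃ ψ : BoxQ F q →ₐ[F] UqL F q, IsPsi F q ψ ∧
    ∃ Φ : UqL F q →ₐ[F] Module.End F V, Φ.comp ψ = π ∧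
      ∃ (d : ℕ) (σ : ℕ → F), UqLType1 F q Φ d ∧
        Module.finrank F ↥(U0 F q Φ d) = 1 ∧
        IsSigma F q Φ d σ ∧ f = polyOf F q d σ

/-! ### The four flags of a `□_q`-module -/

section

namespace BoxProof
open Polynomial Module.End
open scoped BigOperators

variable {F : Type} [Field F] {V : Type} [AddCommGroup V] [Module F V]

/-- The standing hypothesis on `q`: nonzero and not a root of unity. -/
structure QGood (q : F) : Prop where
  ne0 : q ≠ 0
  nr : ∀ n : ℕ, 0 < n → q ^ n ≠ 1

/-- The increasing eigenvalue sequence `q^(2n-d)`. -/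
def lam (q : F) (d n : ℕ) : F := q ^ (2 * (n : ℤ) - (d : ℤ))
/-- The decreasing eigenvalue sequence `q^(d-2n)`. -/
def th (q : F) (d n : ℕ) : F := q ^ ((d : ℤ) - 2 * (n : ℤ))

theorem QGood.zpow_inj {q : F} (h : QGood q) {a b : ℤ} (hab : q ^ a = q ^ b) : a = b := by
  have key : ∀ a b : ℤ, q ^ a = q ^ b → ¬ a < b := by
    intro a b hab hlt
    have h1 : q ^ (b - a) = 1 := by
      rw [zpow_sub₀ h.ne0, hab, div_self (zpow_ne_zero _ h.ne0)]
    obtain ⟨n, hn⟩ := Int.eq_ofNat_of_zero_le (show 0 ≤ b - a by omega)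
    rw [hn, zpow_natCast] at h1
    exact h.nr n (by omega) h1
  rcases lt_trichotomy a b with h1 | h1 | h1
  · exact absurd h1 (key a b hab)
  · exact h1
  · exact absurd h1 (key b a hab.symm)

theorem QGood.c0_ne {q : F} (h : QGood q) : q - q⁻¹ ≠ 0 := by
  intro h0
  have : q ^ (1:ℤ) = q ^ (-1:ℤ) := by
    rw [zpow_one, zpow_neg_one]; exact sub_eq_zero.mp h0
  have := h.zpow_inj this
  omega

theorem lam_inj {q : F} (h : QGood q) (d : ℕ) {m n : ℕ} (hmn : lam q d m = lam q d n) : m = n := by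
  have := h.zpow_inj hmn; omega
theorem th_inj {q : F} (h : QGood q) (d : ℕ) {m n : ℕ} (hmn : th q d m = th q d n) : m = n := by
  have := h.zpow_inj hmn; omega
theorem lam_ne {q : F} (h : QGood q) (d n : ℕ) : lam q d n ≠ 0 := zpow_ne_zero _ h.ne0
theorem th_ne {q : F} (h : QGood q) (d n : ℕ) : th q d n ≠ 0 := zpow_ne_zero _ h.ne0
theorem lam_inv (q : F) (d n : ℕ) : (lam q d n)⁻¹ = th q d n := by
  rw [lam, th, ← zpow_neg]; congr 1; ring
theorem th_inv (q : F) (d n : ℕ) : (th q d n)⁻¹ = lam q d n := by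
  rw [lam, th, ← zpow_neg]; congr 1; ring
theorem lam_mul_th {q : F} (h : QGood q) (d n : ℕ) : lam q d n * th q d n = 1 := by
  rw [← lam_inv]; exact mul_inv_cancel₀ (lam_ne h d n)
theorem th_mul_lam {q : F} (h : QGood q) (d n : ℕ) : th q d n * lam q d n = 1 := by
  rw [mul_comm]; exact lam_mul_th h d n
theorem lam_succ {q : F} (h : QGood q) (d n : ℕ) : lam q d (n + 1) = q ^ 2 * lam q d n := by
  rw [lam, lam, ← zpow_natCast, ← zpow_add₀ h.ne0]; congr 1; push_cast; ring
theorem th_succ {q : F} (h : QGood q) (d n : ℕ) : q ^ 2 * th q d (n + 1) = th q d n := by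
  rw [th, th, ← zpow_natCast, ← zpow_add₀ h.ne0]; congr 1; push_cast; ring
theorem lam_eq_th (q : F) (d : ℕ) {n : ℕ} (hn : n ≤ d) : lam q d n = th q d (d - n) := by
  rw [lam, th]; congr 1; push_cast [hn]; ring
theorem th_eq_lam (q : F) (d : ℕ) {n : ℕ} (hn : n ≤ d) : th q d n = lam q d (d - n) := by
  rw [lam, th]; congr 1; push_cast [hn]; ring

/-- The monic polynomial with roots `s 0, …, s (k-1)`. -/
def pr (s : ℕ → F) (k : ℕ) : F[X] := ∏ n ∈ Finset.range k, (X - C (s n))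

theorem pr_zero (s : ℕ → F) : pr s 0 = 1 := by simp [pr]
theorem pr_succ (s : ℕ → F) (k : ℕ) : pr s (k + 1) = pr s k * (X - C (s k)) := by
  simp [pr, Finset.prod_range_succ]
theorem pr_dvd (s : ℕ → F) {k l : ℕ} (h : k ≤ l) : pr s k ∣ pr s l :=
  Finset.prod_dvd_prod_of_subset _ _ _ (Finset.range_mono h)

theorem pr_mul (q : F) (d : ℕ) {k : ℕ} (hk : k ≤ d + 1) :
    pr (lam q d) k * pr (th q d) (d + 1 - k) = pr (lam q d) (d + 1) := by
  rw [pr, pr, pr, ← Finset.prod_range_mul_prod_Ico _ hk]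
  congr 1
  rw [Finset.prod_Ico_eq_prod_range, ← Finset.prod_range_reflect]
  refine Finset.prod_congr rfl fun n hn => ?_
  rw [Finset.mem_range] at hn
  rw [lam_eq_th q d (by omega)]
  congr 3; omega

theorem pr_coprime {s t : ℕ → F} {k l : ℕ} (h : ∀ m < k, ∀ n < l, s m ≠ t n) :
    IsCoprime (pr s k) (pr t l) := by
  refine IsCoprime.prod_left fun m hm => IsCoprime.prod_right fun n hn => ?_
  refine isCoprime_X_sub_C_of_isUnit_sub ?_
  rw [Finset.mem_range] at hm hn
  exact (sub_ne_zero.mpr (h m hm n hn)).isUnit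

/-- `ker ∏_{n<k} (f - s n)`. -/
def KA (s : ℕ → F) (f : Module.End F V) (k : ℕ) : Submodule F V :=
  LinearMap.ker (aeval f (pr s k))

theorem mem_KA {s : ℕ → F} {f : Module.End F V} {k : ℕ} {v : V} :
    v ∈ KA s f k ↔ aeval f (pr s k) v = 0 := Iff.rfl

theorem KA_zero (s : ℕ → F) (f : Module.End F V) : KA s f 0 = ⊥ := by
  ext v; simp [mem_KA, pr_zero]

theorem KA_mono (s : ℕ → F) (f : Module.End F V) {k l : ℕ} (h : k ≤ l) : KA s f k ≤ KA s f l := by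
  intro v hv
  obtain ⟨r, hr⟩ := pr_dvd s h
  rw [mem_KA] at *
  rw [hr, mul_comm, map_mul, Module.End.mul_apply, hv, map_zero]

theorem mem_KA_succ {s : ℕ → F} {f : Module.End F V} {k : ℕ} {v : V} :
    v ∈ KA s f (k + 1) ↔ f v - s k • v ∈ KA s f k := by
  rw [mem_KA, mem_KA, pr_succ, map_mul, Module.End.mul_apply]
  simp [Algebra.algebraMap_eq_smul_one]

theorem KA_inv {s : ℕ → F} {f : Module.End F V} {k : ℕ} {v : V} (hv : v ∈ KA s f k) :
    f v ∈ KA s f k := by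
  rw [mem_KA] at *
  have : aeval f (pr s k) * f = f * aeval f (pr s k) := by
    conv_lhs => rw [← aeval_X (R := F) f, aeval_X]
    have h1 : f = aeval f (X : F[X]) := (aeval_X f).symm
    calc aeval f (pr s k) * f = aeval f (pr s k * X) := by rw [map_mul, aeval_X]
      _ = aeval f (X * pr s k) := by rw [mul_comm]
      _ = _ := by rw [map_mul, aeval_X]
  rw [← Module.End.mul_apply, this, Module.End.mul_apply, hv, map_zero]

theorem eig_le_KA {s : ℕ → F} {f : Module.End F V} {n k : ℕ} (h : n < k) :
    eigenspace f (s n) ≤ KA s f k := by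
  refine le_trans ?_ (KA_mono s f (Nat.succ_le_of_lt h))
  intro v hv
  rw [mem_KA_succ, mem_eigenspace_iff.mp hv, sub_self]; exact zero_mem _

theorem KA_one (s : ℕ → F) (f : Module.End F V) : KA s f 1 = eigenspace f (s 0) := by
  ext v; rw [mem_KA_succ, KA_zero, Submodule.mem_bot, mem_eigenspace_iff, sub_eq_zero]

theorem KA_succ {s : ℕ → F} (f : Module.End F V) {k : ℕ} (h : ∀ n < k, s n ≠ s k) :
    KA s f (k + 1) = KA s f k ⊔ eigenspace f (s k) := by
  have hc : IsCoprime (pr s k) (X - C (s k)) := by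
    have := pr_coprime (s := s) (t := fun _ => s k) (k := k) (l := 1)
      (fun m hm n _ => h m hm)
    simpa [pr_succ, pr_zero] using this
  have := sup_ker_aeval_eq_ker_aeval_mul_of_coprime f hc
  rw [KA, pr_succ, ← this, KA]
  congr 1
  ext v
  simp [Algebra.algebraMap_eq_smul_one, sub_eq_zero]

/-- If `g` is triangular with diagonal `t` with respect to the flag of `f`, then that flag is contained
in the flag of `g`. -/
theorem KA_le_of_step {s t : ℕ → F} {f g : Module.End F V} {d : ℕ}
    (hs : ∀ k ≤ d, ∀ n < k, s n ≠ s k)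
    (h : ∀ k ≤ d, ∀ v ∈ eigenspace f (s k), g v - t k • v ∈ KA s f k) :
    ∀ k ≤ d + 1, KA s f k ≤ KA t g k := by
  intro k
  induction k with
  | zero => intro _; rw [KA_zero]; exact bot_le
  | succ k ih =>
    intro hk
    rw [KA_succ f (hs k (by omega))]
    refine sup_le ((ih (by omega)).trans (KA_mono t g (Nat.le_succ k))) fun v hv => ?_
    rw [mem_KA_succ]
    exact ih (by omega) (h k (by omega) v hv)

/-- Operators `x 0, …, x 3` satisfying the defining relations of `□_q` and annihilated by
`∏_{n ≤ d} (X - q^(2n-d))`. -/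
structure IsBox (q : F) (d : ℕ) (x : ZMod 4 → Module.End F V) : Prop where
  rel1 : ∀ i, q • (x i * x (i + 1)) - q⁻¹ • (x (i + 1) * x i) = (q - q⁻¹) • 1
  rel2 : ∀ i, x i ^ 3 * x (i + 2) +
        ((q ^ 3 - (q⁻¹) ^ 3) / (q - q⁻¹)) • (x i * x (i + 2) * x i ^ 2) =
      ((q ^ 3 - (q⁻¹) ^ 3) / (q - q⁻¹)) • (x i ^ 2 * x (i + 2) * x i) + x (i + 2) * x i ^ 3
  ann : ∀ i, aeval (x i) (pr (lam q d) (d + 1)) = 0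

variable {q : F} {d : ℕ} {x : ZMod 4 → Module.End F V}

theorem KA_top (hx : IsBox q d x) (i : ZMod 4) {k : ℕ} (hk : d + 1 ≤ k) :
    KA (lam q d) (x i) k = ⊤ := by
  rw [eq_top_iff]
  refine le_trans ?_ (KA_mono _ _ hk)
  rw [KA, hx.ann i, LinearMap.ker_zero]

theorem pr_th_top (q : F) (d : ℕ) : pr (th q d) (d + 1) = pr (lam q d) (d + 1) := by
  rw [← pr_mul q d (Nat.zero_le _), pr_zero, one_mul]; rfl

theorem KA_th_top (hx : IsBox q d x) (i : ZMod 4) {k : ℕ} (hk : d + 1 ≤ k) :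
    KA (th q d) (x i) k = ⊤ := by
  rw [eq_top_iff]
  refine le_trans ?_ (KA_mono _ _ hk)
  rw [KA, pr_th_top, hx.ann i, LinearMap.ker_zero]

theorem KA_isCompl (hq : QGood q) (hx : IsBox q d x) (i : ZMod 4) {k : ℕ} (hk : k ≤ d + 1) :
    IsCompl (KA (lam q d) (x i) k) (KA (th q d) (x i) (d + 1 - k)) := by
  have hc : IsCoprime (pr (lam q d) k) (pr (th q d) (d + 1 - k)) := by
    refine pr_coprime fun m hm n hn he => ?_
    have := hq.zpow_inj he; omega
  constructor
  · exact disjoint_ker_aeval_of_isCoprime (x i) hc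
  · rw [codisjoint_iff, KA, KA, sup_ker_aeval_eq_ker_aeval_mul_of_coprime _ hc, pr_mul q d hk,
      hx.ann i, LinearMap.ker_zero]

/-- `q^m` with `m` outside the admissible range is not an eigenvalue. -/
theorem eig_bot (hq : QGood q) (hx : IsBox q d x) (i : ZMod 4) {m : ℤ}
    (hm : ∀ n : ℕ, n ≤ d → m ≠ 2 * n - d) : eigenspace (x i) (q ^ m) = ⊥ := by
  have hc : IsCoprime (pr (lam q d) (d + 1)) (pr (fun _ => q ^ m) 1) := by
    refine pr_coprime fun k hk n hn he => ?_
    have := hq.zpow_inj he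
    exact hm k (by omega) this.symm
  have h1 := disjoint_ker_aeval_of_isCoprime (x i) hc
  rw [hx.ann i, LinearMap.ker_zero, disjoint_iff, top_inf_eq] at h1
  rw [← h1]; symm
  exact KA_one (fun _ => q ^ m) (x i)

/-- The relation between `x i` and `x (i+1)`, applied to an eigenvector of `x i` with eigenvalue `θ`:
`x (i+1) - θ⁻¹` sends it to an eigenvector with eigenvalue `q⁻² θ`. -/
theorem shift_ab (hq : QGood q) (hx : IsBox q d x) (i : ZMod 4) {θ μ : F} (hθ : θ * μ = 1) {v : V}
    (hv : v ∈ eigenspace (x i) θ) :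
    x (i + 1) v - μ • v ∈ eigenspace (x i) ((q ^ 2)⁻¹ * θ) := by
  have hr := congrArg (fun f : Module.End F V => f v) (hx.rel1 i)
  rw [mem_eigenspace_iff] at *
  simp only [LinearMap.sub_apply, LinearMap.smul_apply, Module.End.mul_apply, hv, map_smul,
    Module.End.one_apply] at hr
  have hq0 := hq.ne0
  have h2 : x i (x (i + 1) v) = q⁻¹ • (q⁻¹ • θ • x (i + 1) v + (q - q⁻¹) • v) := by
    rw [← hr]; rw [add_sub_cancel, smul_smul, inv_mul_cancel₀ hq0, one_smul]
  rw [map_sub, map_smul, hv, h2]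
  match_scalars
  · field_simp
  · field_simp
    linear_combination (1 - q^2) * hθ

theorem shift_ba (hq : QGood q) (hx : IsBox q d x) (i : ZMod 4) {θ μ : F} (hθ : θ * μ = 1) {v : V}
    (hv : v ∈ eigenspace (x (i + 1)) θ) :
    x i v - μ • v ∈ eigenspace (x (i + 1)) (q ^ 2 * θ) := by
  have hr := congrArg (fun f : Module.End F V => f v) (hx.rel1 i)
  rw [mem_eigenspace_iff] at *
  simp only [LinearMap.sub_apply, LinearMap.smul_apply, Module.End.mul_apply, hv, map_smul,
    Module.End.one_apply] at hr
  have hq0 := hq.ne0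
  have h2 : x (i + 1) (x i v) = q • (q • θ • x i v - (q - q⁻¹) • v) := by
    rw [← hr, sub_sub_cancel, smul_smul, mul_inv_cancel₀ hq0, one_smul]
  rw [map_sub, map_smul, hv, h2]
  match_scalars
  · ring
  · field_simp
    linear_combination (q^2-1) * hθ

theorem lam_injOn (hq : QGood q) (d : ℕ) : ∀ k ≤ d, ∀ n < k, lam q d n ≠ lam q d k :=
  fun _ _ _ hn he => hn.ne (lam_inj hq d he)
theorem th_injOn (hq : QGood q) (d : ℕ) : ∀ k ≤ d, ∀ n < k, th q d n ≠ th q d k :=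
  fun _ _ _ hn he => hn.ne (th_inj hq d he)

/-- The flag attached to the arrow `x i → x (i+1)`: `Fl i k` is the sum of the eigenspaces of `x i` for
the first `k` eigenvalues in increasing order of exponent. By `Fl_eq` it is also the sum of the
eigenspaces of `x (i+1)` for the first `k` eigenvalues in decreasing order of exponent. -/
def Fl (q : F) (d : ℕ) (x : ZMod 4 → Module.End F V) (i : ZMod 4) (k : ℕ) : Submodule F V :=
  KA (lam q d) (x i) k

theorem shift_ab_lam (hq : QGood q) (hx : IsBox q d x) (i : ZMod 4) (k : ℕ) {v : V}
    (hv : v ∈ eigenspace (x i) (lam q d k)) :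
    x (i + 1) v - th q d k • v ∈ KA (lam q d) (x i) k := by
  have h := shift_ab hq hx i (lam_mul_th hq d k) hv
  cases k with
  | zero =>
    have he : (q ^ 2)⁻¹ * lam q d 0 = q ^ (-(d:ℤ) - 2) := by
      rw [lam, ← zpow_natCast, ← zpow_neg, ← zpow_add₀ hq.ne0]; congr 1; push_cast; ring
    rw [he, eig_bot hq hx i (by intro n hn; omega), Submodule.mem_bot] at h
    rw [h]; exact zero_mem _
  | succ k =>
    rw [lam_succ hq, inv_mul_cancel_left₀ (pow_ne_zero 2 hq.ne0)] at h
    exact eig_le_KA (Nat.lt_succ_self k) h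

theorem shift_ba_th (hq : QGood q) (hx : IsBox q d x) (i : ZMod 4) (k : ℕ) {v : V}
    (hv : v ∈ eigenspace (x (i + 1)) (th q d k)) :
    x i v - lam q d k • v ∈ KA (th q d) (x (i + 1)) k := by
  have h := shift_ba hq hx i (th_mul_lam hq d k) hv
  cases k with
  | zero =>
    have he : q ^ 2 * th q d 0 = q ^ ((d:ℤ) + 2) := by
      rw [th, ← zpow_natCast, ← zpow_add₀ hq.ne0]; congr 1; push_cast; ring
    rw [he, eig_bot hq hx (i + 1) (by intro n hn; omega), Submodule.mem_bot] at h
    rw [h]; exact zero_mem _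
  | succ k =>
    rw [th_succ hq] at h
    exact eig_le_KA (Nat.lt_succ_self k) h

theorem Fl_eq (hq : QGood q) (hx : IsBox q d x) (i : ZMod 4) (k : ℕ) :
    Fl q d x i k = KA (th q d) (x (i + 1)) k := by
  rcases le_or_gt k (d + 1) with hk | hk
  · apply le_antisymm
    · exact KA_le_of_step (lam_injOn hq d) (fun k _ v hv => shift_ab_lam hq hx i k hv) k hk
    · exact KA_le_of_step (th_injOn hq d) (fun k _ v hv => shift_ba_th hq hx i k hv) k hk
  · rw [Fl, KA_top hx i hk.le, KA_th_top hx (i + 1) hk.le]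

theorem Fl_zero : ∀ i, Fl q d x i 0 = ⊥ := fun _ => KA_zero _ _
theorem Fl_mono (i : ZMod 4) {k l : ℕ} (h : k ≤ l) : Fl q d x i k ≤ Fl q d x i l := KA_mono _ _ h
theorem Fl_top (hx : IsBox q d x) (i : ZMod 4) {k : ℕ} (hk : d + 1 ≤ k) : Fl q d x i k = ⊤ :=
  KA_top hx i hk

theorem Fl_low0 (i : ZMod 4) {k : ℕ} {v : V} (hv : v ∈ Fl q d x i (k + 1)) :
    x i v - lam q d k • v ∈ Fl q d x i k := mem_KA_succ.mp hv
theorem Fl_low1 (hq : QGood q) (hx : IsBox q d x) (i : ZMod 4) {k : ℕ} {v : V}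
    (hv : v ∈ Fl q d x i (k + 1)) : x (i + 1) v - th q d k • v ∈ Fl q d x i k := by
  rw [Fl_eq hq hx] at *; exact mem_KA_succ.mp hv
theorem Fl_inv0 (i : ZMod 4) {k : ℕ} {v : V} (hv : v ∈ Fl q d x i k) :
    x i v ∈ Fl q d x i k := KA_inv hv
theorem Fl_inv1 (hq : QGood q) (hx : IsBox q d x) (i : ZMod 4) {k : ℕ} {v : V}
    (hv : v ∈ Fl q d x i k) : x (i + 1) v ∈ Fl q d x i k := by
  rw [Fl_eq hq hx] at *; exact KA_inv hv

theorem KA_raise {s : ℕ → F} {f g : Module.End F V} {d : ℕ} {t : ℕ → F}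
    (hs : ∀ k ≤ d, ∀ n < k, s n ≠ s k) (htop : ∀ k, d + 1 ≤ k → KA s f k = ⊤)
    (h : ∀ k ≤ d, ∀ v ∈ eigenspace f (s k), g v - t k • v ∈ eigenspace f (s (k + 1))) :
    ∀ k, ∀ v ∈ KA s f k, g v ∈ KA s f (k + 1) := by
  intro k
  induction k with
  | zero => intro v hv; rw [KA_zero, Submodule.mem_bot] at hv; rw [hv, map_zero]; exact zero_mem _
  | succ k ih =>
    intro v hv
    rcases le_or_gt k d with hk | hk
    · rw [KA_succ f (hs k hk)] at hv
      obtain ⟨a, ha, b, hb, rfl⟩ := Submodule.mem_sup.mp hv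
      rw [map_add]
      refine add_mem (KA_mono s f (Nat.le_succ _) (ih a ha)) ?_
      have h2 := h k hk b hb
      have h3 : g b = (g b - t k • b) + t k • b := by abel
      rw [h3]
      exact add_mem (eig_le_KA (by omega) h2) (Submodule.smul_mem _ _ (eig_le_KA (by omega) hb))
    · rw [htop _ (by omega)]; trivial

theorem Fl_raise3 (hq : QGood q) (hx : IsBox q d x) (i : ZMod 4) {k : ℕ} {v : V}
    (hv : v ∈ Fl q d x (i + 1) k) : x i v ∈ Fl q d x (i + 1) (k + 1) := by
  refine KA_raise (t := th q d) (lam_injOn hq d) (fun k hk => KA_top hx (i + 1) hk) ?_ k v hv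
  intro k _ v hv
  rw [lam_succ hq]
  exact shift_ba hq hx i (lam_mul_th hq d k) hv

theorem Fl_raise2 (hq : QGood q) (hx : IsBox q d x) (i : ZMod 4) {k : ℕ} {v : V}
    (hv : v ∈ Fl q d x i k) : x (i + 2) v ∈ Fl q d x i (k + 1) := by
  rw [Fl_eq hq hx] at *
  refine KA_raise (t := lam q d) (th_injOn hq d) (fun k hk => KA_th_top hx (i + 1) hk) ?_ k v hv
  intro k _ v hv
  have := shift_ab hq hx (i + 1) (th_mul_lam hq d k) hv
  rw [← th_succ hq, inv_mul_cancel_left₀ (pow_ne_zero 2 hq.ne0)] at this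
  rwa [show i + 2 = i + 1 + 1 by ring]

theorem Fl_raise3' (hq : QGood q) (hx : IsBox q d x) (i : ZMod 4) {k : ℕ} {v : V}
    (hv : v ∈ Fl q d x i k) : x (i + 3) v ∈ Fl q d x i (k + 1) := by
  have h4 : i + 3 + 1 = i := by rw [add_assoc]; simp; decide
  have := Fl_raise3 hq hx (i + 3) (k := k) (v := v) (by rw [h4]; exact hv)
  rwa [h4] at this

/-- Consecutive flags are opposite: both consist of sums of eigenspaces of `x (i+1)`, taken from the two
ends of the spectrum. -/
theorem Fl_isCompl (hq : QGood q) (hx : IsBox q d x) (i : ZMod 4) {k : ℕ} (hk : k ≤ d + 1) :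
    IsCompl (Fl q d x (i + 1) k) (Fl q d x i (d + 1 - k)) := by
  rw [Fl_eq hq hx i]; exact KA_isCompl hq hx (i + 1) hk

/-- The sum `∑_{j+k=s} Fl i j ∩ Fl (i+2) k`. -/
def WW (q : F) (d : ℕ) (x : ZMod 4 → Module.End F V) (i : ZMod 4) (s : ℕ) : Submodule F V :=
  ⨆ p : {p : ℕ × ℕ // p.1 + p.2 = s}, Fl q d x i p.1.1 ⊓ Fl q d x (i + 2) p.1.2

theorem mem_WW {i : ZMod 4} {s j k : ℕ} (h : j + k = s) {v : V} (h1 : v ∈ Fl q d x i j)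
    (h2 : v ∈ Fl q d x (i + 2) k) : v ∈ WW q d x i s :=
  le_iSup (fun p : {p : ℕ × ℕ // p.1 + p.2 = s} => Fl q d x i p.1.1 ⊓ Fl q d x (i + 2) p.1.2)
    ⟨(j, k), h⟩ ⟨h1, h2⟩

/-- The sums `WW` are submodules: on a summand, each generator minus a suitable scalar lowers the
index of one of the two flags by one and raises the index of the other by at most one. -/
theorem WW_inv (hq : QGood q) (hx : IsBox q d x) (i : ZMod 4) (s : ℕ) (m : ZMod 4) {v : V}
    (hv : v ∈ WW q d x i s) : x m v ∈ WW q d x i s := by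
  have hm : m = i ∨ m = i + 1 ∨ m = i + 2 ∨ m = i + 3 := by
    clear hv; clear hx; revert i m; decide
  have e2 : i + 2 + 2 = i := by rw [add_assoc]; simp; decide
  have e3 : i + 2 + 3 = i + 1 := by rw [add_assoc]; congr 1
  have e1 : i + 2 + 1 = i + 3 := by rw [add_assoc]; congr 1
  have key : ∀ w, (∃ c : F, x m w - c • w ∈ WW q d x i s) → w ∈ WW q d x i s →
      x m w ∈ WW q d x i s := by
    rintro w ⟨c, hc⟩ hw
    have := add_mem hc (Submodule.smul_mem _ c hw)
    rwa [sub_add_cancel] at this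
  refine Submodule.iSup_induction _ (motive := fun v => x m v ∈ WW q d x i s) hv ?_
    (by simp) (fun a b ha hb => by rw [map_add]; exact add_mem ha hb)
  rintro ⟨⟨j, k⟩, hjk⟩ w ⟨hw1, hw2⟩
  simp only at hjk hw1 hw2
  refine key w ?_ (mem_WW hjk hw1 hw2)
  have up : ∀ (i' : ZMod 4) (k : ℕ) (c : F), x m w ∈ Fl q d x i' (k + 1) → w ∈ Fl q d x i' k →
      x m w - c • w ∈ Fl q d x i' (k + 1) := fun i' k c h1 h2 =>
    sub_mem h1 (Submodule.smul_mem _ _ (Fl_mono i' (Nat.le_succ k) h2))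
  have z1 : ∀ i', w ∈ Fl q d x i' 0 → ∃ c : F, x m w - c • w ∈ WW q d x i s := by
    intro i' h
    rw [Fl_zero, Submodule.mem_bot] at h
    exact ⟨0, by rw [h]; simp⟩
  rcases hm with rfl | rfl | rfl | rfl
  · cases j with
    | zero => exact z1 _ hw1
    | succ j =>
      refine ⟨lam q d j, mem_WW (show j + (k + 1) = s by omega) (Fl_low0 _ hw1) (up _ _ _ ?_ hw2)⟩
      have := Fl_raise2 hq hx _ hw2
      rwa [e2] at this
  · cases j with
    | zero => exact z1 _ hw1
    | succ j =>
      refine ⟨th q d j, mem_WW (show j + (k + 1) = s by omega) (Fl_low1 hq hx _ hw1)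
        (up _ _ _ ?_ hw2)⟩
      have := Fl_raise3' hq hx _ hw2
      rwa [e3] at this
  · cases k with
    | zero => exact z1 _ hw2
    | succ k =>
      exact ⟨lam q d k, mem_WW (show j + 1 + k = s by omega)
        (up _ _ _ (Fl_raise2 hq hx _ hw1) hw1) (Fl_low0 _ hw2)⟩
  · cases k with
    | zero => exact z1 _ hw2
    | succ k =>
      refine ⟨th q d k, mem_WW (show j + 1 + k = s by omega)
        (up _ _ _ (Fl_raise3' hq hx _ hw1) hw1) ?_⟩
      have := Fl_low1 hq hx _ hw2
      rwa [e1] at this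

/-- Irreducibility of a family of operators. -/
def IsIrr (x : ZMod 4 → Module.End F V) : Prop :=
  Nontrivial V ∧ ∀ W : Submodule F V, (∀ i, ∀ v ∈ W, x i v ∈ W) → W = ⊥ ∨ W = ⊤

/-- On an irreducible module of full diameter the flags `Fl i` and `Fl (i+2)` are opposite, because
irreducibility forces `WW i (d+1) = ⊥` and `WW i (d+2) = ⊤`. -/
theorem Fl_opp (hq : QGood q) (hx : IsBox q d x) (hirr : IsIrr x) (i : ZMod 4)
    (h1 : Fl q d x i 1 ≠ ⊥) (h2 : Fl q d x i d ≠ ⊤) {j k : ℕ} (hjk : j + k = d + 1) :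
    IsCompl (Fl q d x i j) (Fl q d x (i + 2) k) := by
  have hb : WW q d x i (d + 1) = ⊥ := by
    rcases hirr.2 _ (fun m v hv => WW_inv hq hx i (d + 1) m hv) with h | h
    · exact h
    · exfalso; apply h2
      rw [eq_top_iff, ← h]
      refine iSup_le ?_
      rintro ⟨⟨a, b⟩, hab⟩
      simp only at hab ⊢
      rcases Nat.eq_zero_or_pos b with rfl | hb
      · rw [Fl_zero]; simp
      · exact inf_le_left.trans (Fl_mono i (by omega))
  have ht : WW q d x i (d + 2) = ⊤ := by
    rcases hirr.2 _ (fun m v hv => WW_inv hq hx i (d + 2) m hv) with h | h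
    · exfalso; apply h1
      rw [eq_bot_iff, ← h]
      intro v hv
      exact mem_WW (show 1 + (d + 1) = d + 2 by omega) hv
        (by rw [Fl_top hx _ (le_refl _)]; trivial)
    · exact h
  constructor
  · rw [disjoint_iff, eq_bot_iff, ← hb]
    intro v hv
    exact mem_WW hjk hv.1 hv.2
  · rw [codisjoint_iff, eq_top_iff, ← ht]
    refine iSup_le ?_
    rintro ⟨⟨a, b⟩, hab⟩
    simp only at hab ⊢
    rcases le_or_gt a j with h | h
    · exact inf_le_left.trans ((Fl_mono i h).trans le_sup_left)
    · exact inf_le_right.trans ((Fl_mono _ (by omega)).trans le_sup_right)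

end BoxProof

end

/-! ### Subspaces stable under the odd generators -/

section

namespace BoxProof
open Polynomial Module.End
open scoped BigOperators

variable {F : Type} [Field F] {V : Type} [AddCommGroup V] [Module F V]
variable {q : F} {d : ℕ} {x : ZMod 4 → Module.End F V}

theorem aeval_mem {f : Module.End F V} {N : Submodule F V} (hN : ∀ v ∈ N, f v ∈ N) (p : F[X]) {v : V}
    (hv : v ∈ N) : aeval f p v ∈ N := by
  induction p using Polynomial.induction_on' with
  | add p r hp hr => rw [map_add]; exact add_mem hp hr
  | monomial n a =>
    rw [aeval_monomial, Module.End.mul_apply, Module.algebraMap_end_apply]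
    refine Submodule.smul_mem _ _ ?_
    induction n with
    | zero => simpa using hv
    | succ n ih => rw [pow_succ', Module.End.mul_apply]; exact hN _ ih

/-- An `x i`-stable subspace is the sum of its intersections with two complementary sums of eigenspaces. -/
theorem split_inv (hq : QGood q) (hx : IsBox q d x) (i : ZMod 4) {k : ℕ} (hk : k ≤ d + 1)
    {N : Submodule F V} (hN : ∀ v ∈ N, x i v ∈ N) :
    N ≤ (N ⊓ KA (lam q d) (x i) k) ⊔ (N ⊓ KA (th q d) (x i) (d + 1 - k)) := by
  have hc : IsCoprime (pr (lam q d) k) (pr (th q d) (d + 1 - k)) := by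
    refine pr_coprime fun m hm n hn he => ?_
    have := hq.zpow_inj he; omega
  obtain ⟨a, b, hab⟩ := hc
  intro v hv
  have h0 : aeval (x i) (pr (lam q d) k * pr (th q d) (d + 1 - k)) = 0 := by
    rw [pr_mul q d hk, hx.ann i]
  have h1 : v = aeval (x i) (b * pr (th q d) (d + 1 - k)) v
      + aeval (x i) (a * pr (lam q d) k) v := by
    rw [← LinearMap.add_apply, ← map_add, add_comm, hab]; simp
  rw [h1]
  refine Submodule.add_mem_sup ⟨aeval_mem hN _ hv, ?_⟩ ⟨aeval_mem hN _ hv, ?_⟩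
  · rw [SetLike.mem_coe, mem_KA, ← Module.End.mul_apply, ← map_mul,
      show ∀ p r s : F[X], p * (r * s) = r * (p * s) from fun p r s => by ring, map_mul, h0]; simp
  · rw [SetLike.mem_coe, mem_KA, ← Module.End.mul_apply, ← map_mul,
      show ∀ p r s : F[X], p * (r * s) = r * (s * p) from fun p r s => by ring, map_mul, h0]; simp

theorem finrank_split [FiniteDimensional F V] {N A B : Submodule F V} (hd : Disjoint A B)
    (hN : N ≤ (N ⊓ A) ⊔ (N ⊓ B)) :
    Module.finrank F ↥(N ⊓ A) + Module.finrank F ↥(N ⊓ B) = Module.finrank F ↥N := by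
  have h1 := Submodule.finrank_sup_add_finrank_inf_eq (N ⊓ A) (N ⊓ B)
  have h2 : (N ⊓ A) ⊓ (N ⊓ B) = ⊥ :=
    (disjoint_iff.mp (hd.mono inf_le_right inf_le_right))
  have h3 : (N ⊓ A) ⊔ (N ⊓ B) = N := le_antisymm (sup_le inf_le_left inf_le_left) hN
  rw [h2, h3, finrank_bot] at h1
  omega

theorem finrank_le_of_disj [FiniteDimensional F V] {N A B : Submodule F V} (hd : Disjoint A B) :
    Module.finrank F ↥(N ⊓ A) + Module.finrank F ↥(N ⊓ B) ≤ Module.finrank F ↥N := by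
  have h1 := Submodule.finrank_sup_add_finrank_inf_eq (N ⊓ A) (N ⊓ B)
  have h2 : (N ⊓ A) ⊓ (N ⊓ B) = ⊥ :=
    (disjoint_iff.mp (hd.mono inf_le_right inf_le_right))
  have h3 : (N ⊓ A) ⊔ (N ⊓ B) ≤ N := (sup_le inf_le_left inf_le_left)
  have h4 := Submodule.finrank_mono h3
  rw [h2, finrank_bot] at h1
  omega

theorem sup_of_finrank [FiniteDimensional F V] {N A B : Submodule F V} (hd : Disjoint A B)
    (h : Module.finrank F ↥N ≤ Module.finrank F ↥(N ⊓ A) + Module.finrank F ↥(N ⊓ B)) :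
    N ≤ (N ⊓ A) ⊔ (N ⊓ B) := by
  have h1 := Submodule.finrank_sup_add_finrank_inf_eq (N ⊓ A) (N ⊓ B)
  have h2 : (N ⊓ A) ⊓ (N ⊓ B) = ⊥ :=
    (disjoint_iff.mp (hd.mono inf_le_right inf_le_right))
  have h3 : (N ⊓ A) ⊔ (N ⊓ B) ≤ N := (sup_le inf_le_left inf_le_left)
  rw [h2, finrank_bot] at h1
  exact (Submodule.eq_of_le_of_finrank_le h3 (by omega)).ge

theorem Fl_prev (hq : QGood q) (hx : IsBox q d x) (i : ZMod 4) (k : ℕ) :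
    Fl q d x (i + 3) k = KA (th q d) (x i) k := by
  have h4 : i + 3 + 1 = i := by rw [add_assoc]; simp; decide
  rw [Fl_eq hq hx, h4]

/-- A subspace stable under `x (i+1)` and `x (i+3)` is stable under `x i`: a count of dimensions of
the intersections with the four flags. -/
theorem dim_lemma [FiniteDimensional F V] (hq : QGood q) (hx : IsBox q d x) (i : ZMod 4)
    {N : Submodule F V} (h1 : ∀ v ∈ N, x (i + 1) v ∈ N) (h3 : ∀ v ∈ N, x (i + 3) v ∈ N) :
    ∀ v ∈ N, x i v ∈ N := by
  have e31 : i + 2 + 1 = i + 3 := by rw [add_assoc]; congr 1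
  have e2 : i + 1 + 1 = i + 2 := by rw [add_assoc]; congr 1
  have main : ∀ k ≤ d + 1, N ≤ (N ⊓ Fl q d x i k) ⊔ (N ⊓ Fl q d x (i + 3) (d + 1 - k)) := by
    intro k hk
    have hk' : d + 1 - k ≤ d + 1 := by omega
    have hkk : d + 1 - (d + 1 - k) = k := by omega
    have a1 : Module.finrank F ↥(N ⊓ Fl q d x (i + 1) (d + 1 - k)) +
        Module.finrank F ↥(N ⊓ Fl q d x i k) = Module.finrank F ↥N := by
      have := finrank_split (KA_isCompl hq hx (i + 1) hk').disjoint (split_inv hq hx (i + 1) hk' h1)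
      rwa [← Fl_eq hq hx i, hkk] at this
    have a2 : Module.finrank F ↥(N ⊓ Fl q d x (i + 3) (d + 1 - k)) +
        Module.finrank F ↥(N ⊓ Fl q d x (i + 2) k) = Module.finrank F ↥N := by
      have := finrank_split (KA_isCompl hq hx (i + 3) hk').disjoint (split_inv hq hx (i + 3) hk' h3)
      rwa [← e31, ← Fl_eq hq hx (i + 2), hkk, e31] at this
    have a4 : Module.finrank F ↥(N ⊓ Fl q d x (i + 2) k) +
        Module.finrank F ↥(N ⊓ Fl q d x (i + 1) (d + 1 - k)) ≤ Module.finrank F ↥N := by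
      have := finrank_le_of_disj (N := N) (KA_isCompl hq hx (i + 2) hk).disjoint
      rwa [← e2, ← Fl_eq hq hx (i + 1), e2] at this
    have hdis := (KA_isCompl hq hx i hk).disjoint
    rw [← Fl_prev hq hx i] at hdis
    refine sup_of_finrank hdis ?_
    omega
  have claim : ∀ k ≤ d + 1, ∀ v ∈ N, v ∈ Fl q d x i k → x i v ∈ N := by
    intro k
    induction k with
    | zero => intro _ v _ hv; rw [Fl_zero, Submodule.mem_bot] at hv; rw [hv, map_zero]; exact zero_mem _
    | succ k ih =>
      intro hk v hv hvk
      obtain ⟨a, ha, b, hb, rfl⟩ := Submodule.mem_sup.mp (main k (by omega) hv)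
      rw [map_add]
      refine add_mem (ih (by omega) a ha.1 ha.2) ?_
      have hbk : b ∈ Fl q d x i (k + 1) := by
        have := sub_mem hvk (Fl_mono i (Nat.le_succ k) ha.2)
        rwa [add_sub_cancel_left] at this
      have hb2 := hb.2
      rw [SetLike.mem_coe, Fl_prev hq hx] at hb2
      have hz : x i b - lam q d k • b = 0 := by
        have := (KA_isCompl hq hx i (show k ≤ d + 1 by omega)).disjoint
        refine Submodule.disjoint_def.mp this _ (Fl_low0 i hbk) ?_
        exact sub_mem (KA_inv hb2) (Submodule.smul_mem _ _ hb2)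
      rw [sub_eq_zero.mp hz]
      exact Submodule.smul_mem _ _ hb.1
  intro v hv
  exact claim (d + 1) le_rfl v hv (by rw [Fl_top hx i le_rfl]; trivial)

/-- A subspace stable under `x 1` and `x 3` is stable under all four operators. -/
theorem inv_of_odd [FiniteDimensional F V] (hq : QGood q) (hx : IsBox q d x)
    {N : Submodule F V} (h1 : ∀ v ∈ N, x 1 v ∈ N) (h3 : ∀ v ∈ N, x 3 v ∈ N) (i : ZMod 4) :
    ∀ v ∈ N, x i v ∈ N := by
  have h0 := dim_lemma hq hx 0 (N := N) (by simpa using h1) (by simpa using h3)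
  have h2 := dim_lemma hq hx 2 (N := N) (by exact h3) (by exact h1)
  have : ∀ i : ZMod 4, i = 0 ∨ i = 1 ∨ i = 2 ∨ i = 3 := by decide
  rcases this i with rfl | rfl | rfl | rfl
  exacts [h0, h1, h2, h3]

end BoxProof

end

/-! ### The `q`-Serre relation and `q`-commuting components -/

section

namespace BoxProof
open Polynomial Module.End
open scoped BigOperators

variable {F : Type} [Field F] {R : Type} [Ring R] [Algebra F R] {q : F}

/-- The cubic `q`-Serre relation of `a` on `c`. -/
def Serre (q : F) (a c : R) : Prop :=
  a ^ 3 * c + ((q ^ 3 - (q⁻¹) ^ 3) / (q - q⁻¹)) • (a * c * a ^ 2) =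
    ((q ^ 3 - (q⁻¹) ^ 3) / (q - q⁻¹)) • (a ^ 2 * c * a) + c * a ^ 3

/-- Elements that `q^(2δ)`-commute with `a`. -/
def GG (q : F) (a : R) (δ : ℤ) : Submodule F R where
  carrier := {Y | a * Y = q ^ (2 * δ) • (Y * a)}
  add_mem' := by
    intro Y Z hY hZ
    simp only [Set.mem_ofPred_eq] at *
    rw [mul_add, hY, hZ, add_mul, smul_add]
  zero_mem' := by simp
  smul_mem' := by
    intro t Y hY
    simp only [Set.mem_ofPred_eq] at *
    rw [mul_smul_comm, hY, smul_mul_assoc, smul_comm]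

theorem mem_GG {a Y : R} {δ : ℤ} : Y ∈ GG q a δ ↔ a * Y = q ^ (2 * δ) • (Y * a) := Iff.rfl

/-- The span of the elements `q^(2δ)`-commuting with `a` for some `|δ| ≤ j`. -/
def Gr (q : F) (a : R) (j : ℕ) : Submodule F R :=
  ⨆ δ : {δ : ℤ // -(j:ℤ) ≤ δ ∧ δ ≤ j}, GG q a δ

theorem GG_le_Gr (a : R) {j : ℕ} {δ : ℤ} (h : -(j:ℤ) ≤ δ ∧ δ ≤ j) : GG q a δ ≤ Gr q a j :=
  le_iSup (fun δ : {δ : ℤ // -(j:ℤ) ≤ δ ∧ δ ≤ j} => GG q a δ) ⟨δ, h⟩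

theorem GG_mul (hq : QGood q) {a Y Z : R} {δ ε : ℤ} (hY : Y ∈ GG q a δ) (hZ : Z ∈ GG q a ε) :
    Y * Z ∈ GG q a (δ + ε) := by
  rw [mem_GG] at *
  rw [← mul_assoc, hY, smul_mul_assoc, mul_assoc, hZ, mul_smul_comm, smul_smul,
    ← zpow_add₀ hq.ne0, mul_assoc, mul_add]

theorem Gr_mul (hq : QGood q) {a Y Z : R} {j k : ℕ} (hY : Y ∈ Gr q a j) (hZ : Z ∈ Gr q a k) :
    Y * Z ∈ Gr q a (j + k) := by
  refine Submodule.iSup_induction _ (motive := fun Y => Y * Z ∈ Gr q a (j + k)) hY ?_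
    (by simp) (fun a b ha hb => by rw [add_mul]; exact add_mem ha hb)
  rintro ⟨δ, hδ⟩ Y hY
  refine Submodule.iSup_induction _ (motive := fun Z => Y * Z ∈ Gr q a (j + k)) hZ ?_
    (by simp) (fun a b ha hb => by rw [mul_add]; exact add_mem ha hb)
  rintro ⟨ε, hε⟩ Z hZ
  exact GG_le_Gr a (by push_cast; omega) (GG_mul hq hY hZ)

theorem q3 (hq : QGood q) : (q ^ 3 - (q⁻¹) ^ 3) / (q - q⁻¹) = q ^ 2 + 1 + (q ^ 2)⁻¹ := by
  rw [div_eq_iff hq.c0_ne]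
  have := hq.ne0
  field_simp; ring

/-- For invertible `a` the Serre relation says that conjugation by `a` acts on `c` annihilated by
`(t - q²)(t - 1)(t - q⁻²)`, so `c` splits into components that `q^(2δ)`-commute with `a`, `|δ| ≤ 1`. -/
theorem serre_grade (hq : QGood q) {a c : R} (ha : IsUnit a) (hs : Serre q a c) :
    c ∈ Gr q a 1 := by
  obtain ⟨u, rfl⟩ := ha
  let Ad : Module.End F R := LinearMap.mulLeft F (u : R) ∘ₗ LinearMap.mulRight F (↑u⁻¹ : R)
  have hAd : ∀ Y, Ad Y = u * (Y * ↑u⁻¹) := fun Y => rfl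
  have hq0 := hq.ne0
  rw [Serre, q3 hq] at hs
  have hc : c ∈ KA (lam q 2) Ad 3 := by
    rw [mem_KA_succ, mem_KA_succ, mem_KA_succ, KA_zero, Submodule.mem_bot]
    have l0 : lam q 2 0 = (q ^ 2)⁻¹ := by simp [lam]
    have l1 : lam q 2 1 = 1 := by simp [lam]
    have l2 : lam q 2 2 = q ^ 2 := by
      rw [lam, ← zpow_natCast]; norm_num
    rw [l0, l1, l2]
    simp only [hAd, one_smul]
    have e3 : (u:R) ^ 3 * c = (q ^ 2 + 1 + (q ^ 2)⁻¹) • (↑u ^ 2 * c * ↑u) + c * ↑u ^ 3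
        - (q ^ 2 + 1 + (q ^ 2)⁻¹) • (↑u * c * ↑u ^ 2) := by
      rw [← hs]; abel
    have e4 := congrArg (fun Y => Y * (↑u⁻¹ * (↑u⁻¹ * ↑u⁻¹) : R)) e3
    simp only [pow_succ, pow_zero, one_mul, add_mul, sub_mul, smul_mul_assoc, mul_assoc,
      Units.mul_inv_cancel_left, Units.mul_inv] at e4
    simp only [sub_mul, mul_sub, smul_mul_assoc, mul_smul_comm, smul_sub, mul_assoc]
    rw [e4]
    simp only [mul_one, smul_smul]
    match_scalars <;> field_simp <;> ring
  rw [KA_succ _ (lam_injOn hq 2 2 (by norm_num)), KA_succ _ (lam_injOn hq 2 1 (by norm_num)),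
    KA_one] at hc
  have hle : ∀ n : ℕ, n ≤ 2 → eigenspace Ad (lam q 2 n) ≤ Gr q (u:R) 1 := by
    intro n hn Y hY
    refine GG_le_Gr (u:R) (δ := (n:ℤ) - 1) (by push_cast; omega) ?_
    rw [mem_eigenspace_iff, hAd] at hY
    rw [mem_GG]
    have := congrArg (fun Y => Y * (u:R)) hY
    simp only [mul_assoc, Units.inv_mul, mul_one, smul_mul_assoc] at this
    rw [this, lam]; congr 2; push_cast; ring
  exact (sup_le (sup_le (hle 0 (by norm_num)) (hle 1 (by norm_num))) (hle 2 le_rfl)) hc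

theorem pow_grade (hq : QGood q) {a c : R} (h : c ∈ Gr q a 1) (j : ℕ) : c ^ j ∈ Gr q a j := by
  induction j with
  | zero =>
    refine GG_le_Gr a (δ := 0) (by simp) ?_
    simp [mem_GG]
  | succ j ih => rw [pow_succ]; exact Gr_mul hq ih h

theorem GG_pow (hq : QGood q) {a Y : R} {δ : ℤ} (hY : Y ∈ GG q a δ) (s : ℕ) :
    a ^ s * Y = q ^ (2 * δ * s) • (Y * a ^ s) := by
  induction s with
  | zero => simp
  | succ s ih =>
    rw [pow_succ', mul_assoc, ih, mul_smul_comm, ← mul_assoc, mem_GG.mp hY, smul_mul_assoc,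
      smul_smul, ← zpow_add₀ hq.ne0, mul_assoc Y]
    congr 1; congr 1; push_cast; ring

/-- Interpolation coefficients valid for all weights `|δ| ≤ j` at once. -/
theorem interp (hq : QGood q) (j : ℕ) (S : Finset ℕ) (hS : 2 * j + 1 ≤ S.card) (s : ℕ) :
    ∃ μ : ℕ → F, ∀ δ : ℤ, -(j:ℤ) ≤ δ → δ ≤ j →
      ∑ t ∈ S, μ t * q ^ (2 * δ * t) = q ^ (2 * δ * s) := by
  have hinj : Set.InjOn (fun n : ℕ => q ^ (2 * (n:ℤ))) S := by
    intro m _ n _ h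
    have := hq.zpow_inj h; omega
  refine ⟨fun t => (Lagrange.basis S (fun n : ℕ => q ^ (2 * (n:ℤ))) t).eval (q ^ (2 * (s:ℤ))) *
    q ^ (2 * (j:ℤ) * t) * q ^ (-(2 * (j:ℤ) * s)), fun δ h1 h2 => ?_⟩
  obtain ⟨e, he⟩ := Int.eq_ofNat_of_zero_le (show 0 ≤ δ + j by omega)
  have hdeg : (X ^ e : F[X]).degree < S.card := by
    rw [degree_X_pow]; exact_mod_cast (by omega : e < S.card)
  have h3 := Lagrange.eq_interpolate hinj hdeg
  have h4 := congrArg (eval (q ^ (2 * (s:ℤ)))) h3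
  rw [Lagrange.interpolate_apply, eval_finsetSum] at h4
  simp only [eval_mul, eval_C, eval_pow, eval_X] at h4
  have hδ : δ = e - j := by omega
  have h5 : q ^ (2 * δ * s) = (q ^ (2 * (s:ℤ))) ^ e * q ^ (-(2 * (j:ℤ) * s)) := by
    rw [← zpow_natCast, ← zpow_mul, ← zpow_add₀ hq.ne0, hδ]; congr 1; ring
  rw [h5, h4, Finset.sum_mul]
  refine Finset.sum_congr rfl fun t _ => ?_
  have h6 : q ^ (2 * (j:ℤ) * t) * q ^ (2 * δ * t) = (q ^ (2 * (t:ℤ))) ^ e := by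
    rw [← zpow_natCast, ← zpow_mul, ← zpow_add₀ hq.ne0, hδ]; congr 1; ring
  rw [← h6]; ring

theorem interp_mul (hq : QGood q) {a Y : R} {j : ℕ} (hY : Y ∈ Gr q a j) {S : Finset ℕ} {m : ℕ}
    {μ : ℕ → F} {s : ℕ} (hs : s ≤ m) (hSm : ∀ t ∈ S, t ≤ m)
    (hμ : ∀ δ : ℤ, -(j:ℤ) ≤ δ → δ ≤ j → ∑ t ∈ S, μ t * q ^ (2 * δ * t) = q ^ (2 * δ * s)) :
    a ^ s * Y * a ^ (m - s) = ∑ t ∈ S, μ t • (a ^ t * Y * a ^ (m - t)) := by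
  refine Submodule.iSup_induction _ (motive := fun Y => a ^ s * Y * a ^ (m - s) =
    ∑ t ∈ S, μ t • (a ^ t * Y * a ^ (m - t))) hY ?_ (by simp) ?_
  · rintro ⟨δ, hδ⟩ Y hY
    have h1 : ∀ t ≤ m, a ^ t * Y * a ^ (m - t) = q ^ (2 * δ * t) • (Y * a ^ m) := by
      intro t ht
      rw [GG_pow hq hY, smul_mul_assoc, mul_assoc Y, ← pow_add, Nat.add_sub_cancel' ht]
    rw [h1 s hs, ← hμ δ hδ.1 hδ.2, Finset.sum_smul]
    refine Finset.sum_congr rfl fun t ht => ?_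
    rw [h1 t (hSm t ht), smul_smul]
  · intro A B hA hB
    simp only [mul_add, add_mul, smul_add, Finset.sum_add_distrib] at *
    rw [hA, hB]

/-- If `Y` has `a`-weights of size at most `j`, then `a^s Y a^h` is a combination of products
`a^s' Y a^h'` with `s' < j` or `h' ≤ j`: interpolate at the `2j+1` exponents `0, …, j-1` and
`s+h-j, …, s+h`. -/
theorem swap_span (hq : QGood q) {a Y : R} {j : ℕ} (hY : Y ∈ Gr q a j) (s h : ℕ) :
    a ^ s * Y * a ^ h ∈ Submodule.span F
      {Z | ∃ s' h' : ℕ, (s' < j ∨ h' ≤ j) ∧ Z = a ^ s' * Y * a ^ h'} := by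
  rcases lt_or_ge (s + h) (2 * j) with hlt | hge
  · exact Submodule.subset_span ⟨s, h, by omega, rfl⟩
  · have hcard : 2 * j + 1 ≤ (Finset.range j ∪ Finset.Icc (s + h - j) (s + h)).card := by
      rw [Finset.card_union_of_disjoint, Finset.card_range, Nat.card_Icc]
      · omega
      · rw [Finset.disjoint_left]
        intro t h1 h2
        rw [Finset.mem_range] at h1; rw [Finset.mem_Icc] at h2
        omega
    obtain ⟨μ, hμ⟩ := interp hq j _ hcard s
    have h1 := interp_mul hq hY (m := s + h) (by omega) (by
      intro t ht
      rw [Finset.mem_union, Finset.mem_range, Finset.mem_Icc] at ht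
      omega) hμ
    rw [Nat.add_sub_cancel_left] at h1
    rw [h1]
    refine Submodule.sum_mem _ fun t ht => Submodule.smul_mem _ _ (Submodule.subset_span ?_)
    refine ⟨t, s + h - t, ?_, rfl⟩
    rw [Finset.mem_union, Finset.mem_range, Finset.mem_Icc] at ht
    omega

/-- The idempotent polynomial of the eigenvalue `q^d`. -/
def ePol (q : F) (d : ℕ) : F[X] :=
  C (∏ k ∈ Finset.range d, (th q d 0 - th q d (k + 1)))⁻¹ *
    pr (fun k => th q d (k + 1)) d

theorem pr_eval (s : ℕ → F) (k : ℕ) (t : F) : (pr s k).eval t = ∏ n ∈ Finset.range k, (t - s n) := by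
  simp [pr, eval_prod]

theorem kap_ne (hq : QGood q) (d m : ℕ) :
    ∏ k ∈ Finset.range m, (th q d 0 - th q d (k + 1)) ≠ 0 :=
  Finset.prod_ne_zero_iff.mpr fun k _ => sub_ne_zero.mpr fun h => by have := th_inj hq d h; omega

theorem ePol_eval_zero (hq : QGood q) (d : ℕ) : (ePol q d).eval (th q d 0) = 1 := by
  rw [ePol, eval_mul, eval_C, pr_eval]; exact inv_mul_cancel₀ (kap_ne hq d d)

theorem pr_eval_zero {s : ℕ → F} {k n : ℕ} (h : n < k) : (pr s k).eval (s n) = 0 := by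
  rw [pr_eval]; exact Finset.prod_eq_zero (Finset.mem_range.mpr h) (sub_self _)

theorem ePol_eval_succ (d : ℕ) {n : ℕ} (hn : n < d) : (ePol q d).eval (th q d (n + 1)) = 0 := by
  rw [ePol, eval_mul, pr_eval_zero (s := fun k => th q d (k + 1)) hn, mul_zero]

theorem aeval_eig {W : Type} [AddCommGroup W] [Module F W] {C : Module.End F W} {μ : F} {y : W}
    (h : y ∈ eigenspace C μ) (p : F[X]) : aeval C p y = p.eval μ • y := by
  by_cases hy : y = 0
  · simp [hy]
  · exact Module.End.aeval_apply_of_hasEigenvector ⟨h, hy⟩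

theorem monic_pr (s : ℕ → F) (k : ℕ) : (pr s k).Monic := monic_prod_of_monic _ _ fun _ _ => monic_X_sub_C _
theorem natDegree_pr (s : ℕ → F) (k : ℕ) : (pr s k).natDegree = k := by
  rw [pr, natDegree_prod_of_monic _ _ fun _ _ => monic_X_sub_C _]; simp

/-- Let `y` be a sum of `D`-eigenvectors with eigenvalues `q^(d+2δ)`, `|δ| ≤ h`. Since no eigenvalue
beyond `q^d` occurs, `∏_{1≤k≤h} (D - q^(d-2k))` sends `y` to a multiple of its component for `q^d`; hence
every `D^k y` lies in the span of that component and of the `D^k' y` with `k' < h`. -/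
theorem end_core (hq : QGood q) {W : Type} [AddCommGroup W] [Module F W] {D : Module.End F W} {d : ℕ}
    (hP : aeval D (pr (lam q d) (d + 1)) = 0) {h : ℕ} {y : W}
    (hy : y ∈ ⨆ δ : {δ : ℤ // -(h:ℤ) ≤ δ ∧ δ ≤ h}, eigenspace D (q ^ ((d:ℤ) + 2 * δ.1))) (k : ℕ) :
    (D ^ k) y ∈ Submodule.span F
      ({z | ∃ k' < h, z = (D ^ k') y} ∪ {aeval D (ePol q d) y}) := by
  set M := pr (fun k => th q d (k + 1)) h with hM
  have key : aeval D M y = M.eval (th q d 0) • aeval D (ePol q d) y := by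
    refine Submodule.iSup_induction _ (motive := fun y =>
      aeval D M y = M.eval (th q d 0) • aeval D (ePol q d) y) hy ?_ (by simp) ?_
    · rintro ⟨δ, hδ⟩ Y hY
      simp only at hY
      rw [aeval_eig hY, aeval_eig hY]
      by_cases hr : 0 < δ ∨ δ < -(d:ℤ)
      · have hz : (pr (lam q d) (d + 1)).eval (q ^ ((d:ℤ) + 2 * δ)) • Y = 0 := by
          rw [← aeval_eig hY, hP]; rfl
        have hne : (pr (lam q d) (d + 1)).eval (q ^ ((d:ℤ) + 2 * δ)) ≠ 0 := by
          rw [pr_eval]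
          refine Finset.prod_ne_zero_iff.mpr fun n hn => sub_ne_zero.mpr fun he => ?_
          have := hq.zpow_inj he
          rw [Finset.mem_range] at hn
          omega
        rw [(smul_eq_zero.mp hz).resolve_left hne]; simp
      · obtain ⟨n, hn⟩ := Int.eq_ofNat_of_zero_le (show 0 ≤ -δ by omega)
        have hth : q ^ ((d:ℤ) + 2 * δ) = th q d n := by rw [th]; congr 1; omega
        rw [hth]
        cases n with
        | zero => rw [ePol_eval_zero hq, one_smul]
        | succ n =>
          rw [ePol_eval_succ d (by omega), hM,
            pr_eval_zero (s := fun k => th q d (k + 1)) (by omega)]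
          simp
    · intro A B hA hB
      rw [map_add, map_add, hA, hB, smul_add]
  have heig : D (aeval D (ePol q d) y) = th q d 0 • aeval D (ePol q d) y := by
    have h1 : (X - C (th q d 0)) * ePol q d = C (∏ k ∈ Finset.range d, (th q d 0 - th q d (k + 1)))⁻¹
        * pr (lam q d) (d + 1) := by
      have : pr (lam q d) (d + 1) = (X - C (th q d 0)) * pr (fun k => th q d (k + 1)) d := by
        rw [← pr_th_top, pr, Finset.prod_range_succ', mul_comm, pr]
      rw [this, ePol]; ring
    have h2 := congrArg (fun p => aeval D p y) h1
    simp only [map_mul, hP, mul_zero, LinearMap.zero_apply, Module.End.mul_apply] at h2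
    simpa [Algebra.algebraMap_eq_smul_one, sub_eq_zero] using h2
  have hdiv := modByMonic_add_div (X ^ k : F[X]) (q := M)
  have h3 := congrArg (fun p => aeval D p y) hdiv
  simp only [map_add, LinearMap.add_apply, map_pow, aeval_X] at h3
  rw [← h3]
  refine add_mem ?_ ?_
  · rcases Nat.eq_zero_or_pos h with rfl | hpos
    · have : M = 1 := by rw [hM, pr_zero]
      rw [this, modByMonic_one]; simp
    · rw [aeval_eq_sum_range' (p := X ^ k %ₘ M) (n := h)]
      · rw [LinearMap.sum_apply]
        refine Submodule.sum_mem _ fun t ht => ?_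
        rw [LinearMap.smul_apply]
        exact Submodule.smul_mem _ _ (Submodule.subset_span
          (Or.inl ⟨t, Finset.mem_range.mp ht, rfl⟩))
      · have := natDegree_modByMonic_lt (X ^ k : F[X]) (monic_pr (fun k => th q d (k + 1)) h)
          (by intro he; have := congrArg natDegree he; rw [natDegree_pr] at this; simp at this; omega)
        rwa [natDegree_pr] at this
  · rw [mul_comm, map_mul, Module.End.mul_apply, key, map_smul,
      aeval_eig (mem_eigenspace_iff.mpr heig)]
    exact Submodule.smul_mem _ _ (Submodule.smul_mem _ _ (Submodule.subset_span (Or.inr rfl)))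

theorem aeval_mulLeft (c y : R) (p : F[X]) :
    aeval (LinearMap.mulLeft F c : Module.End F R) p y = aeval c p * y := by
  induction p using Polynomial.induction_on' with
  | add p r hp hr => rw [map_add, map_add, LinearMap.add_apply, hp, hr, add_mul]
  | monomial n a =>
    rw [aeval_monomial, aeval_monomial, Module.End.mul_apply, Module.algebraMap_end_apply,
      LinearMap.pow_mulLeft, LinearMap.mulLeft_apply, mul_assoc, Algebra.algebraMap_eq_smul_one,
      smul_one_mul]

theorem aeval_mulRight (c y : R) (p : F[X]) :
    aeval (LinearMap.mulRight F c : Module.End F R) p y = y * aeval c p := by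
  induction p using Polynomial.induction_on' with
  | add p r hp hr => rw [map_add, map_add, LinearMap.add_apply, hp, hr, mul_add]
  | monomial n a =>
    rw [aeval_monomial, aeval_monomial, Module.End.mul_apply, Module.algebraMap_end_apply,
      LinearMap.pow_mulRight, LinearMap.mulRight_apply, Algebra.algebraMap_eq_smul_one,
      smul_one_mul, mul_smul_comm]

end BoxProof

end

/-! ### Words in the odd generators and the projection `EE` -/

section

namespace BoxProof
open Polynomial Module.End
open scoped BigOperators

variable {F : Type} [Field F] {R : Type} [Ring R] [Algebra F R] {q : F}

/-- The alternating word `p^{n₁} r^{n₂} p^{n₃} ⋯`. -/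
def wd (p r : R) : List ℕ → R
  | [] => 1
  | n :: l => p ^ n * wd r p l

theorem wd_append (p r : R) (l1 l2 : List ℕ) :
    wd p r (l1 ++ l2) = wd p r l1 * (if Even l1.length then wd p r l2 else wd r p l2) := by
  induction l1 generalizing p r with
  | nil => simp [wd]
  | cons n l ih =>
    simp only [List.cons_append, wd, ih, mul_assoc, List.length_cons]
    by_cases h : Even l.length
    · rw [if_pos h, if_neg (by rw [Nat.even_add_one]; exact not_not.mpr h)]
    · rw [if_neg h, if_pos (by rw [Nat.even_add_one]; exact h)]

theorem span_conj {T : Submodule F R} {s : Set R} (A B : R) (h : ∀ Z ∈ s, A * Z * B ∈ T) {Z : R}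
    (hZ : Z ∈ Submodule.span F s) : A * Z * B ∈ T := by
  induction hZ using Submodule.span_induction with
  | mem Z hZ => exact h Z hZ
  | zero => simp
  | add Z W _ _ h1 h2 => rw [mul_add, add_mul]; exact add_mem h1 h2
  | smul t Z _ h1 => rw [mul_smul_comm, smul_mul_assoc]; exact Submodule.smul_mem _ _ h1

/-- Let `E` be the idempotent of the top eigenvalue of `c`. A multiplicatively closed subspace
containing all `E a^j E` contains `E w E` for every word `w` in `a` and `c`.

The induction is on the number of blocks of `w`, and, for a fixed number of blocks, on a distinguished
exponent `j` and then on the number of blocks to its right. `swap_span` makes an exponent next to `j`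
either smaller than `j`, or at most `j` and further to the right; at an end of the word `end_core` makes
the neighbouring exponent smaller than `j` or splits off a factor `E a^j E`. -/
theorem words (hq : QGood q) {d : ℕ} {a c : R} (hac : c ∈ Gr q a 1) (hca : a ∈ Gr q c 1)
    (hP : aeval c (pr (lam q d) (d + 1)) = 0) (hEE : aeval c (ePol q d) * aeval c (ePol q d) = aeval c (ePol q d))
    (hcE : c * aeval c (ePol q d) = th q d 0 • aeval c (ePol q d)) (hEc : aeval c (ePol q d) * c = th q d 0 • aeval c (ePol q d))
    {T : Submodule F R} (hT : ∀ A ∈ T, ∀ B ∈ T, A * B ∈ T)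
    (hj : ∀ j : ℕ, aeval c (ePol q d) * a ^ j * aeval c (ePol q d) ∈ T) :
    ∀ n : ℕ, ∀ l : List ℕ, l.length = 2 * n + 1 → aeval c (ePol q d) * wd a c l * aeval c (ePol q d) ∈ T := by
  set E := aeval c (ePol q d) with hE
  have right : ∀ k h : ℕ, c ^ k * a ^ h * E ∈ Submodule.span F
      ({z | ∃ k' < h, z = c ^ k' * a ^ h * E} ∪ {E * a ^ h * E}) := by
    intro k h
    have hD : aeval (LinearMap.mulLeft F c : Module.End F R) (pr (lam q d) (d + 1)) = 0 := by
      ext y; rw [aeval_mulLeft, hP]; simp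
    have hy : a ^ h * E ∈ ⨆ δ : {δ : ℤ // -(h:ℤ) ≤ δ ∧ δ ≤ h},
        eigenspace (LinearMap.mulLeft F c : Module.End F R) (q ^ ((d:ℤ) + 2 * δ.1)) := by
      refine Submodule.iSup_induction _ (motive := fun Y => Y * E ∈ ⨆ δ : {δ : ℤ // -(h:ℤ) ≤ δ ∧ δ ≤ h},
        eigenspace (LinearMap.mulLeft F c : Module.End F R) (q ^ ((d:ℤ) + 2 * δ.1)))
        (pow_grade hq hca h) ?_ (by simp) (fun a b ha hb => by rw [add_mul]; exact add_mem ha hb)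
      rintro ⟨δ, hδ⟩ Y hY
      refine Submodule.mem_iSup_of_mem ⟨δ, hδ⟩ ?_
      rw [mem_eigenspace_iff, LinearMap.mulLeft_apply, ← mul_assoc, mem_GG.mp hY, smul_mul_assoc,
        mul_assoc, hcE, mul_smul_comm, smul_smul, th, ← zpow_add₀ hq.ne0]
      congr 2; push_cast; ring
    have := end_core hq hD hy k
    simpa only [LinearMap.pow_mulLeft, LinearMap.mulLeft_apply, aeval_mulLeft, ← mul_assoc] using this
  have left : ∀ k h : ℕ, E * a ^ h * c ^ k ∈ Submodule.span F
      ({z | ∃ k' < h, z = E * a ^ h * c ^ k'} ∪ {E * a ^ h * E}) := by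
    intro k h
    have hD : aeval (LinearMap.mulRight F c : Module.End F R) (pr (lam q d) (d + 1)) = 0 := by
      ext y; rw [aeval_mulRight, hP]; simp
    have hy : E * a ^ h ∈ ⨆ δ : {δ : ℤ // -(h:ℤ) ≤ δ ∧ δ ≤ h},
        eigenspace (LinearMap.mulRight F c : Module.End F R) (q ^ ((d:ℤ) + 2 * δ.1)) := by
      refine Submodule.iSup_induction _ (motive := fun Y => E * Y ∈ ⨆ δ : {δ : ℤ // -(h:ℤ) ≤ δ ∧ δ ≤ h},
        eigenspace (LinearMap.mulRight F c : Module.End F R) (q ^ ((d:ℤ) + 2 * δ.1)))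
        (pow_grade hq hca h) ?_ (by simp) (fun a b ha hb => by rw [mul_add]; exact add_mem ha hb)
      rintro ⟨δ, hδ⟩ Y hY
      refine Submodule.mem_iSup_of_mem ⟨-δ, by omega⟩ ?_
      have hYc : Y * c = q ^ (-(2 * δ)) • (c * Y) := by
        rw [mem_GG.mp hY, smul_smul, ← zpow_add₀ hq.ne0, neg_add_cancel, zpow_zero, one_smul]
      rw [mem_eigenspace_iff, LinearMap.mulRight_apply, mul_assoc, hYc, mul_smul_comm, ← mul_assoc,
        hEc, smul_mul_assoc, smul_smul, th, ← zpow_add₀ hq.ne0]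
      congr 2; push_cast; ring
    have := end_core hq hD hy k
    simpa only [LinearMap.pow_mulRight, LinearMap.mulRight_apply, aeval_mulRight] using this
  intro n
  induction n with
  | zero =>
    intro l hl
    obtain ⟨m, rfl⟩ := List.length_eq_one_iff.mp hl
    simpa [wd] using hj m
  | succ n IH =>
    have claim : ∀ j : ℕ, ∀ l2 l1 : List ℕ, (l1 ++ j :: l2).length = 2 * (n + 1) + 1 →
        E * wd a c (l1 ++ j :: l2) * E ∈ T := by
      intro j
      induction j using Nat.strong_induction_on with
      | _ j ihj =>
      intro l2
      induction l2 with
      | nil =>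
        intro l1 hl
        -- The distinguished exponent belongs to the rightmost block.
        obtain ⟨l1', k, rfl⟩ : ∃ l1' k, l1 = l1' ++ [k] := by
          refine ⟨l1.dropLast, l1.getLast ?_, (List.dropLast_append_getLast _).symm⟩
          rintro rfl; simp at hl
        simp only [List.append_assoc, List.cons_append, List.nil_append, List.length_append,
          List.length_cons, List.length_nil] at hl ⊢
        have hodd : ¬ Even l1'.length := by rw [Nat.not_even_iff_odd]; exact ⟨n, by omega⟩
        have h1 : E * wd a c (l1' ++ [k, j]) * E = E * wd a c l1' * (c ^ k * a ^ j * E) * 1 := by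
          rw [wd_append, if_neg hodd]; simp [wd, mul_assoc]
        rw [h1]
        refine span_conj _ _ ?_ (right k j)
        rintro Z (⟨k', hk', rfl⟩ | rfl)
        · have := ihj k' hk' [j] l1' (by simp; omega)
          rw [wd_append, if_neg hodd] at this
          simpa [wd, mul_assoc] using this
        · have h2 := hT _ (IH l1' (by omega)) _ (hj j)
          have h3 : E * wd a c l1' * E * (E * a ^ j * E) = E * wd a c l1' * (E * a ^ j * E) * 1 := by
            rw [mul_one]
            calc _ = E * wd a c l1' * ((E * E) * a ^ j * E) := by simp only [mul_assoc]
              _ = _ := by rw [hEE]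
          rwa [h3] at h2
      | cons h l2' ihl =>
        intro l1 hl
        rcases List.eq_nil_or_concat l1 with rfl | ⟨l1', s, rfl⟩
        · -- The distinguished exponent belongs to the leftmost block.
          obtain ⟨s, l2, rfl⟩ : ∃ s l2, l2' = s :: l2 := by
            cases l2' with
            | nil => simp at hl
            | cons s l => exact ⟨s, l, rfl⟩
          simp only [List.nil_append, List.length_cons] at hl ⊢
          have h1 : E * wd a c (j :: h :: s :: l2) * E = 1 * (E * a ^ j * c ^ h) * (wd a c (s :: l2) * E) := by
            simp [wd, mul_assoc]
          rw [h1]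
          refine span_conj _ _ ?_ (left h j)
          rintro Z (⟨k', hk', rfl⟩ | rfl)
          · have := ihj k' hk' (s :: l2) [j] (by simp; omega)
            simpa [wd, mul_assoc] using this
          · have h2 := hT _ (hj j) _ (IH (s :: l2) (by simp; omega))
            have h3 : E * a ^ j * E * (E * wd a c (s :: l2) * E) =
                1 * (E * a ^ j * E) * (wd a c (s :: l2) * E) := by
              rw [one_mul]
              calc _ = E * a ^ j * (E * E) * (wd a c (s :: l2) * E) := by simp only [mul_assoc]
                _ = _ := by rw [hEE]
            rwa [h3] at h2
        · -- The distinguished exponent belongs to an interior block.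
          rw [List.concat_eq_append] at hl ⊢
          simp only [List.append_assoc, List.cons_append, List.nil_append, List.length_append,
            List.length_cons] at hl ⊢
          have gen : ∀ p r A B : R, r ∈ Gr q p 1 →
              (∀ s' h' : ℕ, (s' < j ∨ h' ≤ j) → A * (p ^ s' * (r ^ j * (p ^ h' * B))) ∈ T) →
              A * (p ^ s * (r ^ j * (p ^ h * B))) ∈ T := by
            intro p r A B hr hh
            have : A * (p ^ s * (r ^ j * (p ^ h * B))) = A * (p ^ s * r ^ j * p ^ h) * B := by
              simp only [mul_assoc]
            rw [this]
            refine span_conj _ _ ?_ (swap_span hq (pow_grade hq hr j) s h)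
            rintro Z ⟨s', h', hsh, rfl⟩
            have := hh s' h' hsh
            simpa only [mul_assoc] using this
          have all : ∀ s' h' : ℕ, (s' < j ∨ h' ≤ j) →
              E * wd a c (l1' ++ s' :: j :: h' :: l2') * E ∈ T := by
            intro s' h' hsh
            rcases hsh with hs | hh
            · exact ihj s' hs _ _ (by simp; omega)
            · rcases hh.lt_or_eq with hlt | rfl
              · have := ihj h' hlt l2' (l1' ++ [s', j]) (by simp; omega)
                simpa using this
              · have := ihl (l1' ++ [s', h']) (by simp; omega)
                simpa using this
          by_cases hev : Even l1'.length
          · have hw : ∀ s' h', E * wd a c (l1' ++ s' :: j :: h' :: l2') * E =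
                (E * wd a c l1') * (a ^ s' * (c ^ j * (a ^ h' * (wd c a l2' * E)))) := by
              intro s' h'; rw [wd_append, if_pos hev]; simp only [wd, mul_assoc]
            rw [hw]
            exact gen _ _ _ _ hac fun s' h' hh => by rw [← hw]; exact all s' h' hh
          · have hw : ∀ s' h', E * wd a c (l1' ++ s' :: j :: h' :: l2') * E =
                (E * wd a c l1') * (c ^ s' * (a ^ j * (c ^ h' * (wd a c l2' * E)))) := by
              intro s' h'; rw [wd_append, if_neg hev]; simp only [wd, mul_assoc]
            rw [hw]
            exact gen _ _ _ _ hca fun s' h' hh => by rw [← hw]; exact all s' h' hh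
    intro l hl
    cases l with
    | nil => simp at hl
    | cons j l2 => exact claim j l2 [] hl

variable {V : Type} [AddCommGroup V] [Module F V] {d : ℕ} {x : ZMod 4 → Module.End F V}

theorem isUnit_of_ann {c : R} {p : F[X]} (h : aeval c p = 0) (h0 : p.coeff 0 ≠ 0) : IsUnit c := by
  have h1 := congrArg (aeval c) (divX_mul_X_add p)
  rw [h, map_add, map_mul, aeval_X, aeval_C] at h1
  have h2 : aeval c p.divX * c = algebraMap F R (-p.coeff 0) := by
    rw [map_neg]; exact eq_neg_of_add_eq_zero_left h1
  have h3 : c * aeval c p.divX = aeval c p.divX * c := by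
    calc _ = aeval c (X * p.divX) := by rw [map_mul, aeval_X]
      _ = aeval c (p.divX * X) := by rw [mul_comm]
      _ = _ := by rw [map_mul, aeval_X]
  have h4 : algebraMap F R ((-p.coeff 0)⁻¹) * algebraMap F R (-p.coeff 0) = 1 := by
    rw [← map_mul, inv_mul_cancel₀ (neg_ne_zero.mpr h0), map_one]
  refine isUnit_iff_exists.mpr ⟨algebraMap F R ((-p.coeff 0)⁻¹) * aeval c p.divX, ?_, ?_⟩
  · rw [← mul_assoc, ← Algebra.commutes, mul_assoc, h3, h2, h4]
  · rw [mul_assoc, h2, h4]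

theorem pr_coeff_zero_ne {s : ℕ → F} {k : ℕ} (h : ∀ n, s n ≠ 0) : (pr s k).coeff 0 ≠ 0 := by
  rw [coeff_zero_eq_eval_zero, pr_eval]
  exact Finset.prod_ne_zero_iff.mpr fun n _ => sub_ne_zero.mpr (h n).symm

theorem IsBox.isUnit (hq : QGood q) (hx : IsBox q d x) (i : ZMod 4) : IsUnit (x i) :=
  isUnit_of_ann (hx.ann i) (pr_coeff_zero_ne (lam_ne hq d))

theorem X_sub_mul_ePol (q : F) (d : ℕ) : (X - C (th q d 0)) * ePol q d =
    C (∏ k ∈ Finset.range d, (th q d 0 - th q d (k + 1)))⁻¹ * pr (lam q d) (d + 1) := by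
  have : pr (lam q d) (d + 1) = (X - C (th q d 0)) * pr (fun k => th q d (k + 1)) d := by
    rw [← pr_th_top, pr, Finset.prod_range_succ', mul_comm, pr]
  rw [this, ePol]; ring

/-- The projection onto the `q^d`-eigenspace of `x 1`. -/
def EE (q : F) (d : ℕ) (x : ZMod 4 → Module.End F V) : Module.End F V := aeval (x 1) (ePol q d)

theorem EE_of_eig (hq : QGood q) {v : V} (hv : v ∈ eigenspace (x 1) (th q d 0)) :
    EE q d x v = v := by
  rw [EE, aeval_eig hv, ePol_eval_zero hq, one_smul]

theorem mul_EE (hx : IsBox q d x) : x 1 * EE q d x = th q d 0 • EE q d x := by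
  have h2 := congrArg (aeval (x 1)) (X_sub_mul_ePol q d)
  rw [map_mul, map_mul, hx.ann, mul_zero] at h2
  simpa [sub_mul, sub_eq_zero, Algebra.algebraMap_eq_smul_one, EE] using h2

theorem EE_mem (hx : IsBox q d x) (v : V) : EE q d x v ∈ eigenspace (x 1) (th q d 0) := by
  rw [mem_eigenspace_iff]
  exact congrArg (fun f : Module.End F V => f v) (mul_EE hx)

theorem EE_mul (hx : IsBox q d x) : EE q d x * x 1 = th q d 0 • EE q d x := by
  rw [← mul_EE hx, EE]
  calc _ = aeval (x 1) (ePol q d * X) := by rw [map_mul, aeval_X]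
      _ = aeval (x 1) (X * ePol q d) := by rw [mul_comm]
      _ = _ := by rw [map_mul, aeval_X]

theorem EE_EE (hq : QGood q) (hx : IsBox q d x) : EE q d x * EE q d x = EE q d x := by
  ext v; exact EE_of_eig hq (EE_mem hx v)

theorem IsBox.serre (hx : IsBox q d x) (i : ZMod 4) : Serre q (x i) (x (i + 2)) := hx.rel2 i

/-- The subspace generated by `X` under `x 1` and `x 3`. -/
def gen13 (x : ZMod 4 → Module.End F V) (X : Submodule F V) : Submodule F V :=
  Submodule.span F {w | ∃ n : ℕ, ∃ l : List ℕ, l.length = 2 * n + 1 ∧ ∃ u ∈ X, w = wd (x 3) (x 1) l u}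

theorem le_gen13 (X : Submodule F V) : X ≤ gen13 x X := fun u hu =>
  Submodule.subset_span ⟨0, [0], rfl, u, hu, by simp [wd]⟩

theorem span_stable {f : Module.End F V} {s : Set V} (h : ∀ v ∈ s, f v ∈ Submodule.span F s) :
    ∀ v ∈ Submodule.span F s, f v ∈ Submodule.span F s := by
  intro v hv
  induction hv using Submodule.span_induction with
  | mem v hv => exact h v hv
  | zero => simp
  | add a b _ _ h1 h2 => rw [map_add]; exact add_mem h1 h2
  | smul t a _ h1 => rw [map_smul]; exact Submodule.smul_mem _ _ h1

/-- `gen13 x X` is a submodule, since stability under `x 1` and `x 3` suffices. -/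
theorem gen13_inv [FiniteDimensional F V] (hq : QGood q) (hx : IsBox q d x) (X : Submodule F V)
    (i : ZMod 4) : ∀ v ∈ gen13 x X, x i v ∈ gen13 x X := by
  refine inv_of_odd hq hx (span_stable ?_) (span_stable ?_) i
  · rintro v ⟨n, l, hl, u, hu, rfl⟩
    refine Submodule.subset_span ⟨n + 1, 0 :: 1 :: l, by simp [hl]; omega, u, hu, ?_⟩
    simp [wd]
  · rintro v ⟨n, l, hl, u, hu, rfl⟩
    cases l with
    | nil => simp at hl
    | cons m l =>
      refine Submodule.subset_span ⟨n, (m + 1) :: l, by simpa using hl, u, hu, ?_⟩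
      simp [wd, pow_succ', mul_assoc]

/-- If `X` lies in the top eigenspace of `x 1` and is stable under all `EE (x 3)^j`, then `EE` maps the
submodule generated by `X` into `X`. -/
theorem EE_gen13 (hq : QGood q) (hx : IsBox q d x) {X : Submodule F V}
    (hX : X ≤ eigenspace (x 1) (th q d 0))
    (hj : ∀ j : ℕ, ∀ u ∈ X, EE q d x ((x 3 ^ j) u) ∈ X) :
    ∀ v ∈ gen13 x X, EE q d x v ∈ X := by
  let T : Submodule F (Module.End F V) :=
    { carrier := {A | ∀ u ∈ X, A u ∈ X}
      add_mem' := fun {A B} hA hB u hu => add_mem (hA u hu) (hB u hu)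
      zero_mem' := fun u _ => zero_mem _
      smul_mem' := fun t A hA u hu => Submodule.smul_mem _ _ (hA u hu) }
  have hEu : ∀ u ∈ X, EE q d x u = u := fun u hu => EE_of_eig hq (hX hu)
  have hw := words hq (a := x 3) (c := x 1)
    (serre_grade hq (hx.isUnit hq 3) (hx.serre 3)) (serre_grade hq (hx.isUnit hq 1) (hx.serre 1))
    (hx.ann 1) (EE_EE hq hx) (mul_EE hx) (EE_mul hx) (T := T)
    (fun A hA B hB u hu => hA _ (hB u hu))
    (fun j u hu => by
      have := hj j u hu
      rw [← hEu u hu] at this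
      exact this)
  intro v hv
  induction hv using Submodule.span_induction with
  | mem v hv =>
    obtain ⟨n, l, hl, u, hu, rfl⟩ := hv
    have := hw n l hl u hu
    rw [Module.End.mul_apply, Module.End.mul_apply] at this
    change EE q d x (wd (x 3) (x 1) l (EE q d x u)) ∈ X at this
    rwa [hEu u hu] at this
  | zero => simp
  | add a b _ _ h1 h2 => rw [map_add]; exact add_mem h1 h2
  | smul t a _ h1 => rw [map_smul]; exact Submodule.smul_mem _ _ h1

end BoxProof

end

/-! ### Chevalley relations in terms of the `□_q` relations -/

section

namespace BoxProof
open Polynomial Module.End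
open scoped BigOperators

variable {F : Type} [Field F] {R : Type} [Ring R] [Algebra F R] {q : F}

/-- Elements of `R` satisfying the Chevalley relations of `U_q(L(sl₂))`; `k` stands for `K₁ = K₀⁻¹`. -/
structure IsUq (q : F) (K k e0p e0m e1p e1m : R) : Prop where
  Kk : K * k = 1
  kK : k * K = 1
  p0 : K * e0p = q ^ 2 • (e0p * K)
  m0 : e0m * K = q ^ 2 • (K * e0m)
  p1 : e1p * K = q ^ 2 • (K * e1p)
  m1 : K * e1m = q ^ 2 • (e1m * K)
  h0 : e0p * e0m - e0m * e0p = (q - q⁻¹)⁻¹ • (K - k)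
  h1 : e1p * e1m - e1m * e1p = (q - q⁻¹)⁻¹ • (k - K)
  pm : e0p * e1m = e1m * e0p
  mp : e0m * e1p = e1p * e0m
  s01p : Serre q e0p e1p
  s10p : Serre q e1p e0p
  s01m : Serre q e0m e1m
  s10m : Serre q e1m e0m

/-- The images of the generators of `□_q` under `ψ`. -/
def bxOf (q : F) (K k e0p e0m e1p e1m : R) : ZMod 4 → R := fun i =>
  (![K + (q * (q - q⁻¹)) • (K * e0m), k - (q - q⁻¹) • e1p,
    k + (q * (q - q⁻¹)) • (k * e1m), K - (q - q⁻¹) • e0p] : Fin 4 → R) i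

theorem Serre.fac (hq : QGood q) {a c : R} : Serre q a c ↔
    ∀ Z1 Z2, Z1 = a * c - q ^ 2 • (c * a) → Z2 = a * Z1 - Z1 * a →
      a * Z2 - (q ^ 2)⁻¹ • (Z2 * a) = 0 := by
  have hq0 := hq.ne0
  rw [Serre, q3 hq, ← sub_eq_zero]
  have : ∀ Z1 Z2, Z1 = a * c - q ^ 2 • (c * a) → Z2 = a * Z1 - Z1 * a →
      a * Z2 - (q ^ 2)⁻¹ • (Z2 * a) =
      a ^ 3 * c + (q ^ 2 + 1 + (q ^ 2)⁻¹) • (a * c * a ^ 2) -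
        ((q ^ 2 + 1 + (q ^ 2)⁻¹) • (a ^ 2 * c * a) + c * a ^ 3) := by
    rintro _ _ rfl rfl
    simp only [mul_sub, sub_mul, mul_smul_comm, smul_mul_assoc, smul_sub, smul_smul, pow_succ, pow_zero,
      one_mul, mul_assoc, add_smul]
    match_scalars <;> field_simp <;> ring
  constructor
  · intro h Z1 Z2 h1 h2; rw [this Z1 Z2 h1 h2, h]
  · intro h
    rw [← this _ _ rfl rfl]; exact h _ _ rfl rfl

theorem Serre.fac' (hq : QGood q) {a c : R} : Serre q a c ↔
    ∀ Z1 Z2, Z1 = a * c - (q ^ 2)⁻¹ • (c * a) → Z2 = a * Z1 - Z1 * a →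
      a * Z2 - q ^ 2 • (Z2 * a) = 0 := by
  have hq0 := hq.ne0
  rw [Serre, q3 hq, ← sub_eq_zero]
  have : ∀ Z1 Z2, Z1 = a * c - (q ^ 2)⁻¹ • (c * a) → Z2 = a * Z1 - Z1 * a →
      a * Z2 - q ^ 2 • (Z2 * a) =
      a ^ 3 * c + (q ^ 2 + 1 + (q ^ 2)⁻¹) • (a * c * a ^ 2) -
        ((q ^ 2 + 1 + (q ^ 2)⁻¹) • (a ^ 2 * c * a) + c * a ^ 3) := by
    rintro _ _ rfl rfl
    simp only [mul_sub, sub_mul, mul_smul_comm, smul_mul_assoc, smul_sub, smul_smul, pow_succ, pow_zero,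
      one_mul, mul_assoc, add_smul]
    match_scalars <;> field_simp <;> ring
  constructor
  · intro h Z1 Z2 h1 h2; rw [this Z1 Z2 h1 h2, h]
  · intro h
    rw [← this _ _ rfl rfl]; exact h _ _ rfl rfl

theorem Serre.smul_iff {a c : R} {s t : F} (hs : s ≠ 0) (ht : t ≠ 0) :
    Serre q (s • a) (t • c) ↔ Serre q a c := by
  have e1 : ∀ Y Z : R, (s ^ 3 * t) • Y = (s ^ 3 * t) • Z ↔ Y = Z := fun Y Z =>
    (smul_right_injective R (mul_ne_zero (pow_ne_zero 3 hs) ht)).eq_iff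
  rw [Serre, Serre, ← e1 (a ^ 3 * c + _)]
  simp only [_root_.smul_pow, smul_mul_assoc, mul_smul_comm, smul_smul, smul_add]
  ring_nf

theorem Serre.add_right {a c c' : R} (h : Serre q a c) (h' : Serre q a c') : Serre q a (c + c') := by
  rw [Serre] at *
  simp only [mul_add, add_mul, smul_add] at *
  calc _ = (a ^ 3 * c + ((q ^ 3 - q⁻¹ ^ 3) / (q - q⁻¹)) • (a * c * a ^ 2)) +
      (a ^ 3 * c' + ((q ^ 3 - q⁻¹ ^ 3) / (q - q⁻¹)) • (a * c' * a ^ 2)) := by abel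
    _ = _ := by rw [h, h']; abel

theorem Serre.neg_right {a c : R} (h : Serre q a c) : Serre q a (-c) := by
  have := (Serre.smul_iff (q := q) (a := a) (c := c) (s := 1) (t := -1) one_ne_zero
    (neg_ne_zero.mpr one_ne_zero)).mpr h
  simpa using this

/-- Adding `K` to `A` and `K⁻¹` to `C`, where `A` and `C` have opposite `K`-weights, does not affect the
Serre relation. -/
theorem serre_shift (hq : QGood q) {K k A C : R} (Kk : K * k = 1) (kK : k * K = 1)
    (hA : K * A = q ^ 2 • (A * K)) (hC : C * K = q ^ 2 • (K * C)) :
    Serre q (K + A) (k + C) ↔ Serre q A C := by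
  have hq0 := hq.ne0
  have hkA : A * k = q ^ 2 • (k * A) := by
    calc A * k = k * (K * A) * k := by rw [← mul_assoc, kK, one_mul]
      _ = q ^ 2 • (k * A) := by rw [hA, mul_smul_comm, smul_mul_assoc, mul_assoc, mul_assoc, Kk, mul_one]
  have hk : Serre q (K + A) k := by
    rw [Serre.fac hq]
    rintro Z1 Z2 rfl rfl
    have : (K + A) * k - q ^ 2 • (k * (K + A)) = (1 - q ^ 2) • 1 := by
      rw [add_mul, mul_add, Kk, kK, hkA, smul_add, sub_smul, one_smul]; abel
    rw [this]; simp
  have hKC : (q ^ 2)⁻¹ • (C * K) = K * C := by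
    rw [hC, smul_smul, inv_mul_cancel₀ (pow_ne_zero 2 hq0), one_smul]
  have hmain : Serre q (K + A) C ↔ Serre q A C := by
    rw [Serre.fac' hq, Serre.fac' hq]
    have s1 : (K + A) * C - (q ^ 2)⁻¹ • (C * (K + A)) = A * C - (q ^ 2)⁻¹ • (C * A) := by
      rw [add_mul, mul_add, smul_add, hKC]; abel
    obtain ⟨D1, hD1⟩ : ∃ D1, D1 = A * C - (q ^ 2)⁻¹ • (C * A) := ⟨_, rfl⟩
    rw [← hD1] at s1 ⊢
    have hAC : K * (A * C) = A * C * K := by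
      rw [← mul_assoc, hA, smul_mul_assoc, mul_assoc A C, hC, mul_smul_comm, mul_assoc]
    have hCA : K * (C * A) = C * A * K := by
      rw [← mul_assoc, ← hKC, smul_mul_assoc, mul_assoc C K, hA, mul_smul_comm, smul_smul,
        inv_mul_cancel₀ (pow_ne_zero 2 hq0), one_smul, mul_assoc]
    have hD1K : K * D1 = D1 * K := by
      rw [hD1, mul_sub, sub_mul, mul_smul_comm, smul_mul_assoc, hAC, hCA]
    have s2 : (K + A) * D1 - D1 * (K + A) = A * D1 - D1 * A := by
      rw [add_mul, mul_add, hD1K]; abel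
    obtain ⟨D2, hD2⟩ : ∃ D2, D2 = A * D1 - D1 * A := ⟨_, rfl⟩
    rw [← hD2] at s2
    have hD2K : K * D2 = q ^ 2 • (D2 * K) := by
      have a1 : K * (A * D1) = q ^ 2 • (A * D1 * K) := by
        rw [← mul_assoc, hA, smul_mul_assoc, mul_assoc A K, hD1K, mul_assoc]
      have a2 : K * (D1 * A) = q ^ 2 • (D1 * A * K) := by
        rw [← mul_assoc, hD1K, mul_assoc D1 K, hA, mul_smul_comm, mul_assoc]
      rw [hD2, mul_sub, sub_mul, smul_sub, a1, a2]
    have s3 : (K + A) * D2 - q ^ 2 • (D2 * (K + A)) = A * D2 - q ^ 2 • (D2 * A) := by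
      rw [add_mul, mul_add, smul_add, hD2K]; abel
    constructor
    · rintro h Z1 Z2 rfl hZ2
      rw [← hD2] at hZ2
      rw [hZ2, ← s3]
      exact h _ D2 s1.symm s2.symm
    · rintro h Z1 Z2 hZ1 hZ2
      rw [s1] at hZ1
      rw [hZ1, s2] at hZ2
      rw [hZ2, s3]
      exact h _ D2 rfl hD2
  rw [← hmain]
  constructor
  · intro h
    have := h.add_right hk.neg_right
    rwa [add_neg_cancel_comm] at this
  · intro h; exact hk.add_right h

theorem QGood.inv (hq : QGood q) : QGood q⁻¹ :=
  ⟨inv_ne_zero hq.ne0, fun n hn h => hq.nr n hn (by rwa [inv_pow, inv_eq_one] at h)⟩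

theorem Serre.inv_iff (hq : QGood q) {a c : R} : Serre q⁻¹ a c ↔ Serre q a c := by
  rw [Serre, Serre, q3 hq, q3 hq.inv]
  have : (q⁻¹ ^ 2 + 1 + (q⁻¹ ^ 2)⁻¹) = (q ^ 2 + 1 + (q ^ 2)⁻¹) := by
    rw [inv_pow, inv_inv]; ring
  rw [this]

/-- Multiplying by `K` and `K⁻¹` does not affect the Serre relation between elements of opposite
`K`-weights. -/
theorem serre_K (hq : QGood q) {K k e f : R} (Kk : K * k = 1) (kK : k * K = 1)
    (he : e * K = q ^ 2 • (K * e)) (hf : K * f = q ^ 2 • (f * K)) :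
    Serre q (K * e) (k * f) ↔ Serre q e f := by
  have hq0 := hq.ne0
  have hek : k * e = q ^ 2 • (e * k) := by
    calc k * e = k * (e * K) * k := by rw [mul_assoc, mul_assoc, Kk, mul_one]
      _ = q ^ 2 • (e * k) := by rw [he, mul_smul_comm, smul_mul_assoc, ← mul_assoc, kK, one_mul]
  have hfk : f * k = q ^ 2 • (k * f) := by
    calc f * k = k * (K * f) * k := by rw [← mul_assoc, kK, one_mul]
      _ = q ^ 2 • (k * f) := by rw [hf, mul_smul_comm, smul_mul_assoc, mul_assoc, mul_assoc, Kk, mul_one]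
  have heK' : ∀ Z, e * (K * Z) = q ^ 2 • (K * (e * Z)) := fun Z => by
    rw [← mul_assoc, he, smul_mul_assoc, mul_assoc]
  have hek' : ∀ Z, e * (k * Z) = (q ^ 2)⁻¹ • (k * (e * Z)) := fun Z => by
    rw [← mul_assoc k, hek, smul_mul_assoc, smul_smul, inv_mul_cancel₀ (pow_ne_zero 2 hq0), one_smul,
      mul_assoc]
  have hfK' : ∀ Z, f * (K * Z) = (q ^ 2)⁻¹ • (K * (f * Z)) := fun Z => by
    rw [← mul_assoc K, hf, smul_mul_assoc, smul_smul, inv_mul_cancel₀ (pow_ne_zero 2 hq0), one_smul,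
      mul_assoc]
  have Kk' : ∀ Z, K * (k * Z) = Z := fun Z => by rw [← mul_assoc, Kk, one_mul]
  have kK' : ∀ Z, k * (K * Z) = Z := fun Z => by rw [← mul_assoc, kK, one_mul]
  have hinj : ∀ Y Z : R, K * (K * Y) = K * (K * Z) ↔ Y = Z := by
    intro Y Z
    constructor
    · intro h
      have := congrArg (fun W => k * (k * W)) h
      simpa only [kK'] using this
    · rintro rfl; rfl
  rw [Serre, Serre, ← hinj (e ^ 3 * f + _)]
  generalize (q ^ 3 - q⁻¹ ^ 3) / (q - q⁻¹) = t
  simp only [pow_succ, pow_zero, one_mul, mul_add, mul_assoc, heK', hek', hfK', mul_smul_comm, smul_mul_assoc, smul_smul,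
    Kk', kK']
  have e : ∀ A B C D A' B' C' D' : R, A = A' → B = B' → C = C' → D = D' →
      (A + B = C + D ↔ A' + B' = C' + D') := by rintro _ _ _ _ _ _ _ _ rfl rfl rfl rfl; rfl
  apply e <;> match_scalars
  all_goals field_simp

/-- Given the weight relations, the `□_q` relation between `x₃` and `x₀` expresses the commutator
relation of `e₀⁺` and `e₀⁻` (and likewise for `x₁`, `x₂` and `e₁^±`). -/
theorem rel_R1 (hq : QGood q) {K k p m : R} (Kk : K * k = 1)
    (hp : K * p = q ^ 2 • (p * K)) (hm : m * K = q ^ 2 • (K * m)) :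
    q • ((K - (q - q⁻¹) • p) * (K + (q * (q - q⁻¹)) • (K * m))) -
      q⁻¹ • ((K + (q * (q - q⁻¹)) • (K * m)) * (K - (q - q⁻¹) • p)) - (q - q⁻¹) • 1 =
    (-(q - q⁻¹) ^ 2) • (K * (p * m - m * p - (q - q⁻¹)⁻¹ • (K - k))) := by
  have hq0 := hq.ne0
  have hc := hq.c0_ne
  have hp1 : p * K = (q ^ 2)⁻¹ • (K * p) := by
    rw [hp, smul_smul, inv_mul_cancel₀ (pow_ne_zero 2 hq0), one_smul]
  have hp2 : p * (K * m) = (q ^ 2)⁻¹ • (K * (p * m)) := by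
    rw [← mul_assoc, hp1, smul_mul_assoc, mul_assoc]
  have hc' : q ^ 2 - 1 ≠ 0 := fun h => hq.nr 2 (by norm_num) (by linear_combination h)
  have hcc : (q - q⁻¹) * (q - q⁻¹)⁻¹ = 1 := mul_inv_cancel₀ hc
  have hcc2 : (q - q⁻¹) ^ 2 * (q - q⁻¹)⁻¹ = q - q⁻¹ := by rw [pow_two, mul_assoc, hcc, mul_one]
  simp only [mul_add, add_mul, mul_sub, sub_mul, smul_mul_assoc, mul_smul_comm, mul_assoc, hm, hp1, hp2,
    Kk, smul_sub, smul_add, smul_smul, neg_mul, hcc2]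
  match_scalars <;> field_simp <;> ring

/-- Given the weight relations, the `□_q` relation between `x₀` and `x₁` expresses that `e₀⁻` and `e₁⁺`
commute (and likewise for `x₂`, `x₃` and `e₁⁻`, `e₀⁺`). -/
theorem rel_R2 (hq : QGood q) {K k p m : R} (Kk : K * k = 1) (kK : k * K = 1)
    (hp : p * K = q ^ 2 • (K * p)) (hm : m * K = q ^ 2 • (K * m)) :
    q • ((K + (q * (q - q⁻¹)) • (K * m)) * (k - (q - q⁻¹) • p)) -
      q⁻¹ • ((k - (q - q⁻¹) • p) * (K + (q * (q - q⁻¹)) • (K * m))) - (q - q⁻¹) • 1 =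
    (-(q ^ 2 * (q - q⁻¹) ^ 2)) • (K * (m * p - p * m)) := by
  have hq0 := hq.ne0
  have hp2 : p * (K * m) = q ^ 2 • (K * (p * m)) := by
    rw [← mul_assoc, hp, smul_mul_assoc, mul_assoc]
  have hmk : m * k = (q ^ 2)⁻¹ • (k * m) := by
    have : k * m = q ^ 2 • (m * k) := by
      calc k * m = k * (m * K) * k := by rw [mul_assoc, mul_assoc, Kk, mul_one]
        _ = q ^ 2 • (m * k) := by rw [hm, mul_smul_comm, smul_mul_assoc, ← mul_assoc, kK, one_mul]
    rw [this, smul_smul, inv_mul_cancel₀ (pow_ne_zero 2 hq0), one_smul]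
  have kK' : ∀ Z, k * (K * Z) = Z := fun Z => by rw [← mul_assoc, kK, one_mul]
  have Kk' : ∀ Z, K * (k * Z) = Z := fun Z => by rw [← mul_assoc, Kk, one_mul]
  simp only [mul_add, add_mul, mul_sub, sub_mul, smul_mul_assoc, mul_smul_comm, mul_assoc, hmk, hp, hp2,
    Kk, kK, kK', Kk', smul_sub, smul_add, smul_smul]
  match_scalars <;> field_simp <;> ring

theorem comm_k1 {K k X : R} (Kk : K * k = 1) (kK : k * K = 1) {c : F}
    (h : X * K = c • (K * X)) : k * X = c • (X * k) := by
  calc k * X = k * (X * K) * k := by rw [mul_assoc, mul_assoc, Kk, mul_one]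
    _ = c • (X * k) := by rw [h, mul_smul_comm, smul_mul_assoc, ← mul_assoc, kK, one_mul]

theorem comm_k2 {K k X : R} (Kk : K * k = 1) (kK : k * K = 1) {c : F}
    (h : K * X = c • (X * K)) : X * k = c • (k * X) := by
  calc X * k = k * (K * X) * k := by rw [← mul_assoc, kK, one_mul]
    _ = c • (k * X) := by rw [h, mul_smul_comm, smul_mul_assoc, mul_assoc, mul_assoc, Kk, mul_one]

/-- The defining relations of `□_q`, for elements of an algebra. -/
def BoxRels (q : F) (x : ZMod 4 → R) : Prop :=
  (∀ i, q • (x i * x (i + 1)) - q⁻¹ • (x (i + 1) * x i) = (q - q⁻¹) • 1) ∧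
    ∀ i, Serre q (x i) (x (i + 2))

/-- Given the weight relations with `K`, the remaining Chevalley relations are equivalent to the
relations of `□_q` between the images of its generators under `ψ`. -/
theorem isUq_iff (hq : QGood q) {K k e0p e0m e1p e1m : R} (Kk : K * k = 1) (kK : k * K = 1)
    (p0 : K * e0p = q ^ 2 • (e0p * K)) (m0 : e0m * K = q ^ 2 • (K * e0m))
    (p1 : e1p * K = q ^ 2 • (K * e1p)) (m1 : K * e1m = q ^ 2 • (e1m * K)) :
    IsUq q K k e0p e0m e1p e1m ↔ BoxRels q (bxOf q K k e0p e0m e1p e1m) := by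
  have hq0 := hq.ne0
  have hc := hq.c0_ne
  have p0' := comm_k2 Kk kK p0
  have m0' := comm_k1 Kk kK m0
  have p1' := comm_k1 Kk kK p1
  have m1' := comm_k2 Kk kK m1
  have injK : ∀ (c : F) (Z : R), c ≠ 0 → (c • (K * Z) = 0 ↔ Z = 0) := by
    intro c Z hc
    constructor
    · intro h
      rw [smul_eq_zero_iff_right hc] at h
      rw [← one_mul Z, ← kK, mul_assoc, h, mul_zero]
    · rintro rfl; simp
  have injk : ∀ (c : F) (Z : R), c ≠ 0 → (c • (k * Z) = 0 ↔ Z = 0) := by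
    intro c Z hc
    constructor
    · intro h
      rw [smul_eq_zero_iff_right hc] at h
      rw [← one_mul Z, ← Kk, mul_assoc, h, mul_zero]
    · rintro rfl; simp
  have c2 : -(q - q⁻¹) ^ 2 ≠ 0 := neg_ne_zero.mpr (pow_ne_zero 2 hc)
  have c3 : -(q ^ 2 * (q - q⁻¹) ^ 2) ≠ 0 :=
    neg_ne_zero.mpr (mul_ne_zero (pow_ne_zero 2 hq0) (pow_ne_zero 2 hc))
  have r30 := rel_R1 hq Kk p0 m0
  have r12 := rel_R1 hq kK p1' m1'
  have r01 := rel_R2 hq Kk kK p1 m0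
  have r23 := rel_R2 hq kK Kk p0' m1'
  have ss : ∀ (s : F) (Z : R), K - s • Z = K + (-s) • Z := fun s Z => by rw [neg_smul, sub_eq_add_neg]
  have ss' : ∀ (s : F) (Z : R), k - s • Z = k + (-s) • Z := fun s Z => by rw [neg_smul, sub_eq_add_neg]
  have hnc : -(q - q⁻¹) ≠ 0 := neg_ne_zero.mpr hc
  have hqc : q * (q - q⁻¹) ≠ 0 := mul_ne_zero hq0 hc
  have S13 : Serre q (k - (q - q⁻¹) • e1p) (K - (q - q⁻¹) • e0p) ↔ Serre q e1p e0p := by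
    rw [ss, ss', serre_shift hq kK Kk, Serre.smul_iff hnc hnc]
    · rw [mul_smul_comm, smul_mul_assoc, p1', smul_comm]
    · rw [mul_smul_comm, smul_mul_assoc, p0', smul_comm]
  have S31 : Serre q (K - (q - q⁻¹) • e0p) (k - (q - q⁻¹) • e1p) ↔ Serre q e0p e1p := by
    rw [ss, ss', serre_shift hq Kk kK, Serre.smul_iff hnc hnc]
    · rw [mul_smul_comm, smul_mul_assoc, p0, smul_comm]
    · rw [mul_smul_comm, smul_mul_assoc, p1, smul_comm]
  have ii : (q⁻¹ ^ 2 : F) * q ^ 2 = 1 := by field_simp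
  have aA : ∀ {K m : R}, m * K = q ^ 2 • (K * m) → K * (K * m) = q⁻¹ ^ 2 • (K * m * K) := by
    intro K m h
    rw [mul_assoc K m, h, mul_smul_comm, smul_smul, ii, one_smul]
  have aC : ∀ {K k f : R}, K * k = 1 → k * K = 1 → K * f = q ^ 2 • (f * K) →
      k * f * K = q⁻¹ ^ 2 • (K * (k * f)) := by
    intro K k f Kk kK h
    rw [← mul_assoc K k, Kk, ← kK, mul_assoc k K f, h, mul_smul_comm, smul_smul, ii, one_smul, mul_assoc]
  have S02 : Serre q (K + (q * (q - q⁻¹)) • (K * e0m)) (k + (q * (q - q⁻¹)) • (k * e1m)) ↔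
      Serre q e0m e1m := by
    rw [← Serre.inv_iff hq, serre_shift hq.inv Kk kK, Serre.inv_iff hq, Serre.smul_iff hqc hqc,
      serre_K hq Kk kK m0 m1]
    · rw [mul_smul_comm, smul_mul_assoc, aA m0, smul_comm]
    · rw [mul_smul_comm, smul_mul_assoc, aC Kk kK m1, smul_comm]
  have S20 : Serre q (k + (q * (q - q⁻¹)) • (k * e1m)) (K + (q * (q - q⁻¹)) • (K * e0m)) ↔
      Serre q e1m e0m := by
    rw [← Serre.inv_iff hq, serre_shift hq.inv kK Kk, Serre.inv_iff hq, Serre.smul_iff hqc hqc,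
      serre_K hq kK Kk m1' m0']
    · rw [mul_smul_comm, smul_mul_assoc, aA m1', smul_comm]
    · rw [mul_smul_comm, smul_mul_assoc, aC kK Kk m0', smul_comm]
  constructor
  · intro h
    refine ⟨fun i => ?_, fun i => ?_⟩
    · fin_cases i
      · rw [← sub_eq_zero]; refine r01.trans ?_; rw [injK _ _ c3, sub_eq_zero]; exact h.mp
      · rw [← sub_eq_zero]; refine r12.trans ?_; rw [injk _ _ c2, sub_eq_zero]; exact h.h1
      · rw [← sub_eq_zero]; refine r23.trans ?_; rw [injk _ _ c3, sub_eq_zero]; exact h.pm.symm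
      · rw [← sub_eq_zero]; refine r30.trans ?_; rw [injK _ _ c2, sub_eq_zero]; exact h.h0
    · fin_cases i
      · exact S02.mpr h.s01m
      · exact S13.mpr h.s10p
      · exact S20.mpr h.s10m
      · exact S31.mpr h.s01p
  · rintro ⟨h1, h2⟩
    refine ⟨Kk, kK, p0, m0, p1, m1, ?_, ?_, ?_, ?_, S31.mp (h2 3), S13.mp (h2 1), S02.mp (h2 0),
      S20.mp (h2 2)⟩
    · rw [← sub_eq_zero, ← injK _ _ c2, ← r30, sub_eq_zero]; exact h1 3
    · rw [← sub_eq_zero, ← injk _ _ c2, ← r12, sub_eq_zero]; exact h1 1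
    · symm; rw [← sub_eq_zero, ← injk _ _ c3, ← r23, sub_eq_zero]; exact h1 2
    · rw [← sub_eq_zero, ← injK _ _ c3, ← r01, sub_eq_zero]; exact h1 0

end BoxProof

end

/-! ### Homomorphisms out of the presented algebras -/

section

namespace BoxProof
open Polynomial Module.End
open scoped BigOperators

variable {F : Type} [Field F] {R : Type} [Ring R] [Algebra F R] {q : F}

theorem exists_boxHom {x : ZMod 4 → R} (h : BoxRels q x) :
    ∃ π : BoxQ F q →ₐ[F] R, ∀ i, π (bx F q i) = x i := by
  refine ⟨RingQuot.liftAlgHom F ⟨FreeAlgebra.lift F x, ?_⟩, ?_⟩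
  · intro a b hab
    induction hab with
    | rel1 i => simpa using h.1 i
    | rel2 i => simpa [Serre] using h.2 i
  · intro i
    simp [bx]

theorem boxRels_of_hom (π : BoxQ F q →ₐ[F] R) : BoxRels q (fun i => π (bx F q i)) := by
  constructor
  · intro i
    have := congrArg π (RingQuot.mkAlgHom_rel F (BoxRel.rel1 (F := F) (q := q) i))
    simpa [bx] using this
  · intro i
    have := congrArg π (RingQuot.mkAlgHom_rel F (BoxRel.rel2 (F := F) (q := q) i))
    simpa [bx, Serre] using this

theorem boxHom_ext {π π' : BoxQ F q →ₐ[F] R} (h : ∀ i, π (bx F q i) = π' (bx F q i)) : π = π' := by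
  apply RingQuot.ringQuot_ext'
  apply FreeAlgebra.hom_ext
  funext i
  exact h i

theorem exists_uqHom {K k e0p e0m e1p e1m : R} (h : IsUq q K k e0p e0m e1p e1m) (hq0 : q ≠ 0) :
    ∃ Φ : UqL F q →ₐ[F] R, Φ (lg F q LGen.k0) = K ∧ Φ (lg F q LGen.k1) = k ∧
      Φ (lg F q LGen.e0p) = e0p ∧ Φ (lg F q LGen.e0m) = e0m ∧ Φ (lg F q LGen.e1p) = e1p ∧
      Φ (lg F q LGen.e1m) = e1m := by
  have ii : (q ^ 2)⁻¹ * q ^ 2 = 1 := inv_mul_cancel₀ (pow_ne_zero 2 hq0)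
  have c1 : ∀ {K k X : R}, K * k = 1 → K * X = q ^ 2 • (X * K) → K * X * k = q ^ 2 • X := by
    intro K k X Kk h
    rw [h, smul_mul_assoc, mul_assoc, Kk, mul_one]
  have c2 : ∀ {K k X : R}, K * k = 1 → X * K = q ^ 2 • (K * X) → K * X * k = (q ^ 2)⁻¹ • X := by
    intro K k X Kk h
    have : K * X = (q ^ 2)⁻¹ • (X * K) := by rw [h, smul_smul, ii, one_smul]
    rw [this, smul_mul_assoc, mul_assoc, Kk, mul_one]
  have p0' := comm_k2 h.Kk h.kK h.p0
  have m0' := comm_k1 h.Kk h.kK h.m0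
  have p1' := comm_k1 h.Kk h.kK h.p1
  have m1' := comm_k2 h.Kk h.kK h.m1
  let g : LGen → R := fun
    | .e0p => e0p | .e0m => e0m | .e1p => e1p | .e1m => e1m | .k0 => K | .k0i => k | .k1 => k | .k1i => K
  refine ⟨RingQuot.liftAlgHom F ⟨FreeAlgebra.lift F g, ?_⟩, ?_⟩
  · intro a b hab
    induction hab with
    | k0inv => simpa [g] using h.Kk
    | k0inv' => simpa [g] using h.kK
    | k1inv => simpa [g] using h.kK
    | k1inv' => simpa [g] using h.Kk
    | k01 => simpa [g] using h.Kk
    | k10 => simpa [g] using h.kK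
    | conj00p => simpa [g] using c1 h.Kk h.p0
    | conj00m => simpa [g] using c2 h.Kk h.m0
    | conj11p => simpa [g] using c1 h.kK p1'
    | conj11m => simpa [g] using c2 h.kK m1'
    | conj01p => simpa [g] using c2 h.Kk h.p1
    | conj01m => simpa [g] using c1 h.Kk h.m1
    | conj10p => simpa [g] using c2 h.kK p0'
    | conj10m => simpa [g] using c1 h.kK m0'
    | heis0 => simpa [g] using h.h0
    | heis1 => simpa [g] using h.h1
    | pm => simpa [g] using h.pm
    | mp => simpa [g] using h.mp
    | serre a b hab =>
      rcases hab with ⟨rfl, rfl⟩ | ⟨rfl, rfl⟩ | ⟨rfl, rfl⟩ | ⟨rfl, rfl⟩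
      · simpa [g, Serre] using h.s01p
      · simpa [g, Serre] using h.s10p
      · simpa [g, Serre] using h.s01m
      · simpa [g, Serre] using h.s10m
  · simp [lg, g]

theorem isUq_of_hom (hq0 : q ≠ 0) (Φ : UqL F q →ₐ[F] R) :
    IsUq q (Φ (lg F q LGen.k0)) (Φ (lg F q LGen.k1)) (Φ (lg F q LGen.e0p)) (Φ (lg F q LGen.e0m))
      (Φ (lg F q LGen.e1p)) (Φ (lg F q LGen.e1m)) := by
  have hr : ∀ {a b : FreeAlgebra F LGen}, UqLRel F q a b →
      Φ (RingQuot.mkAlgHom F (UqLRel F q) a) = Φ (RingQuot.mkAlgHom F (UqLRel F q) b) :=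
    fun h => congrArg Φ (RingQuot.mkAlgHom_rel F h)
  have kk0 := hr UqLRel.k0inv
  have kk0' := hr UqLRel.k0inv'
  have k01 := hr UqLRel.k01
  have k10 := hr UqLRel.k10
  have kk1 := hr UqLRel.k1inv
  have kk1' := hr UqLRel.k1inv'
  have a1 := hr UqLRel.conj00p
  have a2 := hr UqLRel.conj00m
  have a3 := hr UqLRel.conj01p
  have a4 := hr UqLRel.conj01m
  have b1 := hr UqLRel.heis0
  have b2 := hr UqLRel.heis1
  have b3 := hr UqLRel.pm
  have b4 := hr UqLRel.mp
  have s1 := hr (UqLRel.serre (q := q) LGen.e0p LGen.e1p (by simp))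
  have s2 := hr (UqLRel.serre (q := q) LGen.e1p LGen.e0p (by simp))
  have s3 := hr (UqLRel.serre (q := q) LGen.e0m LGen.e1m (by simp))
  have s4 := hr (UqLRel.serre (q := q) LGen.e1m LGen.e0m (by simp))
  simp only [map_mul, map_one, map_smul, map_sub, map_add, map_pow, ← lg.eq_1] at *
  have e0 : Φ (lg F q LGen.k0i) = Φ (lg F q LGen.k1) := by
    rw [← one_mul (Φ (lg F q LGen.k0i)), ← k10, mul_assoc, kk0, mul_one]
  have e1 : Φ (lg F q LGen.k1i) = Φ (lg F q LGen.k0) := by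
    rw [← one_mul (Φ (lg F q LGen.k1i)), ← k01, mul_assoc, kk1, mul_one]
  rw [e0] at a1 a2 a3 a4 b1
  rw [e1] at b2
  have ii : q ^ 2 * (q ^ 2)⁻¹ = 1 := mul_inv_cancel₀ (pow_ne_zero 2 hq0)
  have c1 : ∀ {K k X : R}, k * K = 1 → K * X * k = q ^ 2 • X → K * X = q ^ 2 • (X * K) := by
    intro K k X Kk h
    rw [← smul_mul_assoc, ← h, mul_assoc, Kk, mul_one]
  have c2 : ∀ {K k X : R}, k * K = 1 → K * X * k = (q ^ 2)⁻¹ • X → X * K = q ^ 2 • (K * X) := by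
    intro K k X Kk h
    have : K * X = (q ^ 2)⁻¹ • (X * K) := by rw [← smul_mul_assoc, ← h, mul_assoc, Kk, mul_one]
    rw [this, smul_smul, ii, one_smul]
  exact ⟨k01, k10, c1 k10 a1, c2 k10 a2, c2 k10 a3, c1 k10 a4, b1, b2, b3, b4, s1, s2, s3, s4⟩

theorem bxOf_psi {ψ : BoxQ F q →ₐ[F] UqL F q} (hψ : IsPsi F q ψ) (Φ : UqL F q →ₐ[F] R) (i : ZMod 4) :
    Φ (ψ (bx F q i)) = bxOf q (Φ (lg F q LGen.k0)) (Φ (lg F q LGen.k1)) (Φ (lg F q LGen.e0p))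
      (Φ (lg F q LGen.e0m)) (Φ (lg F q LGen.e1p)) (Φ (lg F q LGen.e1m)) i := by
  obtain ⟨h0, h1, h2, h3⟩ := hψ
  fin_cases i
  · refine (congrArg Φ h0).trans ?_; simp [bxOf]
  · refine (congrArg Φ h1).trans ?_; simp [bxOf]
  · refine (congrArg Φ h2).trans ?_; simp [bxOf]
  · refine (congrArg Φ h3).trans ?_; simp [bxOf]

theorem exists_psi (hq : QGood q) : ∃ ψ : BoxQ F q →ₐ[F] UqL F q, IsPsi F q ψ := by
  have h := isUq_of_hom hq.ne0 (AlgHom.id F (UqL F q))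
  obtain ⟨ψ, hψ⟩ := exists_boxHom ((isUq_iff hq h.Kk h.kK h.p0 h.m0 h.p1 h.m1).mp h)
  exact ⟨ψ, hψ 0, hψ 1, hψ 2, hψ 3⟩

end BoxProof

end

/-! ### The operators `T_j` on the lowest weight space -/

section

namespace BoxProof
open Polynomial Module.End
open scoped BigOperators

variable {F : Type} [Field F] {V : Type} [AddCommGroup V] [Module F V] {q : F} {d : ℕ}
  {x : ZMod 4 → Module.End F V}

/-- The product `∏_{k=1}^j (θ_0 - θ_k)`, where `θ_k = q^(d-2k)`. -/
def cc (q : F) (d j : ℕ) : F := ∏ k ∈ Finset.range j, (th q d 0 - th q d (k + 1))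

theorem cc_ne (hq : QGood q) (d j : ℕ) : cc q d j ≠ 0 := kap_ne hq d j

/-- The intrinsic version of the operator `(e₁⁺)^j (e₀⁺)^j` on the lowest weight space, written in terms
of the `x i` only; the scalar is the one required by `IsUqMod.Tt_eq`. -/
def Tt (q : F) (d : ℕ) (x : ZMod 4 → Module.End F V) (j : ℕ) : Module.End F V :=
  ((((q - q⁻¹) ^ 2) ^ j)⁻¹ * cc q d j) • (EE q d x * aeval (x 3) (pr (lam q d) j))

theorem aeval_X_sub (f : Module.End F V) (c : F) (v : V) : aeval f (X - C c) v = f v - c • v := by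
  simp [Algebra.algebraMap_eq_smul_one]

theorem pr_succ' (s : ℕ → F) (k : ℕ) : pr s (k + 1) = (X - C (s 0)) * pr (fun n => s (n + 1)) k := by
  rw [pr, Finset.prod_range_succ', mul_comm, pr]

theorem newt_mem (hq : QGood q) (hx : IsBox q d x) {v : V} {i j : ℕ} (hv : v ∈ Fl q d x 0 i) :
    aeval (x 3) (pr (lam q d) j) v ∈ Fl q d x 0 (i + j) := by
  induction j with
  | zero => simpa [pr_zero] using hv
  | succ j ih =>
    rw [pr_succ, mul_comm, map_mul, Module.End.mul_apply, aeval_X_sub]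
    exact sub_mem (Fl_raise3' hq hx 0 ih) (Submodule.smul_mem _ _ (Fl_mono 0 (by omega) ih))

/-- On `Fl 0 (j+1)` the projection `EE` is a multiple of `∏_{k=1}^j (x₁ - θ_k)`. -/
theorem EE_eq (hq : QGood q) (hx : IsBox q d x) {j : ℕ} (hj : j ≤ d) {u : V} (hu : u ∈ Fl q d x 0 (j + 1)) :
    aeval (x 1) (pr (fun k => th q d (k + 1)) j) u = cc q d j • EE q d x u := by
  rw [Fl_eq hq hx] at hu
  have h1 : aeval (x 1) (pr (fun k => th q d (k + 1)) j) u ∈ eigenspace (x 1) (th q d 0) := by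
    rw [mem_KA, pr_succ', map_mul, Module.End.mul_apply, aeval_X_sub] at hu
    rw [mem_eigenspace_iff]; exact sub_eq_zero.mp hu
  have h2 : pr (fun k => th q d (k + 1)) d = pr (fun k => th q d (k + 1 + j)) (d - j) *
      pr (fun k => th q d (k + 1)) j := by
    rw [pr, pr, pr, mul_comm, ← Finset.prod_range_mul_prod_Ico _ hj, Finset.prod_Ico_eq_prod_range]
    congr 1
    refine Finset.prod_congr rfl fun k _ => ?_
    rw [show j + k + 1 = k + 1 + j by ring]
  have h3 : cc q d d = cc q d j * (pr (fun k => th q d (k + 1 + j)) (d - j)).eval (th q d 0) := by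
    have := congrArg (eval (th q d 0)) h2
    rw [eval_mul, pr_eval, pr_eval] at this
    rw [cc, this, mul_comm, pr_eval, pr_eval, cc]
  have h4 : EE q d x u = (cc q d d)⁻¹ • aeval (x 1) (pr (fun k => th q d (k + 1)) d) u := by
    rw [EE, ePol, map_mul, aeval_C, Module.End.mul_apply, Module.algebraMap_end_apply, cc]
  rw [h4, h2, map_mul, Module.End.mul_apply, aeval_eig h1, smul_smul, smul_smul]
  have h5 := cc_ne hq d d
  rw [h3] at h5 ⊢
  rw [mul_right_comm, mul_inv_cancel₀ h5, one_smul]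

theorem newt_zero (hx : IsBox q d x) {j : ℕ} (hj : d < j) : aeval (x 3) (pr (lam q d) j) = 0 := by
  have := KA_top hx 3 (k := j) hj
  rwa [KA, LinearMap.ker_eq_top] at this

theorem Tt_zero (hx : IsBox q d x) {j : ℕ} (hj : d < j) : Tt q d x j = 0 := by
  rw [Tt, newt_zero hx hj, mul_zero, smul_zero]

theorem Tt_mem (hx : IsBox q d x) (j : ℕ) (v : V) : Tt q d x j v ∈ eigenspace (x 1) (th q d 0) :=
  Submodule.smul_mem _ _ (EE_mem hx _)

theorem Tt_zero_apply (hq : QGood q) {v : V} (hv : v ∈ eigenspace (x 1) (th q d 0)) :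
    Tt q d x 0 v = v := by
  simp [Tt, pr_zero, cc, EE_of_eig hq hv]

theorem tc_ne (hq : QGood q) (d j : ℕ) : (((q - q⁻¹) ^ 2) ^ j)⁻¹ * cc q d j ≠ 0 :=
  mul_ne_zero (inv_ne_zero (pow_ne_zero _ (pow_ne_zero _ hq.c0_ne))) (cc_ne hq d j)

/-- Subspaces stable under all `T_j` are stable under all `EE ∘ x₃^j`. -/
theorem stable_of_Tt (hq : QGood q) {X : Submodule F V} (h : ∀ j, ∀ u ∈ X, Tt q d x j u ∈ X) (p : F[X]) :
    ∀ u ∈ X, EE q d x (aeval (x 3) p u) ∈ X := by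
  have hn : ∀ j, ∀ u ∈ X, EE q d x (aeval (x 3) (pr (lam q d) j) u) ∈ X := by
    intro j u hu
    have := X.smul_mem (((((q - q⁻¹) ^ 2) ^ j)⁻¹ * cc q d j)⁻¹) (h j u hu)
    rwa [Tt, LinearMap.smul_apply, smul_smul, inv_mul_cancel₀ (tc_ne hq d j), one_smul,
      Module.End.mul_apply] at this
  have key : ∀ n : ℕ, ∀ p : F[X], p.natDegree < n → ∀ u ∈ X, EE q d x (aeval (x 3) p u) ∈ X := by
    intro n
    induction n with
    | zero => intro p hp; omega
    | succ n ih =>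
      intro p hp u hu
      have hlt : (p - C (p.coeff n) * pr (lam q d) n).degree < n := by
        rw [degree_lt_iff_coeff_zero]
        intro m hm
        rcases eq_or_lt_of_le hm with rfl | hm
        · have : (pr (lam q d) n).coeff n = 1 := by
            have := monic_pr (lam q d) n
            rwa [Monic, leadingCoeff, natDegree_pr] at this
          simp [this]
        · have h1 : p.coeff m = 0 := coeff_eq_zero_of_natDegree_lt (by omega)
          have h2 : (pr (lam q d) n).coeff m = 0 :=
            coeff_eq_zero_of_natDegree_lt (by rw [natDegree_pr]; exact hm)
          rw [coeff_sub, coeff_C_mul, h1, h2, mul_zero, sub_zero]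
      have hp' : p = (p - C (p.coeff n) * pr (lam q d) n) + C (p.coeff n) * pr (lam q d) n := by ring
      rw [hp', map_add, LinearMap.add_apply, map_add]
      refine add_mem ?_ ?_
      · rcases Nat.eq_zero_or_pos n with rfl | hn0
        · have : p - C (p.coeff 0) * pr (lam q d) 0 = 0 := by
            rw [← degree_eq_bot]
            exact Nat.WithBot.lt_zero_iff.mp hlt
          rw [this]; simp
        · refine ih _ ?_ u hu
          by_cases h0 : p - C (p.coeff n) * pr (lam q d) n = 0
          · rw [h0]; simpa using hn0
          · exact (natDegree_lt_iff_degree_lt h0).mpr hlt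
      · rw [map_mul, aeval_C, Module.End.mul_apply, Module.algebraMap_end_apply, map_smul]
        exact X.smul_mem _ (hn n u hu)
  exact key _ p (Nat.lt_succ_self _)

/-- Newton interpolation of the polynomial that is `1` at `s 0` and `0` at `s 1, …, s m`. -/
theorem newton_sum {s : ℕ → F} (h : ∀ k, s 0 ≠ s (k + 1)) (m : ℕ) :
    ∑ i ∈ Finset.range (m + 1), C (∏ k ∈ Finset.range i, (s 0 - s (k + 1)))⁻¹ * pr s i =
      C (∏ k ∈ Finset.range m, (s 0 - s (k + 1)))⁻¹ * pr (fun k => s (k + 1)) m := by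
  induction m with
  | zero => simp [pr_zero]
  | succ m ih =>
    rw [Finset.sum_range_succ, ih, pr_succ' s m, pr_succ _ m, Finset.prod_range_succ, mul_inv, C_mul]
    have h1 : (C (s 0 - s (m + 1)) : F[X]) * C (s 0 - s (m + 1))⁻¹ = 1 := by
      rw [← C_mul, mul_inv_cancel₀ (sub_ne_zero.mpr (h m)), C_1]
    rw [C_sub] at h1
    linear_combination -(C (∏ k ∈ Finset.range m, (s 0 - s (k + 1)))⁻¹ * pr (fun k => s (k + 1)) m) * h1

theorem qInt_sq (hq : QGood q) (d k : ℕ) :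
    (lam q d 0 - lam q d (k + 1)) * (th q d 0 - th q d (k + 1)) =
      -(q - q⁻¹) ^ 2 * (qInt F q (k + 1)) ^ 2 := by
  have hc := hq.c0_ne
  have hq0 := hq.ne0
  have e1 : lam q d (k + 1) = lam q d 0 * q ^ (2 * (k + 1)) := by
    rw [lam, lam, ← zpow_natCast, ← zpow_add₀ hq0]; congr 1; push_cast; ring
  have e2 : th q d 0 = th q d (k + 1) * q ^ (2 * (k + 1)) := by
    rw [th, th, ← zpow_natCast, ← zpow_add₀ hq0]; congr 1; push_cast; ring
  have e3 : lam q d 0 * th q d 0 = 1 := lam_mul_th hq d 0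
  have e4 : lam q d 0 * th q d (k + 1) = (q ^ (2 * (k + 1)))⁻¹ := by
    rw [e2, ← mul_assoc] at e3
    exact eq_inv_of_mul_eq_one_left e3
  rw [qInt, div_pow, mul_div_assoc', neg_mul, neg_div, mul_div_cancel_left₀ _ (pow_ne_zero 2 hc), zpow_neg, zpow_natCast]
  rw [sub_mul, mul_sub, mul_sub, e1, e3, mul_right_comm, mul_right_comm _ (q ^ _) (th q d (k+1)), e3, e4]
  have : q ^ (k + 1) ≠ 0 := pow_ne_zero _ hq0
  rw [mul_comm 2, pow_mul]
  field_simp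
  ring

theorem qFact_sq (hq : QGood q) (d i : ℕ) :
    (∏ k ∈ Finset.range i, (lam q d 0 - lam q d (k + 1))) * cc q d i =
      (-1) ^ i * ((q - q⁻¹) ^ 2) ^ i * (qFact F q i) ^ 2 := by
  rw [cc, ← Finset.prod_mul_distrib, qFact, ← Finset.prod_pow]
  simp_rw [qInt_sq hq]
  rw [Finset.prod_mul_distrib, Finset.prod_const, Finset.card_range, ← mul_pow]
  congr 2; ring

theorem qInt_ne (hq : QGood q) (i : ℕ) : qInt F q (i + 1) ≠ 0 := by
  refine div_ne_zero (sub_ne_zero.mpr fun h => ?_) hq.c0_ne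
  have := hq.zpow_inj h; push_cast at this; omega

theorem qFact_ne (hq : QGood q) (i : ℕ) : qFact F q i ≠ 0 :=
  Finset.prod_ne_zero_iff.mpr fun k _ => qInt_ne hq k

/-- The vector `∏_{k=1}^d (x₃ - λ_k)/(λ_0 - λ_k) u` with `λ_k = q^(2k-d)`: the component of `u` in the
`q^(-d)`-eigenspace of `x₃`. -/
def eta (q : F) (d : ℕ) (x : ZMod 4 → Module.End F V) (u : V) : V :=
  aeval (x 3) (C (∏ k ∈ Finset.range d, (lam q d 0 - lam q d (k + 1)))⁻¹ *
    pr (fun k => lam q d (k + 1)) d) u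

/-- The Newton expansion of `eta` turns its projection to the lowest weight space into the value at
`z = 1` of the series `∑ (-1)^i z^i T_i / ([i]_q!)²`. -/
theorem EE_eta (hq : QGood q) (u : V) : EE q d x (eta q d x u) =
    ∑ i ∈ Finset.range (d + 1), ((-1) ^ i / (qFact F q i) ^ 2) • Tt q d x i u := by
  rw [eta, ← newton_sum (fun k h => by have := lam_inj hq d h; omega), map_sum, LinearMap.sum_apply, map_sum]
  refine Finset.sum_congr rfl fun i _ => ?_
  rw [map_mul, aeval_C, Module.End.mul_apply, Module.algebraMap_end_apply, map_smul, Tt,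
    LinearMap.smul_apply, smul_smul, Module.End.mul_apply]
  congr 1
  have h := qFact_sq hq d i
  have h1 := cc_ne hq d i
  have h2 := qFact_ne hq i
  have h3 : ((q - q⁻¹) ^ 2) ^ i ≠ 0 := pow_ne_zero _ (pow_ne_zero _ hq.c0_ne)
  have h4 : (-1 : F) ^ i * (-1) ^ i = 1 := by rw [← mul_pow]; simp
  have h5 : ∏ k ∈ Finset.range i, (lam q d 0 - lam q d (k + 1)) ≠ 0 :=
    Finset.prod_ne_zero_iff.mpr fun k _ => sub_ne_zero.mpr fun h => by have := lam_inj hq d h; omega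
  generalize ((q - q⁻¹) ^ 2) ^ i = c at *
  field_simp
  linear_combination (-(-1) ^ i) * h - c * (qFact F q i) ^ 2 * h4

theorem eta_mem (hx : IsBox q d x) (u : V) : eta q d x u ∈ Fl q d x 3 1 := by
  rw [Fl, KA_one, mem_eigenspace_iff, eta, map_mul, aeval_C, Module.End.mul_apply,
    Module.algebraMap_end_apply, map_smul, smul_comm]
  congr 1
  rw [← sub_eq_zero, ← aeval_X_sub, ← Module.End.mul_apply, ← map_mul, ← pr_succ', hx.ann]; rfl

/-- The kernel of `EE` is `Fl 1 d`. -/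
theorem EE_ker (hq : QGood q) {v : V} : EE q d x v = 0 ↔ v ∈ Fl q d x 1 d := by
  have hpr : pr (fun k => th q d (k + 1)) d = pr (lam q d) d := by
    rw [pr, pr, ← Finset.prod_range_reflect]
    refine Finset.prod_congr rfl fun k hk => ?_
    rw [Finset.mem_range] at hk
    rw [th_eq_lam q d (by omega)]; congr 3; omega
  rw [EE, ePol, hpr, map_mul, aeval_C, Module.End.mul_apply, Module.algebraMap_end_apply,
    smul_eq_zero_iff_right (inv_ne_zero (kap_ne hq d d))]
  rfl

end BoxProof

end

/-! ### `U_q(L(sl₂))`-modules as `□_q`-modules -/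

section

namespace BoxProof
open Polynomial Module.End
open scoped BigOperators

variable {F : Type} [Field F] {V : Type} [AddCommGroup V] [Module F V] {q : F} {d : ℕ}
  {K k e0p e0m e1p e1m : Module.End F V}

/-- Operators defining a `U_q(L(sl₂))`-module whose weights lie in `{q^(2n-d) : 0 ≤ n ≤ d}`. -/
structure IsUqMod (q : F) (d : ℕ) (K k e0p e0m e1p e1m : Module.End F V) : Prop where
  uq : IsUq q K k e0p e0m e1p e1m
  ann : aeval K (pr (lam q d) (d + 1)) = 0

theorem end_apply {f g : Module.End F V} (h : f = g) (v : V) : f v = g v := by rw [h]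

theorem raise_mem {c : F} {X : Module.End F V} (h : K * X = c • (X * K)) {μ : F} {v : V}
    (hv : v ∈ eigenspace K μ) : X v ∈ eigenspace K (c * μ) := by
  rw [mem_eigenspace_iff] at *
  have := end_apply h v
  simp only [Module.End.mul_apply, LinearMap.smul_apply, hv, map_smul] at this
  rw [this, smul_smul]

theorem lower_comm (hq : QGood q) {X : Module.End F V} (h : X * K = q ^ 2 • (K * X)) :
    K * X = (q ^ 2)⁻¹ • (X * K) := by
  rw [h, smul_smul, inv_mul_cancel₀ (pow_ne_zero 2 hq.ne0), one_smul]

theorem weight_bot (hq : QGood q) (ha : aeval K (pr (lam q d) (d + 1)) = 0) {m : ℤ}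
    (hm : ∀ n : ℕ, n ≤ d → m ≠ 2 * n - d) {v : V} (hv : v ∈ eigenspace K (q ^ m)) : v = 0 := by
  have h1 := aeval_eig hv (pr (lam q d) (d + 1))
  rw [ha, LinearMap.zero_apply, pr_eval] at h1
  refine (smul_eq_zero.mp h1.symm).resolve_left (Finset.prod_ne_zero_iff.mpr fun n hn => ?_)
  rw [Finset.mem_range] at hn
  refine sub_ne_zero.mpr fun he => ?_
  exact hm n (by omega) (hq.zpow_inj he)

/-- A lowering operator lowers the flag of `K`. -/
theorem lower_KA (hq : QGood q) (ha : aeval K (pr (lam q d) (d + 1)) = 0) {X : Module.End F V}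
    (h : X * K = q ^ 2 • (K * X)) (j : ℕ) : ∀ w ∈ KA (lam q d) K (j + 1), X w ∈ KA (lam q d) K j := by
  have hX := lower_comm hq h
  induction j with
  | zero =>
    intro w hw
    rw [zero_add, KA_one] at hw
    have h1 := raise_mem hX hw
    have e : (q ^ 2)⁻¹ * lam q d 0 = q ^ (-2 - (d : ℤ)) := by
      rw [lam, ← zpow_natCast, ← zpow_neg, ← zpow_add₀ hq.ne0]; congr 1; push_cast; ring
    rw [e] at h1
    rw [weight_bot hq ha (fun n _ => by omega) h1]; exact zero_mem _
  | succ j ih =>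
    intro w hw
    rw [mem_KA_succ] at hw ⊢
    have h1 := (KA (lam q d) K j).smul_mem ((q ^ 2)⁻¹) (ih _ hw)
    have h2 := end_apply hX w
    simp only [Module.End.mul_apply, LinearMap.smul_apply] at h2
    rw [map_sub, map_smul, smul_sub, ← h2, smul_smul, lam_succ hq, ← mul_assoc,
      inv_mul_cancel₀ (pow_ne_zero 2 hq.ne0), one_mul] at h1
    exact h1

theorem raise_KA (hq : QGood q) (ha : aeval K (pr (lam q d) (d + 1)) = 0) {X : Module.End F V}
    (h : K * X = q ^ 2 • (X * K)) (j : ℕ) : ∀ w ∈ KA (th q d) K (j + 1), X w ∈ KA (th q d) K j := by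
  induction j with
  | zero =>
    intro w hw
    rw [zero_add, KA_one] at hw
    have h1 := raise_mem h hw
    have e : q ^ 2 * th q d 0 = q ^ ((d : ℤ) + 2) := by
      rw [th, ← zpow_natCast, ← zpow_add₀ hq.ne0]; congr 1; push_cast; ring
    rw [e] at h1
    rw [weight_bot hq ha (fun n hn => by omega) h1]; exact zero_mem _
  | succ j ih =>
    intro w hw
    rw [mem_KA_succ] at hw ⊢
    have h1 := (KA (th q d) K j).smul_mem (q ^ 2) (ih _ hw)
    have h2 := end_apply h w
    simp only [Module.End.mul_apply, LinearMap.smul_apply] at h2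
    rw [map_sub, map_smul, smul_sub, ← h2, smul_smul, th_succ hq] at h1
    exact h1

theorem k_eig (kK : k * K = 1) {μ ν : F} (h : μ * ν = 1) {v : V} (hv : v ∈ eigenspace K μ) :
    k v = ν • v := by
  have h1 := end_apply kK v
  rw [Module.End.mul_apply, mem_eigenspace_iff.mp hv, map_smul, Module.End.one_apply] at h1
  rw [← one_smul F (k v), ← h, mul_comm, mul_smul, h1]

namespace IsUqMod

theorem inv_KA (h : IsUqMod q d K k e0p e0m e1p e1m) (hq : QGood q) (s : ℕ → F) (hs : ∀ n, s n ≠ 0) (j : ℕ) :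
    ∀ v ∈ KA s K j, k v ∈ KA s K j := by
  intro v hv
  rw [mem_KA] at *
  have hc : Commute k K := by rw [Commute, SemiconjBy, h.uq.Kk, h.uq.kK]
  have : k * aeval K (pr s j) = aeval K (pr s j) * k := by
    induction (pr s j) using Polynomial.induction_on' with
    | add p r hp hr => rw [map_add, mul_add, add_mul, hp, hr]
    | monomial n a =>
      rw [aeval_monomial]
      exact (Commute.mul_right (Algebra.commutes a k).symm (hc.pow_right n))
  rw [← Module.End.mul_apply, ← this, Module.End.mul_apply, hv, map_zero]

theorem isBox (h : IsUqMod q d K k e0p e0m e1p e1m) (hq : QGood q) :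
    IsBox q d (bxOf q K k e0p e0m e1p e1m) := by
  have hb := (isUq_iff hq h.uq.Kk h.uq.kK h.uq.p0 h.uq.m0 h.uq.p1 h.uq.m1).mp h.uq
  have htop : KA (lam q d) K (d + 1) = ⊤ := by rw [KA, h.ann, LinearMap.ker_zero]
  have htop' : KA (th q d) K (d + 1) = ⊤ := by rw [KA, pr_th_top, h.ann, LinearMap.ker_zero]
  have low : ∀ {X : Module.End F V}, X * K = q ^ 2 • (K * X) → ∀ j, ∀ v ∈ eigenspace K (lam q d j),
      X v ∈ KA (lam q d) K j := fun hX j v hv => lower_KA hq h.ann hX j v (eig_le_KA (Nat.lt_succ_self j) hv)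
  have rai : ∀ {X : Module.End F V}, K * X = q ^ 2 • (X * K) → ∀ j, ∀ v ∈ eigenspace K (th q d j),
      X v ∈ KA (th q d) K j := fun hX j v hv => raise_KA hq h.ann hX j v (eig_le_KA (Nat.lt_succ_self j) hv)
  have a0 : aeval (bxOf q K k e0p e0m e1p e1m 0) (pr (lam q d) (d + 1)) = 0 := by
    rw [← LinearMap.ker_eq_top, eq_top_iff, ← htop]
    refine KA_le_of_step (lam_injOn hq d) (fun j _ v hv => ?_) (d + 1) le_rfl
    have : bxOf q K k e0p e0m e1p e1m 0 v - lam q d j • v = (q * (q - q⁻¹)) • K (e0m v) := by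
      rw [← mem_eigenspace_iff.mp hv]; simp [bxOf]
    rw [this]
    exact Submodule.smul_mem _ _ (KA_inv (low h.uq.m0 j v hv))
  have a1 : aeval (bxOf q K k e0p e0m e1p e1m 1) (pr (th q d) (d + 1)) = 0 := by
    rw [← LinearMap.ker_eq_top, eq_top_iff, ← htop]
    refine KA_le_of_step (lam_injOn hq d) (fun j _ v hv => ?_) (d + 1) le_rfl
    have : bxOf q K k e0p e0m e1p e1m 1 v - th q d j • v = (-(q - q⁻¹)) • (e1p v) := by
      rw [← k_eig h.uq.kK (lam_mul_th hq d j) hv]; simp [bxOf]; rw [← neg_smul, neg_sub]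
    rw [this]
    exact Submodule.smul_mem _ _ (low h.uq.p1 j v hv)
  have a2 : aeval (bxOf q K k e0p e0m e1p e1m 2) (pr (lam q d) (d + 1)) = 0 := by
    rw [← LinearMap.ker_eq_top, eq_top_iff, ← htop']
    refine KA_le_of_step (th_injOn hq d) (fun j _ v hv => ?_) (d + 1) le_rfl
    have : bxOf q K k e0p e0m e1p e1m 2 v - lam q d j • v = (q * (q - q⁻¹)) • k (e1m v) := by
      rw [← k_eig h.uq.kK (th_mul_lam hq d j) hv]; simp [bxOf]
    rw [this]
    exact Submodule.smul_mem _ _ (h.inv_KA hq _ (th_ne hq d) _ _ (rai h.uq.m1 j v hv))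
  have a3 : aeval (bxOf q K k e0p e0m e1p e1m 3) (pr (th q d) (d + 1)) = 0 := by
    rw [← LinearMap.ker_eq_top, eq_top_iff, ← htop']
    refine KA_le_of_step (th_injOn hq d) (fun j _ v hv => ?_) (d + 1) le_rfl
    have : bxOf q K k e0p e0m e1p e1m 3 v - th q d j • v = (-(q - q⁻¹)) • (e0p v) := by
      rw [← mem_eigenspace_iff.mp hv]; simp [bxOf]; rw [← neg_smul, neg_sub]
    rw [this]
    exact Submodule.smul_mem _ _ (rai h.uq.p0 j v hv)
  rw [pr_th_top] at a1 a3
  refine ⟨hb.1, hb.2, fun i => ?_⟩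
  fin_cases i
  exacts [a0, a1, a2, a3]

/-- The lowest weight space is an eigenspace of `x₀`. -/
theorem eig0 (h : IsUqMod q d K k e0p e0m e1p e1m) (hq : QGood q) :
    eigenspace K (lam q d 0) = Fl q d (bxOf q K k e0p e0m e1p e1m) 0 1 := by
  have htop : KA (lam q d) K (d + 1) = ⊤ := by rw [KA, h.ann, LinearMap.ker_zero]
  have hx : ∀ v, bxOf q K k e0p e0m e1p e1m 0 v = K v + (q * (q - q⁻¹)) • K (e0m v) := by
    intro v; simp [bxOf]
  rw [Fl, KA_one]
  apply le_antisymm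
  · intro v hv
    have := lower_KA hq h.ann h.uq.m0 0 v (by rwa [KA_one])
    rw [KA_zero, Submodule.mem_bot] at this
    rw [mem_eigenspace_iff] at *
    rw [hx, this, hv]; simp
  · intro v hv
    rw [mem_eigenspace_iff, hx] at hv
    have key : ∀ j ≤ d, v ∈ KA (lam q d) K (j + 1) → v ∈ KA (lam q d) K 1 := by
      intro j
      induction j with
      | zero => intro _ hv; exact hv
      | succ j ih =>
        intro hj hv1
        refine ih (by omega) ?_
        have h1 := mem_KA_succ.mp hv1
        have h2 := KA_inv (lower_KA hq h.ann h.uq.m0 (j + 1) v hv1)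
        have h3 := add_mem h1 (Submodule.smul_mem _ (q * (q - q⁻¹)) h2)
        have h4 : K v - lam q d (j + 1) • v + (q * (q - q⁻¹)) • K (e0m v) =
            (lam q d 0 - lam q d (j + 1)) • v := by rw [sub_smul, ← hv]; abel
        rw [h4] at h3
        have hne : lam q d 0 - lam q d (j + 1) ≠ 0 :=
          sub_ne_zero.mpr fun e => by have := lam_inj hq d e; omega
        have := Submodule.smul_mem _ (lam q d 0 - lam q d (j + 1))⁻¹ h3
        rwa [smul_smul, inv_mul_cancel₀ hne, one_smul] at this
    rw [← KA_one]
    exact key d le_rfl (by rw [htop]; trivial)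

theorem eig1 (h : IsUqMod q d K k e0p e0m e1p e1m) (hq : QGood q) :
    eigenspace K (lam q d 0) = eigenspace (bxOf q K k e0p e0m e1p e1m 1) (th q d 0) := by
  rw [h.eig0 hq, Fl_eq hq (h.isBox hq), KA_one, zero_add]

/-- Rescaling `e₀^±` by `z^{±1}` gives another module. -/
theorem twist (h : IsUqMod q d K k e0p e0m e1p e1m) {z : F} (hz : z ≠ 0) :
    IsUqMod q d K k (z • e0p) (z⁻¹ • e0m) e1p e1m := by
  have hz' := inv_ne_zero hz
  have h := h
  obtain ⟨u, ha⟩ := h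
  refine ⟨⟨u.Kk, u.kK, ?_, ?_, u.p1, u.m1, ?_, u.h1, ?_, ?_, ?_, ?_, ?_, ?_⟩, ha⟩
  · rw [mul_smul_comm, u.p0, smul_mul_assoc, smul_comm]
  · rw [smul_mul_assoc, u.m0, mul_smul_comm, smul_comm]
  · rw [smul_mul_smul_comm, smul_mul_smul_comm, mul_inv_cancel₀ hz, inv_mul_cancel₀ hz, one_smul, one_smul, u.h0]
  · rw [smul_mul_assoc, u.pm, mul_smul_comm]
  · rw [smul_mul_assoc, u.mp, mul_smul_comm]
  · have := (Serre.smul_iff (q := q) hz one_ne_zero).mpr u.s01p; rwa [one_smul] at this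
  · have := (Serre.smul_iff (q := q) one_ne_zero hz).mpr u.s10p; rwa [one_smul] at this
  · have := (Serre.smul_iff (q := q) hz' one_ne_zero).mpr u.s01m; rwa [one_smul] at this
  · have := (Serre.smul_iff (q := q) one_ne_zero hz').mpr u.s10m; rwa [one_smul] at this

theorem e0p_mem (h : IsUqMod q d K k e0p e0m e1p e1m) (hq : QGood q) {v : V}
    (hv : v ∈ eigenspace K (lam q d 0)) (j : ℕ) : (e0p ^ j) v ∈ eigenspace K (lam q d j) := by
  induction j with
  | zero => simpa using hv
  | succ j ih =>
    rw [pow_succ', Module.End.mul_apply, lam_succ hq]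
    exact raise_mem h.uq.p0 ih

theorem newt_eq (h : IsUqMod q d K k e0p e0m e1p e1m) (hq : QGood q) {v : V}
    (hv : v ∈ eigenspace K (lam q d 0)) (j : ℕ) :
    aeval (bxOf q K k e0p e0m e1p e1m 3) (pr (lam q d) j) v = (-(q - q⁻¹)) ^ j • (e0p ^ j) v := by
  induction j with
  | zero => simp [pr_zero]
  | succ j ih =>
    rw [pr_succ, mul_comm, map_mul, Module.End.mul_apply, ih, aeval_X_sub, map_smul, smul_comm (lam q d j),
      ← smul_sub, ← mem_eigenspace_iff.mp (h.e0p_mem hq hv j), pow_succ, mul_smul, pow_succ' e0p,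
      Module.End.mul_apply]
    congr 1
    simp [bxOf]
    rw [← neg_smul, neg_sub]

theorem M_eq (h : IsUqMod q d K k e0p e0m e1p e1m) (hq : QGood q) (j : ℕ) : ∀ u ∈ eigenspace K (lam q d j),
    aeval (bxOf q K k e0p e0m e1p e1m 1) (pr (fun k => th q d (k + 1)) j) u =
      (-(q - q⁻¹)) ^ j • (e1p ^ j) u := by
  induction j with
  | zero => intro u _; simp [pr_zero]
  | succ j ih =>
    intro u hu
    have h1 : aeval (bxOf q K k e0p e0m e1p e1m 1) (X - C (th q d (j + 1))) u =
        (-(q - q⁻¹)) • e1p u := by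
      rw [aeval_X_sub, ← k_eig h.uq.kK (lam_mul_th hq d (j + 1)) hu]; simp [bxOf]
      rw [← neg_smul, neg_sub]
    have h2 : e1p u ∈ eigenspace K (lam q d j) := by
      have := raise_mem (lower_comm hq h.uq.p1) hu
      rwa [lam_succ hq, ← mul_assoc, inv_mul_cancel₀ (pow_ne_zero 2 hq.ne0), one_mul] at this
    rw [pr_succ, map_mul, Module.End.mul_apply, h1, map_smul, ih _ h2, smul_smul, pow_succ',
      pow_succ e1p, Module.End.mul_apply]

/-- `(e₁⁺)^j (e₀⁺)^j` agrees with `T_j` on the lowest weight space. -/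
theorem Tt_eq (h : IsUqMod q d K k e0p e0m e1p e1m) (hq : QGood q) {v : V}
    (hv : v ∈ eigenspace K (lam q d 0)) (j : ℕ) :
    Tt q d (bxOf q K k e0p e0m e1p e1m) j v = (e1p ^ j) ((e0p ^ j) v) := by
  have hx := h.isBox hq
  have hc := hq.c0_ne
  rcases Nat.lt_or_ge d j with hj | hj
  · rw [Tt_zero hx hj]
    have h1 := h.newt_eq hq hv j
    rw [newt_zero hx hj] at h1
    have h2 := (smul_eq_zero.mp h1.symm).resolve_left (pow_ne_zero _ (neg_ne_zero.mpr hc))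
    rw [h2, map_zero]; rfl
  · have hv' : v ∈ Fl q d (bxOf q K k e0p e0m e1p e1m) 0 1 := by rw [← h.eig0 hq]; exact hv
    have h1 := newt_mem hq hx (j := j) hv'
    rw [add_comm] at h1
    have h2 := EE_eq hq hx hj h1
    rw [h.newt_eq hq hv j, map_smul, h.M_eq hq j _ (h.e0p_mem hq hv j), smul_smul] at h2
    rw [Tt, LinearMap.smul_apply, Module.End.mul_apply, mul_smul, h.newt_eq hq hv j, ← h2, smul_smul,
      ← mul_pow, neg_mul_neg, ← pow_two, inv_mul_cancel₀ (pow_ne_zero _ (pow_ne_zero 2 hc)), one_smul]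

end IsUqMod

end BoxProof

end

/-! ### Extending a `□_q`-action to `U_q(L(sl₂))` -/

section

namespace BoxProof
open Polynomial Module.End
open scoped BigOperators

variable {F : Type} [Field F] {V : Type} [AddCommGroup V] [Module F V] {q : F} {d : ℕ}
  {x : ZMod 4 → Module.End F V}

/-- The weight spaces `Fl 0 (n+1) ∩ Fl 2 (d+1-n)`; these become the eigenspaces of `K₀`. -/
def Wt (q : F) (d : ℕ) (x : ZMod 4 → Module.End F V) (n : ℕ) : Submodule F V :=
  Fl q d x 0 (n + 1) ⊓ Fl q d x 2 (d + 1 - n)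

theorem Wt_big {n : ℕ} (hn : d + 1 ≤ n) {v : V} (hv : v ∈ Wt q d x n) : v = 0 := by
  have := hv.2
  rw [Nat.sub_eq_zero_of_le hn, Fl_zero] at this
  exact this

theorem Wt_x0 (hq : QGood q) (hx : IsBox q d x) {n : ℕ} {v : V} (hv : v ∈ Wt q d x (n + 1)) :
    x 0 v - lam q d (n + 1) • v ∈ Wt q d x n := by
  rcases Nat.lt_or_ge d (n + 1) with hn | hn
  · rw [Wt_big hn hv]; simp
  refine ⟨Fl_low0 0 hv.1, sub_mem ?_ (Submodule.smul_mem _ _ (Fl_mono 2 (by omega) hv.2))⟩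
  have := Fl_raise2 hq hx 2 hv.2
  rwa [show d + 1 - (n + 1) + 1 = d + 1 - n by omega] at this

theorem Wt_x0' {v : V} (hv : v ∈ Wt q d x 0) :
    x 0 v - lam q d 0 • v = 0 := by
  have := Fl_low0 0 hv.1
  rwa [Fl_zero] at this

theorem Wt_x1 (hq : QGood q) (hx : IsBox q d x) {n : ℕ} {v : V} (hv : v ∈ Wt q d x (n + 1)) :
    x 1 v - th q d (n + 1) • v ∈ Wt q d x n := by
  rcases Nat.lt_or_ge d (n + 1) with hn | hn
  · rw [Wt_big hn hv]; simp
  refine ⟨Fl_low1 hq hx 0 hv.1, sub_mem ?_ (Submodule.smul_mem _ _ (Fl_mono 2 (by omega) hv.2))⟩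
  have := Fl_raise3' hq hx 2 hv.2
  rwa [show d + 1 - (n + 1) + 1 = d + 1 - n by omega] at this

theorem Wt_x1' (hq : QGood q) (hx : IsBox q d x) {v : V} (hv : v ∈ Wt q d x 0) :
    x 1 v - th q d 0 • v = 0 := by
  have := Fl_low1 hq hx 0 hv.1
  rwa [Fl_zero] at this

theorem Wt_x2 (hq : QGood q) (hx : IsBox q d x) {n : ℕ} {v : V} (hv : v ∈ Wt q d x n) :
    x 2 v - th q d n • v ∈ Wt q d x (n + 1) := by
  rcases Nat.lt_or_ge d n with hn | hn
  · rw [Wt_big hn hv]; simp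
  refine ⟨sub_mem (Fl_raise2 hq hx 0 hv.1) (Submodule.smul_mem _ _ (Fl_mono 0 (by omega) hv.1)), ?_⟩
  have h2 := hv.2
  rw [show d + 1 - n = (d - n) + 1 by omega] at h2
  have := Fl_low0 2 h2
  rwa [← th_eq_lam q d hn, show d - n = d + 1 - (n + 1) by omega] at this

theorem Wt_x3 (hq : QGood q) (hx : IsBox q d x) {n : ℕ} {v : V} (hv : v ∈ Wt q d x n) :
    x 3 v - lam q d n • v ∈ Wt q d x (n + 1) := by
  rcases Nat.lt_or_ge d n with hn | hn
  · rw [Wt_big hn hv]; simp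
  refine ⟨sub_mem (Fl_raise3' hq hx 0 hv.1) (Submodule.smul_mem _ _ (Fl_mono 0 (by omega) hv.1)), ?_⟩
  have h2 := hv.2
  rw [show d + 1 - n = (d - n) + 1 by omega] at h2
  have := Fl_low1 hq hx 2 h2
  rwa [← lam_eq_th q d hn, show d - n = d + 1 - (n + 1) by omega] at this

/-- Two operators agreeing on all weight spaces agree. -/
theorem Wt_ext (hx : IsBox q d x) (hopp : ∀ j k, j + k = d + 1 → IsCompl (Fl q d x 0 j) (Fl q d x 2 k))
    {f g : Module.End F V} (h : ∀ n ≤ d, ∀ v ∈ Wt q d x n, f v = g v) : f = g := by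
  have key : ∀ k ≤ d + 1, ∀ v ∈ Fl q d x 0 k, f v = g v := by
    intro k
    induction k with
    | zero => intro _ v hv; rw [Fl_zero, Submodule.mem_bot] at hv; rw [hv, map_zero, map_zero]
    | succ k ih =>
      intro hk v hv
      have hc := (hopp k (d + 1 - k) (by omega)).sup_eq_top
      obtain ⟨a, ha, b, hb, rfl⟩ := Submodule.mem_sup.mp (hc ▸ Submodule.mem_top : v ∈ Fl q d x 0 k ⊔ Fl q d x 2 (d + 1 - k))
      have hb' : b ∈ Wt q d x k := by
        refine ⟨?_, hb⟩
        have := sub_mem hv (Fl_mono 0 (Nat.le_succ k) ha)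
        rwa [add_sub_cancel_left] at this
      rw [map_add, map_add, ih (by omega) a ha, h k (by omega) b hb']
  ext v
  exact key (d + 1) le_rfl v (by rw [Fl_top hx 0 le_rfl]; trivial)

theorem exists_proj {A B : Submodule F V} (h : IsCompl A B) :
    ∃ P : Module.End F V, (∀ v ∈ A, P v = v) ∧ ∀ v ∈ B, P v = 0 := by
  refine ⟨A.subtype ∘ₗ Submodule.projectionOnto A B h, fun v hv => ?_, fun v hv => ?_⟩
  · have := Submodule.projectionOnto_apply_left h ⟨v, hv⟩
    simp only [LinearMap.comp_apply] 
    rw [this]; rfl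
  · have := Submodule.projectionOnto_apply_right h ⟨v, hv⟩
    simp only [LinearMap.comp_apply] 
    rw [this]; rfl

/-- An operator with prescribed eigenvalues on the weight spaces. -/
theorem exists_diag
    (hopp : ∀ j k, j + k = d + 1 → IsCompl (Fl q d x 0 j) (Fl q d x 2 k)) (μ : ℕ → F) :
    ∃ K : Module.End F V, ∀ n, ∀ v ∈ Wt q d x n, K v = μ n • v := by
  have hP : ∀ j, ∃ P : Module.End F V, j ≤ d + 1 →
      (∀ v ∈ Fl q d x 0 j, P v = v) ∧ ∀ v ∈ Fl q d x 2 (d + 1 - j), P v = 0 := by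
    intro j
    rcases Nat.lt_or_ge (d + 1) j with hj | hj
    · exact ⟨0, fun h => by omega⟩
    · obtain ⟨P, h⟩ := exists_proj (hopp j (d + 1 - j) (by omega))
      exact ⟨P, fun _ => h⟩
  choose P hP using hP
  refine ⟨∑ m ∈ Finset.range (d + 1), μ m • (P (m + 1) - P m), fun n v hv => ?_⟩
  rcases Nat.lt_or_ge d n with hn | hn
  · rw [Wt_big hn hv]; simp
  have h1 : ∀ j ≤ d + 1, P j v = if n < j then v else 0 := by
    intro j hj
    split_ifs with h
    · exact (hP j hj).1 v (Fl_mono 0 h hv.1)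
    · exact (hP j hj).2 v (Fl_mono 2 (by omega) hv.2)
  rw [LinearMap.sum_apply, Finset.sum_eq_single n]
  · simp [h1 n (by omega), h1 (n + 1) (by omega)]
  · intro m hm hmn
    rw [Finset.mem_range] at hm
    simp only [LinearMap.smul_apply, LinearMap.sub_apply, h1 m (by omega), h1 (m + 1) (by omega)]
    rcases Nat.lt_or_gt_of_ne hmn with h | h
    · rw [if_neg (by omega), if_neg (by omega)]; simp
    · rw [if_pos (by omega), if_pos (by omega)]; simp
  · intro h; exact absurd (Finset.mem_range.mpr (by omega)) h

/-- When the flags `Fl 0` and `Fl 2` are opposite, the action of `□_q` extends to an action of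
`U_q(L(sl₂))`: `K₀` is the operator acting as `q^(2n-d)` on `Wt n`, and the `e_i^±` are then solved for
from the formulas for the `x i`. -/
theorem exists_uq (hq : QGood q) (hx : IsBox q d x)
    (hopp : ∀ j k, j + k = d + 1 → IsCompl (Fl q d x 0 j) (Fl q d x 2 k)) :
    ∃ K k e0p e0m e1p e1m : Module.End F V, IsUqMod q d K k e0p e0m e1p e1m ∧
      bxOf q K k e0p e0m e1p e1m = x ∧ ∀ n, Wt q d x n ≤ eigenspace K (lam q d n) := by
  have hq0 := hq.ne0
  have hc := hq.c0_ne
  obtain ⟨K, hK⟩ := exists_diag hopp (lam q d)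
  obtain ⟨k, hk⟩ := exists_diag hopp (th q d)
  have ext := fun {f g} => Wt_ext (f := f) (g := g) hx hopp
  have Kk : K * k = 1 := ext fun n _ v hv => by
    rw [Module.End.mul_apply, hk n v hv, map_smul, hK n v hv, smul_smul, th_mul_lam hq, one_smul]; rfl
  have kK : k * K = 1 := ext fun n _ v hv => by
    rw [Module.End.mul_apply, hK n v hv, map_smul, hk n v hv, smul_smul, lam_mul_th hq, one_smul]; rfl
  have up : ∀ X : Module.End F V, (∀ n, ∀ v ∈ Wt q d x n, X v ∈ Wt q d x (n + 1)) →
      K * X = q ^ 2 • (X * K) := fun X hX => ext fun n _ v hv => by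
    rw [Module.End.mul_apply, hK _ _ (hX n v hv), LinearMap.smul_apply, Module.End.mul_apply, hK n v hv, map_smul,
      smul_smul, lam_succ hq]
  have down : ∀ X : Module.End F V, (∀ n, ∀ v ∈ Wt q d x (n + 1), X v ∈ Wt q d x n) →
      (∀ v ∈ Wt q d x 0, X v = 0) → X * K = q ^ 2 • (K * X) := fun X hX hX0 => ext fun n _ v hv => by
    rw [Module.End.mul_apply, LinearMap.smul_apply, Module.End.mul_apply, hK n v hv, map_smul]
    cases n with
    | zero => rw [hX0 v hv]; simp
    | succ n => rw [hK _ _ (hX n v hv), smul_smul, lam_succ hq]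
  have hqc : q * (q - q⁻¹) ≠ 0 := mul_ne_zero hq0 hc
  have p0 := up ((q - q⁻¹)⁻¹ • (K - x 3)) fun n v hv => by
    rw [LinearMap.smul_apply, LinearMap.sub_apply, hK n v hv, ← neg_sub (x 3 v)]
    exact Submodule.smul_mem _ _ (neg_mem (Wt_x3 hq hx hv))
  have m1 := up ((q * (q - q⁻¹))⁻¹ • (K * x 2 - 1)) fun n v hv => by
    have h1 := Wt_x2 hq hx hv
    have h2 := hK _ _ h1
    rw [map_sub, map_smul, hK n v hv, smul_smul, th_mul_lam hq, one_smul] at h2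
    rw [LinearMap.smul_apply, LinearMap.sub_apply, Module.End.mul_apply, Module.End.one_apply, h2]
    exact Submodule.smul_mem _ _ (Submodule.smul_mem _ _ h1)
  have p1 := down ((q - q⁻¹)⁻¹ • (k - x 1)) (fun n v hv => by
    rw [LinearMap.smul_apply, LinearMap.sub_apply, hk _ v hv, ← neg_sub (x 1 v)]
    exact Submodule.smul_mem _ _ (neg_mem (Wt_x1 hq hx hv))) (fun v hv => by
    rw [LinearMap.smul_apply, LinearMap.sub_apply, hk _ v hv, ← neg_sub (x 1 v), Wt_x1' hq hx hv]; simp)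
  have m0 := down ((q * (q - q⁻¹))⁻¹ • (k * x 0 - 1)) (fun n v hv => by
    have h1 := Wt_x0 hq hx hv
    have h2 := hk _ _ h1
    rw [map_sub, map_smul, hk _ v hv, smul_smul, lam_mul_th hq, one_smul] at h2
    rw [LinearMap.smul_apply, LinearMap.sub_apply, Module.End.mul_apply, Module.End.one_apply, h2]
    exact Submodule.smul_mem _ _ (Submodule.smul_mem _ _ h1)) (fun v hv => by
    have h1 := Wt_x0' hv
    rw [LinearMap.smul_apply, LinearMap.sub_apply, Module.End.mul_apply, Module.End.one_apply, sub_eq_zero.mp h1,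
      map_smul, hk _ v hv, smul_smul, lam_mul_th hq, one_smul, sub_self, smul_zero])
  have hb : bxOf q K k ((q - q⁻¹)⁻¹ • (K - x 3)) ((q * (q - q⁻¹))⁻¹ • (k * x 0 - 1))
      ((q - q⁻¹)⁻¹ • (k - x 1)) ((q * (q - q⁻¹))⁻¹ • (K * x 2 - 1)) = x := by
    have b0 : K + (q * (q - q⁻¹)) • (K * ((q * (q - q⁻¹))⁻¹ • (k * x 0 - 1))) = x 0 := by
      rw [mul_smul_comm, smul_smul, mul_inv_cancel₀ hqc, one_smul, mul_sub, ← mul_assoc, Kk, one_mul, mul_one]; abel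
    have b2 : k + (q * (q - q⁻¹)) • (k * ((q * (q - q⁻¹))⁻¹ • (K * x 2 - 1))) = x 2 := by
      rw [mul_smul_comm, smul_smul, mul_inv_cancel₀ hqc, one_smul, mul_sub, ← mul_assoc, kK, one_mul, mul_one]; abel
    have b1 : k - (q - q⁻¹) • ((q - q⁻¹)⁻¹ • (k - x 1)) = x 1 := by
      rw [smul_smul, mul_inv_cancel₀ hc, one_smul]; abel
    have b3 : K - (q - q⁻¹) • ((q - q⁻¹)⁻¹ • (K - x 3)) = x 3 := by
      rw [smul_smul, mul_inv_cancel₀ hc, one_smul]; abel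
    funext i
    fin_cases i
    exacts [b0, b1, b2, b3]
  refine ⟨K, k, _, _, _, _, ⟨(isUq_iff hq Kk kK p0 m0 p1 m1).mpr ?_, ?_⟩, hb,
    fun n v hv => mem_eigenspace_iff.mpr (hK n v hv)⟩
  · rw [hb]; exact ⟨hx.rel1, hx.serre⟩
  · refine ext fun n hn v hv => ?_
    rw [aeval_eig (mem_eigenspace_iff.mpr (hK n v hv)), pr_eval, Finset.prod_eq_zero (Finset.mem_range.mpr (Nat.lt_succ_of_le hn))
      (sub_self _), zero_smul, LinearMap.zero_apply]

end BoxProof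

end

/-! ### Intertwiners, submodules, quotients and rescaling -/

section

namespace BoxProof
open Polynomial Module.End
open scoped BigOperators

variable {F : Type} [Field F] {V : Type} [AddCommGroup V] [Module F V]
  {x : ZMod 4 → Module.End F V} {V' : Type} [AddCommGroup V'] [Module F V']
  {x' : ZMod 4 → Module.End F V'} {g : V →ₗ[F] V'} {q : F} {d : ℕ}

/-- `g` intertwines the operators `x i` and `x' i`. -/
def Intw (g : V →ₗ[F] V') (x : ZMod 4 → Module.End F V) (x' : ZMod 4 → Module.End F V') : Prop :=
  ∀ i v, g (x i v) = x' i (g v)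

theorem Intw.map_aeval (hg : Intw g x x') (i : ZMod 4) (p : F[X]) (v : V) :
    g (aeval (x i) p v) = aeval (x' i) p (g v) := by
  induction p using Polynomial.induction_on' with
  | add p r hp hr => simp only [map_add, LinearMap.add_apply, hp, hr]
  | monomial n a =>
    have : ∀ n v, g ((x i ^ n) v) = (x' i ^ n) (g v) := by
      intro n
      induction n with
      | zero => intro v; rfl
      | succ n ih => intro v; rw [pow_succ, pow_succ, Module.End.mul_apply, Module.End.mul_apply, ih, hg]
    rw [aeval_monomial, aeval_monomial, Module.End.mul_apply, Module.End.mul_apply, Module.algebraMap_end_apply,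
      Module.algebraMap_end_apply, map_smul, this]

theorem Intw.map_EE (hg : Intw g x x') (v : V) : g (EE q d x v) = EE q d x' (g v) := hg.map_aeval _ _ _
theorem Intw.map_eta (hg : Intw g x x') (v : V) : g (eta q d x v) = eta q d x' (g v) := hg.map_aeval _ _ _
theorem Intw.map_Tt (hg : Intw g x x') (j : ℕ) (v : V) : g (Tt q d x j v) = Tt q d x' j (g v) := by
  simp only [Tt, LinearMap.smul_apply, Module.End.mul_apply, map_smul, hg.map_EE, hg.map_aeval]

theorem Intw.map_Fl (hg : Intw g x x') {i : ZMod 4} {k : ℕ} {v : V} (hv : v ∈ Fl q d x i k) :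
    g v ∈ Fl q d x' i k := by
  rw [Fl, mem_KA] at *
  rw [← hg.map_aeval, hv, map_zero]

theorem Intw.mem_Fl (hg : Intw g x x') (hi : Function.Injective g) {i : ZMod 4} {k : ℕ} {v : V} :
    v ∈ Fl q d x i k ↔ g v ∈ Fl q d x' i k := by
  refine ⟨hg.map_Fl, fun hv => ?_⟩
  rw [Fl, mem_KA] at *
  rw [← hg.map_aeval] at hv
  exact hi (by rw [hv, map_zero])

theorem IsBox.of_surj (hx : IsBox q d x) (hg : Intw g x x') (hs : Function.Surjective g) : IsBox q d x' := by
  refine ⟨fun i => ?_, fun i => ?_, fun i => ?_⟩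
  · ext w
    obtain ⟨v, rfl⟩ := hs w
    have := congrArg g (end_apply (hx.rel1 i) v)
    simpa [pow_succ, hg _ _] using this
  · ext w
    obtain ⟨v, rfl⟩ := hs w
    have := congrArg g (end_apply (hx.rel2 i) v)
    simpa [pow_succ, hg _ _] using this
  · ext w
    obtain ⟨v, rfl⟩ := hs w
    rw [← hg.map_aeval, hx.ann, LinearMap.zero_apply, map_zero]; rfl

theorem IsBox.of_inj (hx : IsBox q d x') (hg : Intw g x x') (hi : Function.Injective g) : IsBox q d x := by
  refine ⟨fun i => ?_, fun i => ?_, fun i => ?_⟩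
  · ext v
    apply hi
    have := (end_apply (hx.rel1 i) (g v))
    simpa [pow_succ, hg _ _] using this
  · ext v
    apply hi
    have := (end_apply (hx.rel2 i) (g v))
    simpa [pow_succ, hg _ _] using this
  · ext v
    apply hi
    rw [hg.map_aeval, hx.ann, LinearMap.zero_apply, LinearMap.zero_apply, map_zero]

theorem Intw.comap_inv (hg : Intw g x x') {W : Submodule F V'} (hW : ∀ i, ∀ w ∈ W, x' i w ∈ W) :
    ∀ i, ∀ v ∈ W.comap g, x i v ∈ W.comap g := fun i v hv => by
  rw [Submodule.mem_comap, hg]; exact hW i _ hv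

theorem Intw.map_inv (hg : Intw g x x') {W : Submodule F V} (hW : ∀ i, ∀ w ∈ W, x i w ∈ W) :
    ∀ i, ∀ v ∈ W.map g, x' i v ∈ W.map g := by
  rintro i _ ⟨v, hv, rfl⟩
  exact ⟨x i v, hW i v hv, hg i v⟩

theorem Intw.ker_inv (hg : Intw g x x') : ∀ i, ∀ v ∈ LinearMap.ker g, x i v ∈ LinearMap.ker g := fun i v hv => by
  rw [LinearMap.mem_ker] at *; rw [hg, hv, map_zero]

theorem Intw.range_inv (hg : Intw g x x') : ∀ i, ∀ v ∈ LinearMap.range g, x' i v ∈ LinearMap.range g := by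
  rintro i _ ⟨v, rfl⟩
  exact ⟨x i v, hg i v⟩

/-- The restriction of the operators to an invariant subspace. -/
def resX (x : ZMod 4 → Module.End F V) (Y : Submodule F V) (h : ∀ i, ∀ v ∈ Y, x i v ∈ Y) :
    ZMod 4 → Module.End F Y := fun i => (x i).restrict (h i)

theorem intw_res (Y : Submodule F V) (h : ∀ i, ∀ v ∈ Y, x i v ∈ Y) : Intw Y.subtype (resX x Y h) x :=
  fun _ _ => rfl

/-- The operators induced on the quotient by an invariant subspace. -/
def quoX (x : ZMod 4 → Module.End F V) (N : Submodule F V) (h : ∀ i, ∀ v ∈ N, x i v ∈ N) :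
    ZMod 4 → Module.End F (V ⧸ N) := fun i => N.mapQ N (x i) (h i)

theorem intw_quo (N : Submodule F V) (h : ∀ i, ∀ v ∈ N, x i v ∈ N) : Intw N.mkQ x (quoX x N h) :=
  fun _ _ => rfl

theorem Fl01 (hq : QGood q) (hx : IsBox q d x) : Fl q d x 0 1 = eigenspace (x 1) (th q d 0) := by
  rw [Fl_eq hq hx, KA_one, zero_add]

theorem eta_of_mem (hq : QGood q) {v : V} (hv : v ∈ Fl q d x 3 1) : eta q d x v = v := by
  rw [Fl, KA_one] at hv
  rw [eta, aeval_eig hv, eval_mul, eval_C, pr_eval, inv_mul_cancel₀, one_smul]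
  exact Finset.prod_ne_zero_iff.mpr fun k _ => sub_ne_zero.mpr fun e => by
    have := lam_inj hq d e; omega

/-- `eta v` differs from `v` by an element of the image of `x₃ - q^(-d)`. -/
theorem eta_sub (hq : QGood q) (v : V) : ∃ w, eta q d x v = v + (x 3 w - lam q d 0 • w) := by
  set p := C (∏ k ∈ Finset.range d, (lam q d 0 - lam q d (k + 1)))⁻¹ * pr (fun k => lam q d (k + 1)) d with hp
  have h1 : p.eval (lam q d 0) = 1 := by
    rw [hp, eval_mul, eval_C, pr_eval, inv_mul_cancel₀]
    exact Finset.prod_ne_zero_iff.mpr fun k _ => sub_ne_zero.mpr fun e => by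
      have := lam_inj hq d e; omega
  obtain ⟨r, hr⟩ := X_sub_C_dvd_sub_C_eval (a := lam q d 0) (p := p)
  refine ⟨aeval (x 3) r v, ?_⟩
  rw [h1, C_1] at hr
  rw [eta, ← hp, ← aeval_X_sub, ← Module.End.mul_apply, ← map_mul, ← hr]
  simp

/-- `T_d` is injective on the lowest weight space, for every module. -/
theorem Tt_top (hq : QGood q) (hx : IsBox q d x) {u : V} (hu : u ∈ Fl q d x 0 1)
    (h : Tt q d x d u = 0) : u = 0 := by
  have h1 : EE q d x (aeval (x 3) (pr (lam q d) d) u) = 0 := by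
    rw [Tt, LinearMap.smul_apply] at h
    exact (smul_eq_zero.mp h).resolve_left (tc_ne hq d d)
  rw [EE_ker hq] at h1
  have h2 : aeval (x 3) (pr (lam q d) d) u ∈ Fl q d x 2 1 := by
    rw [Fl_eq hq hx, KA_one, mem_eigenspace_iff, ← sub_eq_zero]
    have := th_eq_lam q d (Nat.zero_le d)
    rw [this, Nat.sub_zero, show (2 : ZMod 4) + 1 = 3 from rfl, ← aeval_X_sub, ← Module.End.mul_apply, ← map_mul, mul_comm, ← pr_succ, hx.ann]
    rfl
  have h3 := (Fl_isCompl hq hx 1 (k := 1) (by omega)).disjoint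
  have h4 := Submodule.disjoint_def.mp h3 _ h2 (by simpa using h1)
  have h5 : u ∈ Fl q d x 3 d := by rw [Fl, mem_KA]; exact h4
  have h6 := (Fl_isCompl hq hx 3 (k := 1) (by omega)).disjoint
  exact Submodule.disjoint_def.mp h6 u hu (by simpa using h5)

theorem gen13_EE (hq : QGood q) (hx : IsBox q d x) {X : Submodule F V} (hX : X ≤ Fl q d x 0 1)
    (h : ∀ j, ∀ u ∈ X, Tt q d x j u ∈ X) : ∀ v ∈ gen13 x X, EE q d x v ∈ X := by
  rw [Fl01 hq hx] at hX
  refine EE_gen13 hq hx hX fun j u hu => ?_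
  have := stable_of_Tt hq h (Polynomial.X ^ j) u hu
  rwa [map_pow, aeval_X] at this

/-- On an irreducible module the `T_j` act irreducibly on the lowest weight space. -/
theorem Tt_irr [FiniteDimensional F V] (hq : QGood q) (hx : IsBox q d x) (hirr : IsIrr x) {X : Submodule F V}
    (hX : X ≤ Fl q d x 0 1) (h0 : X ≠ ⊥)
    (h : ∀ j, ∀ u ∈ X, Tt q d x j u ∈ X) : X = Fl q d x 0 1 := by
  refine le_antisymm hX fun v hv => ?_
  have h1 := gen13_EE hq hx hX h
  rcases hirr.2 (gen13 x X) (fun i v hv => gen13_inv hq hx X i v hv) with h2 | h2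
  · exact absurd (le_bot_iff.mp (h2 ▸ le_gen13 X)) h0
  · have := h1 v (by rw [h2]; trivial)
    rwa [EE_of_eig hq (by rwa [← Fl01 hq hx])] at this

theorem full_succ (hq : QGood q) (hx : IsBox q d x) {i : ZMod 4} :
    (Fl q d x i 1 ≠ ⊥ → Fl q d x (i + 1) d ≠ ⊤) ∧ (Fl q d x i d ≠ ⊤ → Fl q d x (i + 1) 1 ≠ ⊥) := by
  constructor
  · intro h h'
    have := (Fl_isCompl hq hx i (k := d) (by omega)).disjoint
    rw [h', disjoint_comm, disjoint_top, show d + 1 - d = 1 by omega] at this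
    exact h this
  · intro h h'
    have := (Fl_isCompl hq hx i (k := 1) (by omega)).codisjoint
    rw [h', codisjoint_comm, codisjoint_bot, show d + 1 - 1 = d by omega] at this
    exact h this

/-- If the extreme eigenvalues both occur for `x 0`, they occur for every `x i`. -/
theorem full_all (hq : QGood q) (hx : IsBox q d x) (h1 : Fl q d x 0 1 ≠ ⊥) (h2 : Fl q d x 0 d ≠ ⊤) (i : ZMod 4) :
    Fl q d x i 1 ≠ ⊥ ∧ Fl q d x i d ≠ ⊤ := by
  have step : ∀ i, (Fl q d x i 1 ≠ ⊥ ∧ Fl q d x i d ≠ ⊤) → (Fl q d x (i + 1) 1 ≠ ⊥ ∧ Fl q d x (i + 1) d ≠ ⊤) :=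
    fun i h => ⟨(full_succ hq hx).2 h.2, (full_succ hq hx).1 h.1⟩
  have h := And.intro h1 h2
  fin_cases i
  · exact h
  · exact step 0 h
  · exact step 1 (step 0 h)
  · exact step 2 (step 1 (step 0 h))

/-- On an irreducible module of full diameter every eigenvalue `q^(2n-d)` occurs: a gap would split the
module. -/
theorem eig_full (hq : QGood q) (hx : IsBox q d x) (hirr : IsIrr x) (h1 : Fl q d x 0 1 ≠ ⊥)
    (h2 : Fl q d x 0 d ≠ ⊤) (i : ZMod 4) {n : ℕ} (hn : n ≤ d) : eigenspace (x i) (lam q d n) ≠ ⊥ := by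
  obtain ⟨h1, h2⟩ := full_all hq hx h1 h2 i
  intro he
  have hs : Fl q d x i (n + 1) = Fl q d x i n := by
    rw [Fl, KA_succ _ (lam_injOn hq d n hn), he, sup_bot_eq, Fl]
  rcases Nat.eq_zero_or_pos n with rfl | hn0
  · rw [zero_add, Fl_zero] at hs; exact h1 hs
  have hi : ∀ m, ∀ v ∈ Fl q d x i n, x m v ∈ Fl q d x i n := by
    intro m v hv
    have hm : m = i ∨ m = i + 1 ∨ m = i + 2 ∨ m = i + 3 := by
      clear * -; revert i m; decide
    rcases hm with rfl | rfl | rfl | rfl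
    · exact Fl_inv0 _ hv
    · exact Fl_inv1 hq hx _ hv
    · rw [← hs]; exact Fl_raise2 hq hx _ hv
    · rw [← hs]; exact Fl_raise3' hq hx _ hv
  rcases hirr.2 _ hi with h | h
  · exact h1 (le_bot_iff.mp (h ▸ Fl_mono i hn0))
  · exact h2 (top_le_iff.mp (h ▸ Fl_mono i hn))

theorem KA_scale {s t : ℕ → F} {f f' : Module.End F V} {c : F} (hc : c ≠ 0) (hf : f' = c • f)
    (ht : ∀ n, t n = c * s n) (k : ℕ) : KA t f' k = KA s f k := by
  subst hf
  induction k with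
  | zero => rw [KA_zero, KA_zero]
  | succ k ih =>
    ext v
    rw [mem_KA_succ, mem_KA_succ, ih, ht, LinearMap.smul_apply, mul_smul, ← smul_sub]
    refine ⟨fun h => ?_, fun h => Submodule.smul_mem _ _ h⟩
    have := Submodule.smul_mem _ c⁻¹ h
    rwa [smul_smul, inv_mul_cancel₀ hc, one_smul] at this

/-- The rescaling of the operators that lowers the diameter by one: even generators are multiplied by
`q` and odd ones by `q⁻¹`, which preserves the defining relations. -/
def scX (q : F) (x : ZMod 4 → Module.End F V) : ZMod 4 → Module.End F V := fun i =>
  (![q • x 0, q⁻¹ • x 1, q • x 2, q⁻¹ • x 3] : Fin 4 → Module.End F V) i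

theorem lam_scale (hq : QGood q) (d n : ℕ) : lam q d n = q * lam q (d + 1) n := by
  rw [lam, lam, ← zpow_one_add₀ hq.ne0]; congr 1; push_cast; ring
theorem th_scale (hq : QGood q) (d n : ℕ) : th q d n = q⁻¹ * th q (d + 1) n := by
  rw [th, th, ← zpow_neg_one, ← zpow_add₀ hq.ne0]; congr 1; push_cast; ring

theorem scX_box (hq : QGood q) (hx : IsBox q (d + 1) x) (h : Fl q (d + 1) x 0 (d + 1) = ⊤) :
    IsBox q d (scX q x) := by
  have hq0 := hq.ne0
  have hq0' := inv_ne_zero hq0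
  have h2 : Fl q (d + 1) x 2 (d + 1) = ⊤ := by
    by_contra h2
    exact (full_succ hq hx (i := 3)).1 ((full_succ hq hx (i := 2)).2 h2) h
  have ht : ∀ f : Module.End F V, aeval f (pr (lam q d) (d + 1)) = 0 ↔ KA (lam q d) f (d + 1) = ⊤ :=
    fun f => LinearMap.ker_eq_top.symm
  have ht' : ∀ f : Module.End F V, aeval f (pr (lam q d) (d + 1)) = 0 ↔ KA (th q d) f (d + 1) = ⊤ :=
    fun f => by rw [← pr_th_top]; exact LinearMap.ker_eq_top.symm
  refine ⟨fun i => ?_, fun i => ?_, fun i => ?_⟩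
  · have e := hx.rel1 i
    have hm : ∀ a b : Module.End F V, (q • a) * (q⁻¹ • b) = a * b := fun a b => by
      rw [smul_mul_smul_comm, mul_inv_cancel₀ hq0, one_smul]
    have hm' : ∀ a b : Module.End F V, (q⁻¹ • a) * (q • b) = a * b := fun a b => by
      rw [smul_mul_smul_comm, inv_mul_cancel₀ hq0, one_smul]
    rw [← e]
    fin_cases i
    · exact (congrArg₂ (fun a b => q • a - q⁻¹ • b) (hm (x 0) (x 1)) (hm' (x 1) (x 0)))
    · exact (congrArg₂ (fun a b => q • a - q⁻¹ • b) (hm' (x 1) (x 2)) (hm (x 2) (x 1)))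
    · exact (congrArg₂ (fun a b => q • a - q⁻¹ • b) (hm (x 2) (x 3)) (hm' (x 3) (x 2)))
    · exact (congrArg₂ (fun a b => q • a - q⁻¹ • b) (hm' (x 3) (x 0)) (hm (x 0) (x 3)))
  · have e := hx.serre i
    fin_cases i
    · exact (Serre.smul_iff (q := q) hq0 hq0).mpr e
    · exact (Serre.smul_iff (q := q) hq0' hq0').mpr e
    · exact (Serre.smul_iff (q := q) hq0 hq0).mpr e
    · exact (Serre.smul_iff (q := q) hq0' hq0').mpr e
  · fin_cases i
    · exact (ht _).mpr ((KA_scale hq0 rfl (lam_scale hq d) _).trans h)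
    · exact (ht' _).mpr ((KA_scale hq0' rfl (th_scale hq d) _).trans ((Fl_eq hq hx 0 _).symm.trans h))
    · exact (ht _).mpr ((KA_scale hq0 rfl (lam_scale hq d) _).trans h2)
    · exact (ht' _).mpr ((KA_scale hq0' rfl (th_scale hq d) _).trans ((Fl_eq hq hx 2 _).symm.trans h2))

theorem scX_Fl (hq : QGood q) : Fl q d (scX q x) 0 1 = Fl q (d + 1) x 0 1 :=
  KA_scale hq.ne0 rfl (lam_scale hq d) _

theorem scX_irr (hq : QGood q) (h : IsIrr x) : IsIrr (scX q x) := by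
  refine ⟨h.1, fun W hW => h.2 W fun i v hv => ?_⟩
  have key : ∀ c : F, c ≠ 0 → ∀ f : Module.End F V, (c • f) v ∈ W → f v ∈ W := fun c hc f hf => by
    have := W.smul_mem c⁻¹ hf
    rwa [LinearMap.smul_apply, smul_smul, inv_mul_cancel₀ hc, one_smul] at this
  have := hW i v hv
  fin_cases i
  · exact key _ hq.ne0 _ this
  · exact key _ (inv_ne_zero hq.ne0) _ this
  · exact key _ hq.ne0 _ this
  · exact key _ (inv_ne_zero hq.ne0) _ this

/-- The irreducible quotient of a module generated by its lowest weight space, on which the `T_j`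
act irreducibly: divide by the largest submodule killed by the projection onto that space. -/
theorem exists_quot (hq : QGood q) (hx : IsBox q d x) (h0 : Fl q d x 0 1 ≠ ⊥)
    (hgen : ∀ W : Submodule F V, (∀ i, ∀ v ∈ W, x i v ∈ W) → Fl q d x 0 1 ≤ W → W = ⊤)
    (hmin : ∀ X : Submodule F V, X ≤ Fl q d x 0 1 → X ≠ ⊥ → (∀ j, ∀ u ∈ X, Tt q d x j u ∈ X) →
      X = Fl q d x 0 1) :
    ∃ (N : Submodule F V) (hN : ∀ i, ∀ v ∈ N, x i v ∈ N), IsIrr (quoX x N hN) ∧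
      N ≤ LinearMap.ker (EE q d x) ∧
      ∀ W : Submodule F V, (∀ i, ∀ v ∈ W, x i v ∈ W) → W ≤ LinearMap.ker (EE q d x) → W ≤ N := by
  set S : Set (Submodule F V) := {W | (∀ i, ∀ v ∈ W, x i v ∈ W) ∧ W ≤ LinearMap.ker (EE q d x)}
  have hN : ∀ i, ∀ v ∈ sSup S, x i v ∈ sSup S := by
    intro i
    have : sSup S ≤ (sSup S).comap (x i) := sSup_le fun W hW v hv => le_sSup hW (hW.1 i v hv)
    exact this
  have hNE : sSup S ≤ LinearMap.ker (EE q d x) := sSup_le fun W hW => hW.2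
  have hNmax : ∀ W : Submodule F V, (∀ i, ∀ v ∈ W, x i v ∈ W) → W ≤ LinearMap.ker (EE q d x) → W ≤ sSup S :=
    fun W h1 h2 => le_sSup ⟨h1, h2⟩
  refine ⟨sSup S, hN, ⟨?_, fun W hW => ?_⟩, hNE, hNmax⟩
  · rw [Submodule.Quotient.nontrivial_iff]
    intro h
    obtain ⟨v, hv, hv0⟩ := Submodule.exists_mem_ne_zero_of_ne_bot h0
    have h1 := hNE (h ▸ Submodule.mem_top : v ∈ sSup S)
    rw [LinearMap.mem_ker, EE_of_eig hq (by rwa [← Fl01 hq hx])] at h1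
    exact hv0 h1
  · have hi := (intw_quo _ hN).comap_inv hW
    set W' := W.comap (sSup S).mkQ with hW'
    have hEW : ∀ v ∈ W', EE q d x v ∈ W' := fun v hv => aeval_mem (hi 1) _ hv
    by_cases hb : W'.map (EE q d x) = ⊥
    · left
      have h1 : W' ≤ sSup S := hNmax W' hi fun v hv => by
        rw [LinearMap.mem_ker, ← Submodule.mem_bot F, ← hb]; exact ⟨v, hv, rfl⟩
      rw [eq_bot_iff]
      intro w hw
      obtain ⟨v, rfl⟩ := (sSup S).mkQ_surjective w
      rw [Submodule.mem_bot, Submodule.mkQ_apply, Submodule.Quotient.mk_eq_zero]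
      exact h1 hw
    · right
      have h1 := hmin _ (by rintro _ ⟨v, _, rfl⟩; rw [Fl01 hq hx]; exact EE_mem hx v) hb (by
        rintro j _ ⟨v, hv, rfl⟩
        exact Submodule.smul_mem _ _ ⟨_, aeval_mem (hi 3) _ (hEW v hv), rfl⟩)
      have h2 := hgen W' hi (by rw [← h1]; rintro _ ⟨v, hv, rfl⟩; exact hEW v hv)
      rw [eq_top_iff]
      intro w _
      obtain ⟨v, rfl⟩ := (sSup S).mkQ_surjective w
      exact (h2 ▸ Submodule.mem_top : v ∈ W')

end BoxProof

end

/-! ### One-dimensionality of the lowest weight space -/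

section

namespace BoxProof
open Polynomial Module.End
open scoped BigOperators

variable {F : Type} [Field F] {V : Type} [AddCommGroup V] [Module F V] {q : F} {d : ℕ}
  {x : ZMod 4 → Module.End F V} {K k e0p e0m e1p e1m : Module.End F V}

/-- An operator polynomial `∑ z^i M_i` with `M_0 = 1` and injective leading coefficient is singular at
some `z ≠ 0`: take the inverse of an eigenvalue of the companion operator. -/
theorem exists_pencil [IsAlgClosed F] {U : Type} [AddCommGroup U] [Module F U] [FiniteDimensional F U]
    [Nontrivial U] (e : ℕ) (M : ℕ → Module.End F U) (h0 : M 0 = 1) (hd : ∀ u, M (e + 1) u = 0 → u = 0) :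
    ∃ z : F, z ≠ 0 ∧ ∃ u : U, u ≠ 0 ∧ ∑ i ∈ Finset.range (e + 2), z ^ i • M i u = 0 := by
  let A : Module.End F (Fin (e + 1) → U) := LinearMap.pi fun j =>
    Fin.cases (motive := fun _ => (Fin (e + 1) → U) →ₗ[F] U)
      (-∑ i : Fin (e + 1), M (i + 1) ∘ₗ LinearMap.proj i) (fun j => LinearMap.proj j.castSucc) j
  have A0 : ∀ u, A u 0 = -∑ i : Fin (e + 1), M (i + 1) (u i) := fun u => by
    simp [A, LinearMap.sum_apply]
  have As : ∀ u (j : Fin e), A u j.succ = u j.castSucc := fun u j => by simp [A]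
  obtain ⟨w, hw⟩ := Module.End.exists_eigenvalue A
  obtain ⟨u, hu⟩ := hw.exists_hasEigenvector
  have hAu := hu.apply_eq_smul
  set v := u (Fin.last e) with hv
  have hpow : ∀ m : ℕ, ∀ j : Fin (e + 1), (j : ℕ) + m = e → u j = w ^ m • v := by
    intro m
    induction m with
    | zero =>
      intro j hj
      have : j = Fin.last e := Fin.ext (by simpa using hj)
      rw [this, pow_zero, one_smul]
    | succ m ih =>
      intro j hj
      have h1 := As u ⟨j, by omega⟩
      have h2 : u (Fin.succ ⟨j, by omega⟩) = w ^ m • v := ih _ (by simp; omega)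
      rw [hAu, Pi.smul_apply, h2] at h1
      rw [show j = Fin.castSucc ⟨j, by omega⟩ from rfl, ← h1, smul_smul, pow_succ']
  have hv0 : v ≠ 0 := by
    intro h
    apply hu.2
    funext j
    rw [hpow (e - j) j (by omega), h, smul_zero]; rfl
  have hkey : w ^ (e + 1) • v = -∑ i : Fin (e + 1), w ^ (e - i) • M (i + 1) v := by
    have h1 := A0 u
    rw [hAu, Pi.smul_apply, hpow e 0 (by simp), smul_smul, ← pow_succ'] at h1
    rw [h1]
    congr 1
    refine Finset.sum_congr rfl fun i _ => ?_
    rw [hpow (e - i) i (by omega), map_smul]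
  rw [Fin.sum_univ_eq_sum_range (fun i => w ^ (e - i) • M (i + 1) v) (e + 1)] at hkey
  have hw0 : w ≠ 0 := by
    rintro rfl
    rw [zero_pow (by omega), zero_smul, Finset.sum_range_succ, Finset.sum_eq_zero] at hkey
    · simp at hkey
      exact hv0 (hd v hkey)
    · intro i hi
      rw [Finset.mem_range] at hi
      rw [zero_pow (by omega), zero_smul]
  refine ⟨w⁻¹, inv_ne_zero hw0, v, hv0, ?_⟩
  have h2 : w ^ (e + 1) • ∑ i ∈ Finset.range (e + 2), w⁻¹ ^ i • M i v = 0 := by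
    rw [Finset.sum_range_succ', pow_zero, one_smul, h0, smul_add, Module.End.one_apply, hkey, Finset.smul_sum,
      add_neg_eq_zero]
    refine Finset.sum_congr rfl fun i hi => ?_
    rw [Finset.mem_range] at hi
    rw [smul_smul]
    congr 1
    rw [show e + 1 = (e - i) + (i + 1) by omega, pow_add, mul_assoc, ← mul_pow, mul_inv_cancel₀ hw0, one_pow,
      mul_one]
  exact (smul_eq_zero.mp h2).resolve_left (pow_ne_zero _ hw0)

namespace IsUqMod

theorem KA_isCompl' (h : IsUqMod q d K k e0p e0m e1p e1m) (hq : QGood q) :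
    IsCompl (eigenspace K (lam q d 0)) (KA (th q d) K d) := by
  have hc : IsCoprime (pr (lam q d) 1) (pr (th q d) d) := by
    refine pr_coprime fun m hm n hn he => ?_
    have := hq.zpow_inj he; omega
  rw [← KA_one]
  constructor
  · exact disjoint_ker_aeval_of_isCoprime K hc
  · rw [codisjoint_iff, KA, KA, sup_ker_aeval_eq_ker_aeval_mul_of_coprime _ hc]
    have := pr_mul q d (k := 1) (by omega)
    rw [Nat.add_sub_cancel] at this
    rw [this, h.ann, LinearMap.ker_zero]

theorem KA_le2 (h : IsUqMod q d K k e0p e0m e1p e1m) (hq : QGood q) :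
    KA (th q d) K d ≤ Fl q d (bxOf q K k e0p e0m e1p e1m) 2 d := by
  refine KA_le_of_step (th_injOn hq d) (fun j _ v hv => ?_) d (by omega)
  have : bxOf q K k e0p e0m e1p e1m 2 v - lam q d j • v = (q * (q - q⁻¹)) • k (e1m v) := by
    rw [← k_eig h.uq.kK (th_mul_lam hq d j) hv]; simp [bxOf]
  rw [this]
  exact Submodule.smul_mem _ _ (h.inv_KA hq _ (th_ne hq d) _ _
    (raise_KA hq h.ann h.uq.m1 j v (eig_le_KA (Nat.lt_succ_self j) hv)))

/-- The flag of `x₂` contains that of `K`, whence a bound for the dimension of `Fl 3 1`. -/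
theorem finrank_le [FiniteDimensional F V] (h : IsUqMod q d K k e0p e0m e1p e1m) (hq : QGood q) :
    Module.finrank F (Fl q d (bxOf q K k e0p e0m e1p e1m) 3 1) ≤
      Module.finrank F (eigenspace K (lam q d 0)) := by
  have h1 := Submodule.finrank_add_eq_of_isCompl (h.KA_isCompl' hq)
  have h2 := Submodule.finrank_add_eq_of_isCompl (Fl_isCompl hq (h.isBox hq) 2 (k := 1) (by omega))
  have h3 := Submodule.finrank_mono (h.KA_le2 hq)
  rw [show (2 : ZMod 4) + 1 = 3 from rfl, Nat.add_sub_cancel] at h2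
  omega

theorem x3_mem (h : IsUqMod q d K k e0p e0m e1p e1m) (hq : QGood q) (v : V) :
    bxOf q K k e0p e0m e1p e1m 3 v - lam q d 0 • v ∈ KA (th q d) K d := by
  have htop : v ∈ KA (th q d) K (d + 1) := by rw [KA, pr_th_top, h.ann, LinearMap.ker_zero]; trivial
  have h1 := mem_KA_succ.mp htop
  have h2 := raise_KA hq h.ann h.uq.p0 d v htop
  have e : bxOf q K k e0p e0m e1p e1m 3 v - lam q d 0 • v = (K v - th q d d • v) - (q - q⁻¹) • e0p v := by
    rw [th_eq_lam q d le_rfl, Nat.sub_self]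
    change (K - (q - q⁻¹) • e0p) v - _ = _
    rw [LinearMap.sub_apply, LinearMap.smul_apply]; abel
  rw [e]
  exact sub_mem h1 (Submodule.smul_mem _ _ h2)

theorem eta_ne (h : IsUqMod q d K k e0p e0m e1p e1m) (hq : QGood q) {u : V}
    (hu : u ∈ eigenspace K (lam q d 0)) (hu0 : u ≠ 0) : eta q d (bxOf q K k e0p e0m e1p e1m) u ≠ 0 := by
  intro he
  obtain ⟨w, hw⟩ := eta_sub (d := d) (x := bxOf q K k e0p e0m e1p e1m) hq u
  rw [he] at hw
  have h1 := neg_mem (h.x3_mem hq w)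
  rw [← eq_neg_of_add_eq_zero_left hw.symm] at h1
  exact hu0 (Submodule.disjoint_def.mp (h.KA_isCompl' hq).disjoint u hu h1)

end IsUqMod

/-- The submodule `WW 1 (d+1)` is killed by `EE`. -/
theorem WW_le_EE (hq : QGood q) : WW q d x 1 (d + 1) ≤ LinearMap.ker (EE q d x) := by
  refine iSup_le ?_
  rintro ⟨⟨a, b⟩, hab⟩
  simp only at hab ⊢
  rcases Nat.eq_zero_or_pos b with rfl | hb
  · rw [Fl_zero]; simp
  · intro v hv
    rw [LinearMap.mem_ker, EE_ker hq]
    exact Fl_mono 1 (by omega) hv.1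

theorem gen13_le {X W : Submodule F V} (hW : ∀ i, ∀ v ∈ W, x i v ∈ W) (h : X ≤ W) : gen13 x X ≤ W := by
  refine Submodule.span_le.mpr ?_
  rintro _ ⟨n, l, hl, u, hu, rfl⟩
  have hp : ∀ i (m : ℕ), ∀ v ∈ W, (x i ^ m) v ∈ W := fun i m v hv => by
    have := aeval_mem (hW i) (Polynomial.X ^ m) hv
    rwa [map_pow, aeval_X] at this
  have key : ∀ (l : List ℕ), ∀ u ∈ W, wd (x 3) (x 1) l u ∈ W ∧ wd (x 1) (x 3) l u ∈ W := by
    intro l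
    induction l with
    | nil => intro u hu; exact ⟨by simpa [wd] using hu, by simpa [wd] using hu⟩
    | cons a l ih =>
      intro u hu
      exact ⟨by simpa [wd] using hp 3 a _ (ih u hu).2, by simpa [wd] using hp 1 a _ (ih u hu).1⟩
  exact (key l u (h hu)).1

theorem finrank_map_lt [FiniteDimensional F V] {V' : Type} [AddCommGroup V'] [Module F V'] (g : V →ₗ[F] V')
    {S : Submodule F V} {v : V} (hv : v ∈ S) (hv0 : v ≠ 0) (hg : g v = 0) :
    Module.finrank F (S.map g) < Module.finrank F S := by
  have h := LinearMap.finrank_range_add_finrank_ker (g.domRestrict S)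
  rw [LinearMap.range_domRestrict] at h
  have : 0 < Module.finrank F (LinearMap.ker (g.domRestrict S)) := by
    rw [Nat.pos_iff_ne_zero, Ne, Submodule.finrank_eq_zero]
    intro hb
    have : (⟨v, hv⟩ : S) ∈ LinearMap.ker (g.domRestrict S) := hg
    rw [hb, Submodule.mem_bot] at this
    exact hv0 (congrArg Subtype.val this)
  omega

theorem finrank_map_inj [FiniteDimensional F V] {V' : Type} [AddCommGroup V'] [Module F V'] (g : V →ₗ[F] V')
    {S : Submodule F V} (hg : ∀ v ∈ S, g v = 0 → v = 0) :
    Module.finrank F (S.map g) = Module.finrank F S := by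
  have h := LinearMap.finrank_range_add_finrank_ker (g.domRestrict S)
  have hk : LinearMap.ker (g.domRestrict S) = ⊥ := by
    rw [eq_bot_iff]
    rintro ⟨v, hv⟩ h
    exact Subtype.ext (hg v hv h)
  rw [LinearMap.range_domRestrict, hk, finrank_bot] at h
  omega

theorem Intw.Fl01_eq {V' : Type} [AddCommGroup V'] [Module F V'] {x' : ZMod 4 → Module.End F V'}
    {g : V →ₗ[F] V'} (hg : Intw g x x') (hs : Function.Surjective g) (hq : QGood q) (hx : IsBox q d x) :
    Fl q d x' 0 1 = (Fl q d x 0 1).map g := by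
  have hx' := hx.of_surj hg hs
  apply le_antisymm
  · intro w hw
    obtain ⟨v, rfl⟩ := hs w
    rw [Fl01 hq hx'] at hw
    refine ⟨EE q d x v, by rw [SetLike.mem_coe, Fl01 hq hx]; exact EE_mem hx v, ?_⟩
    rw [hg.map_EE, EE_of_eig hq hw]
  · rintro _ ⟨v, hv, rfl⟩; exact hg.map_Fl hv

theorem Intw.Fl31_eq {V' : Type} [AddCommGroup V'] [Module F V'] {x' : ZMod 4 → Module.End F V'}
    {g : V →ₗ[F] V'} (hg : Intw g x x') (hs : Function.Surjective g) (hq : QGood q) (hx : IsBox q d x) :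
    Fl q d x' 3 1 = (Fl q d x 3 1).map g := by
  apply le_antisymm
  · intro w hw
    obtain ⟨v, rfl⟩ := hs w
    refine ⟨eta q d x v, eta_mem hx v, ?_⟩
    rw [hg.map_eta, eta_of_mem hq hw]
  · rintro _ ⟨v, hv, rfl⟩; exact hg.map_Fl hv

/-- The irreducible subquotient attached to a subspace `X` of the lowest weight space on which the
`T_j` act irreducibly: the quotient of the submodule generated by `X` by its largest submodule
that is killed by `EE`. -/
theorem exists_subquot [FiniteDimensional F V] (hq : QGood q) (hx : IsBox q d x) {X : Submodule F V}
    (hX : X ≤ Fl q d x 0 1) (hX0 : X ≠ ⊥) (hst : ∀ j, ∀ u ∈ X, Tt q d x j u ∈ X)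
    (hmin : ∀ X' : Submodule F V, X' ≤ X → X' ≠ ⊥ → (∀ j, ∀ u ∈ X', Tt q d x j u ∈ X') → X' = X) :
    ∃ (Y : Submodule F V) (hY : ∀ i, ∀ v ∈ Y, x i v ∈ Y), X ≤ Y ∧
      Fl q d (resX x Y hY) 0 1 = X.comap Y.subtype ∧
      ∃ (N : Submodule F Y) (hN : ∀ i, ∀ v ∈ N, resX x Y hY i v ∈ N),
      IsIrr (quoX _ N hN) ∧ N ≤ LinearMap.ker (EE q d (resX x Y hY)) ∧
      ∀ W : Submodule F Y, (∀ i, ∀ v ∈ W, resX x Y hY i v ∈ W) →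
        W ≤ LinearMap.ker (EE q d (resX x Y hY)) → W ≤ N := by
  obtain ⟨Y, hY, hE, hXY, hle⟩ : ∃ Y : Submodule F V, (∀ i, ∀ v ∈ Y, x i v ∈ Y) ∧
      (∀ v ∈ Y, EE q d x v ∈ X) ∧ X ≤ Y ∧
      ∀ W : Submodule F V, (∀ i, ∀ v ∈ W, x i v ∈ W) → X ≤ W → Y ≤ W :=
    ⟨gen13 x X, fun i => gen13_inv hq hx X i, gen13_EE hq hx hX hst, le_gen13 X,
      fun W hW h => gen13_le hW h⟩
  refine ⟨Y, hY, hXY, ?_⟩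
  have hg := intw_res (x := x) Y hY
  have hinj : Function.Injective Y.subtype := Subtype.val_injective
  have hy := hx.of_inj hg hinj
  have hF : Fl q d (resX x Y hY) 0 1 = X.comap Y.subtype := by
    ext v
    rw [hg.mem_Fl hinj, Submodule.mem_comap]
    refine ⟨fun h => ?_, fun h => hX h⟩
    rw [Fl01 hq hx] at h
    have := hE (Y.subtype v) v.2
    rwa [EE_of_eig hq h] at this
  refine ⟨hF, exists_quot hq hy ?_ ?_ ?_⟩
  · obtain ⟨u, hu, hu0⟩ := Submodule.exists_mem_ne_zero_of_ne_bot hX0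
    intro hb
    have : (⟨u, hXY hu⟩ : Y) ∈ Fl q d (resX x Y hY) 0 1 := by rw [hF]; exact hu
    rw [hb, Submodule.mem_bot] at this
    exact hu0 (congrArg Subtype.val this)
  · intro W hW hXW
    have h1 : Y ≤ W.map Y.subtype := hle _ (hg.map_inv hW) fun u hu =>
      ⟨⟨u, hXY hu⟩, hXW (by rw [hF]; exact hu), rfl⟩
    rw [eq_top_iff]
    intro v _
    obtain ⟨w, hw, hwv⟩ := h1 v.2
    rwa [← hinj hwv]
  · intro X' hX' h0 hs
    have h1 := hmin (X'.map Y.subtype) (by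
      rintro _ ⟨v, hv, rfl⟩
      have := hX' hv
      rwa [hF] at this) (by
      intro hb
      refine h0 (eq_bot_iff.mpr fun v hv => ?_)
      have : Y.subtype v ∈ X'.map Y.subtype := ⟨v, hv, rfl⟩
      rw [hb, Submodule.mem_bot] at this
      exact hinj (this.trans (map_zero _).symm)) (by
      rintro j _ ⟨v, hv, rfl⟩
      exact ⟨_, hs j v hv, hg.map_Tt j v⟩)
    rw [hF, ← h1, Submodule.comap_map_eq_of_injective hinj]

/-- The lowest weight space of an irreducible module is one-dimensional. By induction on `d`: a suitable
twist of the module has an irreducible subquotient with the same lowest weight space and smaller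
diameter. -/
theorem dim_one [IsAlgClosed F] (hq : QGood q) (d : ℕ) : ∀ (V : Type) [AddCommGroup V] [Module F V]
    [FiniteDimensional F V] (x : ZMod 4 → Module.End F V), IsBox q d x → IsIrr x → Fl q d x 0 1 ≠ ⊥ →
    Module.finrank F (Fl q d x 0 1) = 1 := by
  induction d with
  | zero =>
    intro V _ _ _ x hx hirr h1
    obtain ⟨u, hu, hu0⟩ := Submodule.exists_mem_ne_zero_of_ne_bot h1
    have h := Tt_irr hq hx hirr (X := Submodule.span F {u}) (by
      rw [Submodule.span_singleton_le_iff_mem]; exact hu) (by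
      rwa [Ne, Submodule.span_singleton_eq_bot]) (by
      intro j v hv
      rcases Nat.eq_zero_or_pos j with rfl | hj
      · rw [Tt_zero_apply hq]
        · exact hv
        · rw [← Fl01 hq hx]
          exact (Submodule.span_singleton_le_iff_mem _ _).mpr hu hv
      · rw [Tt_zero hx hj]; exact zero_mem _)
    rw [← h, finrank_span_singleton hu0]
  | succ e ih =>
    intro V _ _ _ x hx hirr h1
    -- If the largest weight is missing, rescaling lowers the diameter.
    have descend : ∀ (V : Type) [AddCommGroup V] [Module F V] [FiniteDimensional F V]
        (x : ZMod 4 → Module.End F V), IsBox q (e + 1) x → IsIrr x → Fl q (e + 1) x 0 1 ≠ ⊥ →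
        Fl q (e + 1) x 0 (e + 1) = ⊤ → Module.finrank F (Fl q (e + 1) x 0 1) = 1 := by
      intro V _ _ _ x hx hirr h1 h2
      rw [← scX_Fl hq] at h1 ⊢
      exact ih V _ (scX_box hq hx h2) (scX_irr hq hirr) h1
    by_cases h2 : Fl q (e + 1) x 0 (e + 1) = ⊤
    · exact descend V x hx hirr h1 h2
    obtain ⟨K, k, e0p, e0m, e1p, e1m, hU, rfl, _⟩ :=
      exists_uq hq hx fun j k hjk => Fl_opp hq hx hirr 0 h1 h2 hjk
    set x := bxOf q K k e0p e0m e1p e1m with hxdef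
    set U := Fl q (e + 1) x 0 1 with hUdef
    have hUK : eigenspace K (lam q (e + 1) 0) = U := hU.eig0 hq
    -- A parameter `ζ` and a vector `u` on which the series of the `T_j`, evaluated at `ζ`, vanishes.
    have hmem : ∀ i, ∀ v ∈ U, (((-1) ^ i / (qFact F q i) ^ 2) • Tt q (e + 1) x i) v ∈ U := fun i v _ => by
      rw [LinearMap.smul_apply, hUdef, Fl01 hq hx]
      exact Submodule.smul_mem _ _ (Tt_mem hx i v)
    have : Nontrivial U := Submodule.nontrivial_iff_ne_bot.mpr h1
    obtain ⟨ζ, hζ, u, hu0, hu⟩ := exists_pencil (U := U) e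
      (fun i => (((-1) ^ i / (qFact F q i) ^ 2) • Tt q (e + 1) x i).restrict (hmem i)) (by
        ext v
        have := Tt_zero_apply (d := e + 1) (x := x) hq (by rw [← Fl01 hq hx]; exact v.2)
        simp [qFact, this]) (by
        intro v hv
        have h3 := congrArg Subtype.val hv
        simp only [LinearMap.restrict_apply, LinearMap.smul_apply] at h3
        have h4 := (smul_eq_zero.mp h3).resolve_left (div_ne_zero (pow_ne_zero _ (by norm_num))
          (pow_ne_zero _ (qFact_ne hq _)))
        exact Subtype.ext (Tt_top hq hx v.2 h4))
    have hu : ∑ i ∈ Finset.range (e + 1 + 1), ζ ^ i • ((-1) ^ i / (qFact F q i) ^ 2) • Tt q (e + 1) x i u = 0 := by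
      have := congrArg Subtype.val hu
      simpa [AddSubmonoidClass.coe_finsetSum] using this
    -- After twisting by `ζ` the series vanishes on `u` at the value `1`.
    have hZ := hU.twist hζ
    set xz := bxOf q K k (ζ • e0p) (ζ⁻¹ • e0m) e1p e1m with hxz
    have hxzb : IsBox q (e + 1) xz := hZ.isBox hq
    have hUz : Fl q (e + 1) xz 0 1 = U := by rw [← hUK]; exact (hZ.eig0 hq).symm
    have hTt : ∀ j, ∀ v ∈ U, Tt q (e + 1) xz j v = ζ ^ j • Tt q (e + 1) x j v := by
      intro j v hv
      rw [← hUK] at hv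
      rw [hxz, hZ.Tt_eq hq hv, hxdef, hU.Tt_eq hq hv, _root_.smul_pow, LinearMap.smul_apply, map_smul]
    have hEeta : EE q (e + 1) xz (eta q (e + 1) xz u) = 0 := by
      rw [EE_eta hq, ← hu]
      refine Finset.sum_congr rfl fun i _ => ?_
      rw [hTt i u u.2, smul_comm]
    have heta0 : eta q (e + 1) xz u ≠ 0 := hZ.eta_ne hq (by rw [hUK]; exact u.2)
      (fun h => hu0 (Subtype.ext h))
    obtain ⟨Y, hY, hUY, hF, N, hN, hNirr, hNE, hNmax⟩ := exists_subquot hq hxzb (X := U) hUz.ge h1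
      (fun j u _ => by rw [← hUz, Fl01 hq hxzb]; exact Tt_mem hxzb j u) (fun X' hX' h0 hs => by
        refine Tt_irr hq hx hirr hX' h0 fun j v hv => ?_
        have := X'.smul_mem (ζ ^ j)⁻¹ (hs j v hv)
        rwa [hTt j v (hX' hv), smul_smul, inv_mul_cancel₀ (pow_ne_zero _ hζ), one_smul] at this)
    have hg := intw_res (x := xz) Y hY
    have hinj : Function.Injective Y.subtype := Subtype.val_injective
    have hyb := hxzb.of_inj hg hinj
    have hgq := intw_quo (x := resX xz Y hY) N hN
    have hsq := N.mkQ_surjective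
    have hzb := hyb.of_surj hgq hsq
    have hd1 : Module.finrank F (Fl q (e + 1) (quoX _ N hN) 0 1) = Module.finrank F U := by
      rw [hgq.Fl01_eq hsq hq hyb, finrank_map_inj, hF]
      · rw [← finrank_map_inj Y.subtype (S := U.comap Y.subtype) (fun v _ h => hinj (by rw [h, map_zero]))]
        rw [Submodule.map_comap_subtype, inf_eq_right.mpr hUY]
      · intro v hv h
        rw [Submodule.mkQ_apply, Submodule.Quotient.mk_eq_zero] at h
        have h3 := hNE h
        rwa [LinearMap.mem_ker, EE_of_eig hq (by rwa [← Fl01 hq hyb])] at h3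
    have hnb : Fl q (e + 1) (quoX _ N hN) 0 1 ≠ ⊥ := by
      intro h
      rw [h, finrank_bot] at hd1
      exact h1 (Submodule.finrank_eq_zero.mp hd1.symm)
    by_cases h3 : Fl q (e + 1) (quoX _ N hN) 0 (e + 1) = ⊤
    · rw [← hd1]; exact descend _ _ hzb hNirr hnb h3
    -- If the quotient had full diameter, its flags `0` and `2` would be opposite, so `Fl 3 1` would be as
    -- large as the lowest weight space. But `eta u` spans a line of `Fl 3 1` that dies in the quotient.
    exfalso
    have e1 := Submodule.finrank_add_eq_of_isCompl (Fl_opp hq hzb hNirr 0 hnb h3 (show 1 + (e + 1) = e + 1 + 1 by omega))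
    have e2 := Submodule.finrank_add_eq_of_isCompl (Fl_isCompl hq hzb 2 (k := 1) (by omega))
    rw [show (2 : ZMod 4) + 1 = 3 from rfl, Nat.add_sub_cancel] at e2
    rw [zero_add] at e1
    have e3 : Module.finrank F (Fl q (e + 1) (quoX _ N hN) 3 1) <
        Module.finrank F (Fl q (e + 1) (resX xz Y hY) 3 1) := by
      rw [hgq.Fl31_eq hsq hq hyb]
      set u' : Y := ⟨u, hUY u.2⟩
      have hu' : Y.subtype (eta q (e + 1) (resX xz Y hY) u') = eta q (e + 1) xz u := hg.map_eta u'
      refine finrank_map_lt _ (eta_mem hyb u') (fun h => heta0 (by rw [← hu', h, map_zero])) ?_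
      rw [Submodule.mkQ_apply, Submodule.Quotient.mk_eq_zero]
      refine hNmax _ (fun i v hv => WW_inv hq hyb 1 (e + 1 + 1) i hv) (WW_le_EE hq)
        (mem_WW (show e + 1 + 1 = e + 1 + 1 from rfl) ?_ (eta_mem hyb u'))
      rw [← EE_ker hq]
      apply hinj
      rw [hg.map_EE, hu', hEeta, map_zero]
    have e4 : Module.finrank F (Fl q (e + 1) (resX xz Y hY) 3 1) ≤ Module.finrank F (Fl q (e + 1) xz 3 1) := by
      rw [← finrank_map_inj Y.subtype (fun v _ h => hinj (by rw [h, map_zero]))]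
      refine Submodule.finrank_mono ?_
      rintro _ ⟨v, hv, rfl⟩
      exact hg.map_Fl hv
    have e5 := hZ.finrank_le hq
    rw [hUK, ← hxz] at e5
    omega

end BoxProof

end

/-! ### Existence of the Drinfel'd polynomial and its value at `1` -/

section

namespace BoxProof
open Polynomial Module.End
open scoped BigOperators

variable {F : Type} [Field F] {V : Type} [AddCommGroup V] [Module F V] {q : F} {d : ℕ}
  {x : ZMod 4 → Module.End F V}

theorem KA_le_iSup {s : ℕ → F} (f : Module.End F V) (hs : ∀ k ≤ d, ∀ n < k, s n ≠ s k) :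
    ∀ k ≤ d + 1, KA s f k ≤ ⨆ θ, eigenspace f θ := by
  intro k
  induction k with
  | zero => intro _; rw [KA_zero]; exact bot_le
  | succ k ih =>
    intro hk
    rw [KA_succ f (hs k (by omega))]
    exact sup_le (ih (by omega)) (le_iSup (fun θ => eigenspace f θ) (s k))

theorem semisimple_of_ann {s : ℕ → F} {f : Module.End F V} (hs : ∀ k ≤ d, ∀ n < k, s n ≠ s k)
    (h : aeval f (pr s (d + 1)) = 0) : SemisimpleOn F f := by
  have := KA_le_iSup f hs (d + 1) le_rfl
  rw [KA, h, LinearMap.ker_zero] at this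
  exact top_le_iff.mp this

theorem ann_of_semisimple {s : ℕ → F} {f : Module.End F V} (h : SemisimpleOn F f)
    (hE : EigSet F f ⊆ {θ | ∃ n ≤ d, θ = s n}) : aeval f (pr s (d + 1)) = 0 := by
  rw [← LinearMap.ker_eq_top, ← top_le_iff, ← show _ = _ from h]
  refine iSup_le fun θ => ?_
  by_cases hb : eigenspace f θ = ⊥
  · rw [hb]; exact bot_le
  · obtain ⟨n, hn, rfl⟩ := hE hb
    exact eig_le_KA (Nat.lt_succ_of_le hn)

theorem eigSet_subset_of_ann {s : ℕ → F} {f : Module.End F V} (h : aeval f (pr s (d + 1)) = 0) :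
    EigSet F f ⊆ {θ | ∃ n ≤ d, θ = s n} := by
  intro θ hθ
  obtain ⟨v, hv, hv0⟩ := Submodule.exists_mem_ne_zero_of_ne_bot hθ
  have h1 := aeval_eig hv (pr s (d + 1))
  rw [h, LinearMap.zero_apply, eq_comm, smul_eq_zero, or_iff_left hv0, pr_eval,
    Finset.prod_eq_zero_iff] at h1
  obtain ⟨n, hn, hn'⟩ := h1
  exact ⟨n, Nat.lt_succ_iff.mp (Finset.mem_range.mp hn), sub_eq_zero.mp hn'⟩

theorem eigSet_of_ann {s : ℕ → F} {f : Module.End F V} (h : aeval f (pr s (d + 1)) = 0)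
    (he : ∀ n ≤ d, eigenspace f (s n) ≠ ⊥) : EigSet F f = {θ | ∃ n ≤ d, θ = s n} := by
  refine (eigSet_subset_of_ann h).antisymm ?_
  rintro _ ⟨n, hn, rfl⟩
  exact he n hn

theorem bx_induction {P : BoxQ F q → Prop} (halg : ∀ r, P (algebraMap F _ r)) (hgen : ∀ i, P (bx F q i))
    (hmul : ∀ a b, P a → P b → P (a * b)) (hadd : ∀ a b, P a → P b → P (a + b)) (a : BoxQ F q) : P a := by
  obtain ⟨p, rfl⟩ := RingQuot.mkAlgHom_surjective F (BoxRel F q) a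
  induction p with
  | grade0 r => rw [AlgHom.commutes]; exact halg r
  | grade1 i => exact hgen i
  | mul a b ha hb => rw [map_mul]; exact hmul _ _ ha hb
  | add a b ha hb => rw [map_add]; exact hadd _ _ ha hb

theorem invariant_iff (π : BoxQ F q →ₐ[F] Module.End F V) (W : Submodule F V) :
    (∀ a, ∀ v ∈ W, π a v ∈ W) ↔ ∀ i, ∀ v ∈ W, π (bx F q i) v ∈ W := by
  refine ⟨fun h i => h _, fun h a => ?_⟩
  induction a using bx_induction with
  | halg r => intro v hv; rw [AlgHom.commutes, Module.algebraMap_end_apply]; exact W.smul_mem _ hv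
  | hgen i => exact h i
  | hmul a b ha hb => intro v hv; rw [map_mul, Module.End.mul_apply]; exact ha _ (hb _ hv)
  | hadd a b ha hb => intro v hv; rw [map_add, LinearMap.add_apply]; exact add_mem (ha _ hv) (hb _ hv)

theorem isIrrep_iff (π : BoxQ F q →ₐ[F] Module.End F V) :
    IsIrrep F π ↔ IsIrr fun i => π (bx F q i) := by
  simp only [IsIrrep, IsIrr, invariant_iff]

theorem repIso_iff {V' : Type} [AddCommGroup V'] [Module F V'] (π : BoxQ F q →ₐ[F] Module.End F V)
    (π' : BoxQ F q →ₐ[F] Module.End F V') :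
    RepIso F π π' ↔ ∃ g : V ≃ₗ[F] V', Intw g.toLinearMap (fun i => π (bx F q i)) fun i => π' (bx F q i) := by
  refine exists_congr fun g => ⟨fun h i v => h _ v, fun h a => ?_⟩
  induction a using bx_induction with
  | halg r => intro v; simp only [AlgHom.commutes, Module.algebraMap_end_apply, map_smul]
  | hgen i => exact h i
  | hmul a b ha hb => intro v; simp only [map_mul, Module.End.mul_apply, ha, hb]
  | hadd a b ha hb => intro v; simp only [map_add, LinearMap.add_apply, ha, hb]

/-- A type 1 module gives operators `x i` annihilated by the expected polynomial, with nonzero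
extreme eigenspaces. -/
theorem isBox_of_type1 (hq : QGood q) {π : BoxQ F q →ₐ[F] Module.End F V} (h : Type1Diam F q π d) :
    IsBox q d (fun i => π (bx F q i)) ∧ Fl q d (fun i => π (bx F q i)) 0 1 ≠ ⊥ ∧
      Fl q d (fun i => π (bx F q i)) 0 d ≠ ⊤ := by
  have hr := boxRels_of_hom π
  have hb : IsBox q d (fun i => π (bx F q i)) := by
    refine ⟨hr.1, hr.2, fun i => ?_⟩
    rw [← pr_th_top]
    exact ann_of_semisimple (h i).1 (h i).2.le
  have he : ∀ i, ∀ n ≤ d, eigenspace (π (bx F q i)) (th q d n) ≠ ⊥ := fun i n hn => by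
    have : th q d n ∈ EigSet F (π (bx F q i)) := by rw [(h i).2]; exact ⟨n, hn, rfl⟩
    exact this
  refine ⟨hb, ?_, fun ht => ?_⟩
  · rw [Fl, KA_one, lam_eq_th q d (Nat.zero_le _)]
    exact he 0 _ (by omega)
  · have := (KA_isCompl hq hb 0 (k := d) (by omega)).disjoint
    rw [show KA (lam q d) (π (bx F q 0)) d = ⊤ from ht, disjoint_comm, disjoint_top,
      show d + 1 - d = 1 by omega, KA_one] at this
    exact he 0 0 (Nat.zero_le _) this

theorem type1_of_isBox (hq : QGood q) {π : BoxQ F q →ₐ[F] Module.End F V}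
    (hx : IsBox q d (fun i => π (bx F q i))) (hirr : IsIrr fun i => π (bx F q i))
    (h1 : Fl q d (fun i => π (bx F q i)) 0 1 ≠ ⊥) (h2 : Fl q d (fun i => π (bx F q i)) 0 d ≠ ⊤) :
    Type1Diam F q π d := by
  intro i
  have ha := hx.ann i
  rw [← pr_th_top] at ha
  refine ⟨semisimple_of_ann (th_injOn hq d) ha, eigSet_of_ann (s := th q d) ha fun n hn => ?_⟩
  rw [th_eq_lam q d hn]
  exact eig_full hq hx hirr h1 h2 i (by omega)

theorem Wt_ne (hq : QGood q) (hx : IsBox q d x) (hirr : IsIrr x) (h1 : Fl q d x 0 1 ≠ ⊥)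
    (h2 : Fl q d x 0 d ≠ ⊤) {n : ℕ} (hn : n ≤ d) : Wt q d x n ≠ ⊥ := by
  intro hb
  refine eig_full hq hx hirr h1 h2 0 hn ?_
  have hc : IsCompl (Fl q d x 0 n) (Fl q d x 2 (d + 1 - n)) :=
    Fl_opp hq hx hirr 0 h1 h2 (show n + (d + 1 - n) = d + 1 by omega)
  have hle := Fl_mono (q := q) (d := d) (x := x) 0 (Nat.le_succ n)
  have he : Fl q d x 0 n = Fl q d x 0 (n + 1) :=
    eq_of_le_of_inf_le_of_sup_le (z := Fl q d x 2 (d + 1 - n)) hle (le_trans (le_of_eq hb) bot_le)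
      (by rw [hc.sup_eq_top]; exact le_top)
  have hd : Disjoint (KA (lam q d) (x 0) n) (eigenspace (x 0) (lam q d n)) := by
    have hcop : IsCoprime (pr (lam q d) n) (pr (fun _ => lam q d n) 1) := by
      refine pr_coprime fun m hm _ _ he => ?_
      exact hm.ne (lam_inj hq d he)
    have := disjoint_ker_aeval_of_isCoprime (x 0) hcop
    rwa [show LinearMap.ker (aeval (x 0) (pr (fun _ => lam q d n) 1)) = _ from KA_one _ _] at this
  rw [Fl, Fl, KA_succ _ (lam_injOn hq d n hn)] at he
  rw [eq_bot_iff]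
  exact hd (he.symm ▸ le_sup_right) le_rfl

theorem polyOf_coeff (σ : ℕ → F) (j : ℕ) :
    (polyOf F q d σ).coeff j = if j ≤ d then (-1) ^ j * σ j / (qFact F q j) ^ 2 else 0 := by
  simp only [polyOf, finsetSum_coeff, coeff_C_mul, coeff_X_pow, mul_ite, mul_one, mul_zero,
    Finset.sum_ite_eq, Finset.mem_range, Nat.lt_succ_iff]

/-- The value of the Drinfel'd polynomial at `1` measures the component of `eta u` in the lowest weight
space. -/
theorem EE_eta_poly (hq : QGood q) {u : V} {σ : ℕ → F} (hσ : ∀ j, Tt q d x j u = σ j • u) :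
    EE q d x (eta q d x u) = (polyOf F q d σ).eval 1 • u := by
  rw [EE_eta hq, polyOf, eval_finsetSum, Finset.sum_smul]
  refine Finset.sum_congr rfl fun i _ => ?_
  rw [hσ, smul_smul, eval_mul, eval_C, eval_pow, eval_X, one_pow, mul_one, div_mul_eq_mul_div]

/-- The Drinfel'd polynomial of a type 1 irreducible module, computed from the scalars by which
the intrinsic operators `T_j` act on the lowest weight space. -/
theorem drin_core [IsAlgClosed F] [FiniteDimensional F V] (hq : QGood q)
    {π : BoxQ F q →ₐ[F] Module.End F V}
    (hx : IsBox q d (fun i => π (bx F q i))) (hirr : IsIrr fun i => π (bx F q i))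
    (h1 : Fl q d (fun i => π (bx F q i)) 0 1 ≠ ⊥) (h2 : Fl q d (fun i => π (bx F q i)) 0 d ≠ ⊤)
    {u : V} (hu : u ∈ Fl q d (fun i => π (bx F q i)) 0 1) (hu0 : u ≠ 0) {σ : ℕ → F}
    (hσ : ∀ j, Tt q d (fun i => π (bx F q i)) j u = σ j • u) :
    DrinOf F q π (polyOf F q d σ) ∧ (polyOf F q d σ).coeff 0 = 1 ∧ (polyOf F q d σ).eval 1 ≠ 0 := by
  obtain ⟨x, hxdef⟩ : ∃ x, x = fun i => π (bx F q i) := ⟨_, rfl⟩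
  rw [← hxdef] at hx hirr h1 h2 hu hσ
  obtain ⟨K, k, e0p, e0m, e1p, e1m, hU, hb, hW⟩ :=
    exists_uq hq hx fun j k hjk => Fl_opp hq hx hirr 0 h1 h2 hjk
  have hE0 := hU.eig0 hq
  rw [hb] at hE0
  refine ⟨?_, ?_, ?_⟩
  · obtain ⟨ψ, hψ⟩ := exists_psi (F := F) hq
    obtain ⟨Φ, hK, hk, hp0, hm0, hp1, hm1⟩ := exists_uqHom hU.uq hq.ne0
    refine ⟨ψ, hψ, Φ, boxHom_ext fun i => ?_, d, σ, ⟨?_, ?_⟩, ?_, ?_, rfl⟩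
    · rw [AlgHom.comp_apply, bxOf_psi hψ, hK, hk, hp0, hm0, hp1, hm1, hb, hxdef]
    · rw [hK]; exact semisimple_of_ann (lam_injOn hq d) hU.ann
    · rw [hK]
      refine eigSet_of_ann (s := lam q d) hU.ann fun n hn he => ?_
      exact Wt_ne hq hx hirr h1 h2 hn (eq_bot_iff.mpr (he ▸ hW n))
    · have := dim_one hq d V x hx hirr h1
      rw [← hE0] at this
      rw [U0, hK]
      rw [lam, Nat.cast_zero, mul_zero, zero_sub] at this
      exact this
    · intro j v hv
      rw [U0, hK] at hv
      have hv' : v ∈ eigenspace K (lam q d 0) := by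
        rw [lam, Nat.cast_zero, mul_zero, zero_sub]; exact hv
      rw [map_mul, map_pow, map_pow, hp1, hp0, Module.End.mul_apply, ← hU.Tt_eq hq hv', hb]
      rw [hE0] at hv'
      obtain ⟨c, hc⟩ := (finrank_eq_one_iff_of_nonzero' (⟨u, hu⟩ : Fl q d x 0 1) (by
        intro h; exact hu0 (congrArg Subtype.val h))).mp (dim_one hq d V x hx hirr h1) ⟨v, hv'⟩
      have hc : c • u = v := congrArg Subtype.val hc
      rw [← hc, map_smul, hσ, smul_comm]
  · have h0 : σ 0 = 1 := by
      have := hσ 0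
      rw [Tt_zero_apply hq (by rw [← Fl01 hq hx]; exact hu)] at this
      exact (smul_left_injective F hu0 (by simpa using this)).symm
    rw [polyOf_coeff, if_pos (Nat.zero_le _), h0]
    simp [qFact]
  · intro he
    have h3 := EE_eta_poly hq hσ
    rw [he, zero_smul, EE_ker hq] at h3
    have hopp := Fl_opp hq hx hirr 1 (full_all hq hx h1 h2 1).1 (full_all hq hx h1 h2 1).2 (rfl : d + 1 = d + 1)
    have h4 := Submodule.disjoint_def.mp hopp.disjoint _ h3 (eta_mem hx u)
    have h5 := hU.eta_ne hq (by rw [hE0]; exact hu) hu0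
    rw [hb] at h5
    exact h5 h4

theorem exists_sigma [IsAlgClosed F] [FiniteDimensional F V] (hq : QGood q) (hx : IsBox q d x) (hirr : IsIrr x)
    (h1 : Fl q d x 0 1 ≠ ⊥) : ∃ u ∈ Fl q d x 0 1, u ≠ 0 ∧ ∃ σ : ℕ → F, ∀ j, Tt q d x j u = σ j • u := by
  obtain ⟨u, hu, hu0⟩ := Submodule.exists_mem_ne_zero_of_ne_bot h1
  refine ⟨u, hu, hu0, ?_⟩
  have h := (finrank_eq_one_iff_of_nonzero' (⟨u, hu⟩ : Fl q d x 0 1) (by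
        intro h; exact hu0 (congrArg Subtype.val h))).mp (dim_one hq d V x hx hirr h1)
  have : ∀ j, ∃ c : F, Tt q d x j u = c • u := fun j => by
    obtain ⟨c, hc⟩ := h ⟨Tt q d x j u, by rw [Fl01 hq hx]; exact Tt_mem hx j u⟩
    exact ⟨c, (congrArg Subtype.val hc).symm⟩
  choose σ hσ using this
  exact ⟨σ, hσ⟩

end BoxProof

end

/-! ### The Drinfel'd polynomial determines the module -/

section

namespace BoxProof
open Polynomial Module.End
open scoped BigOperators

variable {F : Type} [Field F] {V : Type} [AddCommGroup V] [Module F V] {q : F} {d : ℕ}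
  {x : ZMod 4 → Module.End F V} {V' : Type} [AddCommGroup V'] [Module F V'] {x' : ZMod 4 → Module.End F V'}

theorem diam_le {d' : ℕ} (hq : QGood q) (hx : IsBox q d x) (h : Fl q d' x 0 1 ≠ ⊥) : d' ≤ d := by
  by_contra hd
  refine h ?_
  rw [Fl, KA_one, lam]
  refine eig_bot hq hx 0 fun n hn he => ?_
  push_cast at he; omega

/-- Any Drinfel'd polynomial in the sense of `DrinOf` is computed from the operators `T_j`; in
particular the auxiliary diameter appearing in `DrinOf` is the diameter of the module. -/
theorem drin_sigma (hq : QGood q) {π : BoxQ F q →ₐ[F] Module.End F V} {f : F[X]}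
    (hx : IsBox q d (fun i => π (bx F q i))) (h1 : Fl q d (fun i => π (bx F q i)) 0 1 ≠ ⊥)
    (h : DrinOf F q π f) : ∃ u ∈ Fl q d (fun i => π (bx F q i)) 0 1, u ≠ 0 ∧ ∃ σ : ℕ → F,
      (∀ j, Tt q d (fun i => π (bx F q i)) j u = σ j • u) ∧ f = polyOf F q d σ := by
  obtain ⟨ψ, hψ, Φ, hΦ, d', σ, hT, hdim, hσ, rfl⟩ := h
  have hU : IsUqMod q d' (Φ (lg F q LGen.k0)) (Φ (lg F q LGen.k1)) (Φ (lg F q LGen.e0p))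
      (Φ (lg F q LGen.e0m)) (Φ (lg F q LGen.e1p)) (Φ (lg F q LGen.e1m)) :=
    ⟨isUq_of_hom hq.ne0 Φ, ann_of_semisimple hT.1 hT.2.le⟩
  have hb : bxOf q (Φ (lg F q LGen.k0)) (Φ (lg F q LGen.k1)) (Φ (lg F q LGen.e0p))
      (Φ (lg F q LGen.e0m)) (Φ (lg F q LGen.e1p)) (Φ (lg F q LGen.e1m)) = fun i => π (bx F q i) := by
    funext i
    rw [← bxOf_psi hψ, ← hΦ]; rfl
  have hx' := hU.isBox hq
  have h0 := hU.eig0 hq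
  rw [hb] at hx' h0
  have hU0 : U0 F q Φ d' = eigenspace (Φ (lg F q LGen.k0)) (lam q d' 0) := by
    rw [U0, lam, Nat.cast_zero, mul_zero, zero_sub]
  have hne : U0 F q Φ d' ≠ ⊥ := by
    intro hb
    rw [hb, finrank_bot] at hdim
    exact zero_ne_one hdim
  obtain rfl : d = d' := le_antisymm (diam_le hq hx' h1) (diam_le hq hx (by rw [← h0, ← hU0]; exact hne))
  obtain ⟨u, hu, hu0⟩ := Submodule.exists_mem_ne_zero_of_ne_bot hne
  refine ⟨u, by rw [← h0, ← hU0]; exact hu, hu0, σ, fun j => ?_, rfl⟩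
  rw [← hσ j u hu, ← hb, hU.Tt_eq hq (by rw [← hU0]; exact hu), map_mul, map_pow, map_pow, Module.End.mul_apply]

theorem sigma_top (hq : QGood q) (hx : IsBox q d x) {u : V} (hu : u ∈ Fl q d x 0 1) (hu0 : u ≠ 0)
    {σ : ℕ → F} (hσ : ∀ j, Tt q d x j u = σ j • u) : σ d ≠ 0 ∧ ∀ j, d < j → σ j = 0 := by
  refine ⟨fun h => hu0 (Tt_top hq hx hu (by rw [hσ, h, zero_smul])), fun j hj => ?_⟩
  have := hσ j
  rw [Tt_zero hx hj, LinearMap.zero_apply, eq_comm, smul_eq_zero, or_iff_left hu0] at this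
  exact this

/-- Since `σ_d ≠ 0`, the polynomial determines both the diameter and the scalars `σ_j`. -/
theorem sigma_eq_of_poly (hq : QGood q) {d' : ℕ} {σ σ' : ℕ → F} (h : polyOf F q d σ = polyOf F q d' σ')
    (h1 : σ d ≠ 0 ∧ ∀ j, d < j → σ j = 0) (h2 : σ' d' ≠ 0 ∧ ∀ j, d' < j → σ' j = 0) :
    d = d' ∧ σ = σ' := by
  have key : ∀ {d d' : ℕ} {σ σ' : ℕ → F}, polyOf F q d σ = polyOf F q d' σ' → σ d ≠ 0 → d ≤ d' := by
    intro d d' σ σ' h h1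
    by_contra hd
    have := congrArg (fun p => coeff p d) h
    simp only [polyOf_coeff, le_refl, if_true, if_neg hd] at this
    exact div_ne_zero (mul_ne_zero (pow_ne_zero _ (by norm_num)) h1) (pow_ne_zero _ (qFact_ne hq _)) this
  obtain rfl := le_antisymm (key h h1.1) (key h.symm h2.1)
  refine ⟨rfl, funext fun j => ?_⟩
  rcases Nat.lt_or_ge d j with hj | hj
  · rw [h1.2 j hj, h2.2 j hj]
  · have := congrArg (fun p => coeff p j) h
    simp only [polyOf_coeff, if_pos hj] at this
    have h3 := (div_left_inj' (pow_ne_zero _ (qFact_ne hq _))).mp this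
    exact mul_left_cancel₀ (pow_ne_zero _ (by norm_num)) h3

/-- A projection `p` of a product onto an irreducible factor is bijective on an invariant subspace
`N` that `EE` maps into a line spanned by an element `z` of `N` with `p z ≠ 0`. -/
theorem proj_bij {Z : Type} [AddCommGroup Z] [Module F Z] {xx : ZMod 4 → Module.End F Z}
    (hq : QGood q) (hx' : IsBox q d x') (hirr : IsIrr x) (hirr' : IsIrr x')
    {p : Z →ₗ[F] V} {p' : Z →ₗ[F] V'} {j' : V' →ₗ[F] Z} (hp : Intw p xx x) (hj : Intw j' x' xx)
    (hz : ∀ z, p z = 0 → z = j' (p' z)) (hpj : ∀ w, p (j' w) = 0) (hpj' : ∀ w, p' (j' w) = w)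
    {N : Submodule F Z} (hN : ∀ i, ∀ v ∈ N, xx i v ∈ N) {z : Z} (hzN : z ∈ N)
    (hE : ∀ v ∈ N, EE q d xx v ∈ Submodule.span F {z}) (hu : p z ≠ 0) {u' : V'} (hu' : u' ∈ Fl q d x' 0 1)
    (hu0 : u' ≠ 0) : Function.Bijective (p.comp N.subtype) := by
  constructor
  · rw [← LinearMap.ker_eq_bot, eq_bot_iff]
    rintro ⟨n, hn⟩ hpn
    have hpn : p n = 0 := hpn
    have hc : N.comap j' = ⊥ := by
      rcases hirr'.2 _ (hj.comap_inv hN) with h | h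
      · exact h
      · exfalso
        have h1 : u' ∈ N.comap j' := by rw [h]; trivial
        have h2 := hE _ h1
        rw [← hj.map_EE, EE_of_eig hq (by rw [← Fl01 hq hx']; exact hu'), Submodule.mem_span_singleton] at h2
        obtain ⟨c, hc⟩ := h2
        have h3 := congrArg p hc
        rw [map_smul, hpj, smul_eq_zero, or_iff_left hu] at h3
        rw [h3, zero_smul] at hc
        exact hu0 (by rw [← hpj' u', ← hc, map_zero])
    have h4 : p' n ∈ N.comap j' := by
      rw [Submodule.mem_comap, ← hz n hpn]; exact hn
    rw [hc, Submodule.mem_bot] at h4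
    exact Subtype.ext (by change n = 0; rw [hz n hpn, h4, map_zero])
  · rw [← LinearMap.range_eq_top, LinearMap.range_comp, Submodule.range_subtype]
    rcases hirr.2 _ (hp.map_inv hN) with h | h
    · exfalso
      have : p z ∈ N.map p := ⟨z, hzN, rfl⟩
      rw [h] at this
      exact hu this
    · exact h

/-- The scalars `σ_j` determine an irreducible module up to isomorphism: the submodule of the direct
sum generated by a pair of lowest weight vectors is the graph of an isomorphism. -/
theorem exists_iso [FiniteDimensional F V] [FiniteDimensional F V'] (hq : QGood q) (hx : IsBox q d x) (hirr : IsIrr x) (hx' : IsBox q d x') (hirr' : IsIrr x')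
    {u : V} (hu : u ∈ Fl q d x 0 1) (hu0 : u ≠ 0) {u' : V'} (hu' : u' ∈ Fl q d x' 0 1) (hu0' : u' ≠ 0)
    {σ : ℕ → F} (hσ : ∀ j, Tt q d x j u = σ j • u) (hσ' : ∀ j, Tt q d x' j u' = σ j • u') :
    ∃ g : V ≃ₗ[F] V', Intw g.toLinearMap x x' := by
  set xx : ZMod 4 → Module.End F (V × V') := fun i => (x i).prodMap (x' i) with hxx
  have hp : Intw (LinearMap.fst F V V') xx x := fun _ _ => rfl
  have hp' : Intw (LinearMap.snd F V V') xx x' := fun _ _ => rfl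
  have hj : Intw (LinearMap.inl F V V') x xx := fun i v => by simp [hxx]
  have hj' : Intw (LinearMap.inr F V V') x' xx := fun i v => by simp [hxx]
  have hb : IsBox q d xx := by
    refine ⟨fun i => ?_, fun i => ?_, fun i => ?_⟩
    · refine LinearMap.ext fun v => Prod.ext ?_ ?_
      · simpa [pow_succ, hxx] using end_apply (hx.rel1 i) v.1
      · simpa [pow_succ, hxx] using end_apply (hx'.rel1 i) v.2
    · refine LinearMap.ext fun v => Prod.ext ?_ ?_
      · simpa [pow_succ, hxx] using end_apply (hx.rel2 i) v.1
      · simpa [pow_succ, hxx] using end_apply (hx'.rel2 i) v.2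
    · refine LinearMap.ext fun v => Prod.ext ?_ ?_
      · have := hp.map_aeval i (pr (lam q d) (d + 1)) v
        rw [hx.ann] at this; exact this
      · have := hp'.map_aeval i (pr (lam q d) (d + 1)) v
        rw [hx'.ann] at this; exact this
  have hT : ∀ j, Tt q d xx j (u, u') = σ j • (u, u') := fun j => by
    refine Prod.ext ?_ ?_
    · exact (hp.map_Tt j (u, u')).trans (hσ j)
    · exact (hp'.map_Tt j (u, u')).trans (hσ' j)
  have hmem : (u, u') ∈ Fl q d xx 0 1 := by
    have : (u, u') = LinearMap.inl F V V' u + LinearMap.inr F V V' u' := by simp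
    rw [this]
    exact add_mem (hj.map_Fl hu) (hj'.map_Fl hu')
  obtain ⟨N, hN⟩ : ∃ N, N = gen13 xx (Submodule.span F {(u, u')}) := ⟨_, rfl⟩
  have hNi : ∀ i, ∀ v ∈ N, xx i v ∈ N := by rw [hN]; exact fun i => gen13_inv hq hb _ i
  have hzN : (u, u') ∈ N := by rw [hN]; exact le_gen13 _ (Submodule.mem_span_singleton_self _)
  have hE : ∀ v ∈ N, EE q d xx v ∈ Submodule.span F {(u, u')} := by
    rw [hN]
    refine gen13_EE hq hb ((Submodule.span_singleton_le_iff_mem _ _).mpr hmem) fun j v hv => ?_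
    obtain ⟨c, rfl⟩ := Submodule.mem_span_singleton.mp hv
    rw [map_smul, hT, smul_comm]
    exact Submodule.smul_mem _ _ hv
  have b1 := proj_bij (p' := LinearMap.snd F V V') hq hx' hirr hirr' hp hj' (fun z h => Prod.ext h rfl)
    (fun w => rfl) (fun w => rfl) hNi hzN hE hu0 hu' hu0'
  have b2 := proj_bij (p' := LinearMap.fst F V V') hq hx hirr' hirr hp' hj (fun z h => Prod.ext rfl h)
    (fun w => rfl) (fun w => rfl) hNi hzN hE hu0' hu hu0
  refine ⟨(LinearEquiv.ofBijective _ b1).symm.trans (LinearEquiv.ofBijective _ b2), fun i v => ?_⟩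
  obtain ⟨n, rfl⟩ := (LinearEquiv.ofBijective _ b1).surjective v
  have : x i (LinearEquiv.ofBijective _ b1 n) = LinearEquiv.ofBijective _ b1 ⟨xx i n, hNi i n n.2⟩ := rfl
  simp only [LinearEquiv.coe_coe, LinearEquiv.trans_apply, this, LinearEquiv.symm_apply_apply]
  rfl

theorem sigma_eq_of_iso [IsAlgClosed F] [FiniteDimensional F V'] (hq : QGood q) {d' : ℕ} (hx : IsBox q d x)
    (hx' : IsBox q d' x') (hirr' : IsIrr x') (g : V ≃ₗ[F] V') (hg : Intw g.toLinearMap x x')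
    {u : V} (hu : u ∈ Fl q d x 0 1) (hu0 : u ≠ 0) {u' : V'} (hu' : u' ∈ Fl q d' x' 0 1) (hu0' : u' ≠ 0)
    {σ σ' : ℕ → F} (hσ : ∀ j, Tt q d x j u = σ j • u) (hσ' : ∀ j, Tt q d' x' j u' = σ' j • u') :
    d = d' ∧ σ = σ' := by
  have hgu : g u ∈ Fl q d x' 0 1 := hg.map_Fl hu
  have hgu0 : g u ≠ 0 := g.map_ne_zero_iff.mpr hu0
  have h1' : Fl q d' x' 0 1 ≠ ⊥ := fun h => hu0' (by rwa [h] at hu')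
  obtain rfl : d = d' := le_antisymm (diam_le hq hx' fun h => hgu0 (by rwa [h] at hgu))
    (diam_le hq (hx.of_surj hg g.surjective) h1')
  refine ⟨rfl, funext fun j => ?_⟩
  obtain ⟨c, hc⟩ := (finrank_eq_one_iff_of_nonzero' (⟨u', hu'⟩ : Fl q d x' 0 1) (by
        intro h; exact hu0' (congrArg Subtype.val h))).mp (dim_one hq d V' x' hx' hirr' h1') ⟨g u, hgu⟩
  have hc : c • u' = g u := congrArg Subtype.val hc
  have h2 : Tt q d x' j (g u) = σ' j • g u := by rw [← hc, map_smul, hσ', smul_comm]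
  have h3 : Tt q d x' j (g u) = σ j • g u := by
    have := hg.map_Tt (q := q) (d := d) j u
    rw [hσ, map_smul] at this
    exact this.symm
  exact smul_left_injective F hgu0 (h3.symm.trans h2)

end BoxProof

end

/-! ### Tensor product with a two-dimensional evaluation module -/

section

namespace BoxProof
open Polynomial Module.End
open scoped BigOperators

variable {F : Type} [Field F] {V : Type} [AddCommGroup V] [Module F V] {q : F} {d : ℕ}
  {K k e0p e0m e1p e1m : Module.End F V}

/-- The endomorphism of `V × V` with a given block form. -/
def blk (a b c e : Module.End F V) : Module.End F (V × V) :=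
  LinearMap.prod (a.coprod b) (c.coprod e)

theorem blk_apply (a b c e : Module.End F V) (v : V × V) :
    blk a b c e v = (a v.1 + b v.2, c v.1 + e v.2) := rfl

theorem blk_mul (a b c e a' b' c' e' : Module.End F V) : blk a b c e * blk a' b' c' e' =
    blk (a * a' + b * c') (a * b' + b * e') (c * a' + e * c') (c * b' + e * e') := by
  refine LinearMap.ext fun v => ?_
  simp only [blk_apply, Module.End.mul_apply, map_add, LinearMap.add_apply]
  ext <;> simp only <;> abel

theorem blk_add (a b c e a' b' c' e' : Module.End F V) : blk a b c e + blk a' b' c' e' =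
    blk (a + a') (b + b') (c + c') (e + e') := by
  refine LinearMap.ext fun v => ?_
  simp only [blk_apply, LinearMap.add_apply, Prod.mk_add_mk]
  ext <;> simp only <;> abel

theorem blk_smul (t : F) (a b c e : Module.End F V) :
    t • blk a b c e = blk (t • a) (t • b) (t • c) (t • e) := by
  refine LinearMap.ext fun v => ?_
  simp only [blk_apply, LinearMap.smul_apply, Prod.smul_mk, smul_add]

theorem blk_sub (a b c e a' b' c' e' : Module.End F V) : blk a b c e - blk a' b' c' e' =
    blk (a - a') (b - b') (c - c') (e - e') := by
  refine LinearMap.ext fun v => ?_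
  simp only [blk_apply, LinearMap.sub_apply, Prod.mk_sub_mk]
  ext <;> simp only <;> abel

theorem blk_one : (1 : Module.End F (V × V)) = blk 1 0 0 1 := by
  refine LinearMap.ext fun v => ?_
  simp [blk_apply]

theorem blk_congr {a b c e a' b' c' e' : Module.End F V} (h1 : a = a') (h2 : b = b') (h3 : c = c')
    (h4 : e = e') : blk a b c e = blk a' b' c' e' := by rw [h1, h2, h3, h4]

theorem serre_low (hq : QGood q) {R : Type} [Ring R] [Algebra F R] {a c : R} (h : Serre q a c) :
   a * (a * (a * c)) = (q ^ 2 + 1 + (q ^ 2)⁻¹) • (a * (a * (c * a))) + c * (a * (a * a)) -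
     (q ^ 2 + 1 + (q ^ 2)⁻¹) • (a * (c * (a * a))) := by
  rw [Serre, q3 hq] at h
  rw [eq_sub_iff_add_eq]
  simpa [pow_succ, mul_assoc] using h

/-- The Serre relation for the coproducts of raising operators on the tensor product with a
two-dimensional module; `serre_blk_ul` is the same with the two basis vectors exchanged. -/
theorem serre_blk_lu (hq : QGood q) {a c : Module.End F V} {t : F} (ht : t = q ∨ t = q⁻¹) (z w : F)
    (h : Serre q a c) :
    Serre q (blk (t⁻¹ • a) 0 (z • 1) (t • a)) (blk (t • c) (w • 1) 0 (t⁻¹ • c)) := by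
  have hq0 := hq.ne0
  have hs := serre_low hq h
  rw [Serre, q3 hq]
  simp only [pow_succ, pow_zero, one_mul, blk_mul, blk_add, blk_smul]
  apply blk_congr <;>
  · simp only [mul_add, add_mul, smul_add, smul_mul_assoc, mul_smul_comm, smul_smul, mul_assoc, mul_zero,
      zero_mul, smul_zero, add_zero, zero_add, mul_one, one_mul, hs]
    rcases ht with rfl | rfl <;> match_scalars <;> field_simp <;> ring

theorem serre_blk_ul (hq : QGood q) {a c : Module.End F V} {t : F} (ht : t = q ∨ t = q⁻¹) (z w : F)
    (h : Serre q a c) :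
    Serre q (blk (t • a) (w • 1) 0 (t⁻¹ • a)) (blk (t⁻¹ • c) 0 (z • 1) (t • c)) := by
  have hq0 := hq.ne0
  have hs := serre_low hq h
  rw [Serre, q3 hq]
  simp only [pow_succ, pow_zero, one_mul, blk_mul, blk_add, blk_smul]
  apply blk_congr <;>
  · simp only [mul_add, add_mul, smul_add, smul_mul_assoc, mul_smul_comm, smul_smul, mul_assoc, mul_zero,
      zero_mul, smul_zero, add_zero, zero_add, mul_one, one_mul, hs]
    rcases ht with rfl | rfl <;> match_scalars <;> field_simp <;> ring

set_option linter.unusedSimpArgs false in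
set_option maxHeartbeats 1000000 in
/-- Tensoring with a two-dimensional evaluation module of parameter `z`: the block matrices are those of
the coproducts on `V × V`, the sum of the two copies of `V` attached to a weight basis. -/
theorem IsUqMod.tensor (hq : QGood q) (h : IsUqMod q d K k e0p e0m e1p e1m) {z : F} (hz : z ≠ 0) :
    IsUqMod q (d + 1) (blk (q⁻¹ • K) 0 0 (q • K)) (blk (q • k) 0 0 (q⁻¹ • k))
      (blk (q⁻¹ • e0p) 0 (z • 1) (q • e0p)) (blk e0m (z⁻¹ • k) 0 e0m)
      (blk (q • e1p) 1 0 (q⁻¹ • e1p)) (blk e1m 0 K e1m) := by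
  have hq0 := hq.ne0
  have hu := h.uq
  have hb := (isUq_iff hq hu.Kk hu.kK hu.p0 hu.m0 hu.p1 hu.m1).mp hu
  refine ⟨(isUq_iff hq ?_ ?_ ?_ ?_ ?_ ?_).mpr ?_, ?_⟩
  · rw [blk_mul, blk_one]
    apply blk_congr <;> simp [smul_smul, hu.Kk, hq0]
  · rw [blk_mul, blk_one]
    apply blk_congr <;> simp [smul_smul, hu.kK, hq0]
  · rw [blk_mul, blk_mul, blk_smul]
    apply blk_congr <;> simp only [mul_zero, zero_mul, add_zero, zero_add, smul_zero, smul_mul_assoc,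
      mul_smul_comm, smul_smul, mul_one, one_mul, hu.p0] <;> match_scalars <;> field_simp
  · rw [blk_mul, blk_mul, blk_smul]
    apply blk_congr <;> simp only [mul_zero, zero_mul, add_zero, zero_add, smul_zero, smul_mul_assoc,
      mul_smul_comm, smul_smul, mul_one, one_mul, hu.m0, hu.Kk, hu.kK] <;> match_scalars <;> field_simp
  · rw [blk_mul, blk_mul, blk_smul]
    apply blk_congr <;> simp only [mul_zero, zero_mul, add_zero, zero_add, smul_zero, smul_mul_assoc,
      mul_smul_comm, smul_smul, mul_one, one_mul, hu.p1] <;> match_scalars <;> field_simp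
  · rw [blk_mul, blk_mul, blk_smul]
    apply blk_congr <;> simp only [mul_zero, zero_mul, add_zero, zero_add, smul_zero, smul_mul_assoc,
      mul_smul_comm, smul_smul, mul_one, one_mul, hu.m1] <;> match_scalars <;> field_simp
  · set x := bxOf q K k e0p e0m e1p e1m with hx
    set x' := bxOf q (blk (q⁻¹ • K) 0 0 (q • K)) (blk (q • k) 0 0 (q⁻¹ • k))
      (blk (q⁻¹ • e0p) 0 (z • 1) (q • e0p)) (blk e0m (z⁻¹ • k) 0 e0m)
      (blk (q • e1p) 1 0 (q⁻¹ • e1p)) (blk e1m 0 K e1m) with hx'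
    have b0 : x' 0 = blk (q⁻¹ • x 0) (((q - q⁻¹) * z⁻¹) • 1) 0 (q • x 0) := by
      change blk _ _ _ _ + _ • (blk _ _ _ _ * blk _ _ _ _) =
        blk (_ • (K + (q * (q - q⁻¹)) • (K * e0m))) _ _ (_ • (K + (q * (q - q⁻¹)) • (K * e0m)))
      rw [blk_mul, blk_smul, blk_add]
      apply blk_congr <;> simp only [mul_zero, zero_mul, add_zero, zero_add, smul_zero, smul_mul_assoc,
        mul_smul_comm, smul_smul, smul_add, hu.Kk] <;> match_scalars <;> field_simp
    have b2 : x' 2 = blk (q • x 2) 0 ((q - q⁻¹) • 1) (q⁻¹ • x 2) := by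
      change blk _ _ _ _ + _ • (blk _ _ _ _ * blk _ _ _ _) =
        blk (_ • (k + (q * (q - q⁻¹)) • (k * e1m))) _ _ (_ • (k + (q * (q - q⁻¹)) • (k * e1m)))
      rw [blk_mul, blk_smul, blk_add]
      apply blk_congr <;> simp only [mul_zero, zero_mul, add_zero, zero_add, smul_zero, smul_mul_assoc,
        mul_smul_comm, smul_smul, smul_add, hu.kK] <;> match_scalars <;> field_simp
    have b1 : x' 1 = blk (q • x 1) ((-(q - q⁻¹)) • 1) 0 (q⁻¹ • x 1) := by
      change blk _ _ _ _ - _ • blk _ _ _ _ =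
        blk (_ • (k - (q - q⁻¹) • e1p)) _ _ (_ • (k - (q - q⁻¹) • e1p))
      rw [blk_smul, blk_sub]
      apply blk_congr <;> (try simp only [smul_zero, smul_smul, smul_sub, sub_zero]) <;> match_scalars <;>
        ring
    have b3 : x' 3 = blk (q⁻¹ • x 3) 0 ((-((q - q⁻¹) * z)) • 1) (q • x 3) := by
      change blk _ _ _ _ - _ • blk _ _ _ _ =
        blk (_ • (K - (q - q⁻¹) • e0p)) _ _ (_ • (K - (q - q⁻¹) • e0p))
      rw [blk_smul, blk_sub]
      apply blk_congr <;> (try simp only [smul_zero, smul_smul, smul_sub, sub_zero]) <;> match_scalars <;>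
        ring
    have r : ∀ i, q • (x i * x (i + 1)) = q⁻¹ • (x (i + 1) * x i) + (q - q⁻¹) • 1 := fun i => by
      rw [← hb.1 i]; abel
    have r' : ∀ i, x i * x (i + 1) = q⁻¹ • q⁻¹ • (x (i + 1) * x i) + q⁻¹ • (q - q⁻¹) • 1 := fun i => by
      rw [← smul_add, ← r, smul_smul, inv_mul_cancel₀ hq0, one_smul]
    have r0 : x 0 * x 1 = q⁻¹ • q⁻¹ • (x 1 * x 0) + q⁻¹ • (q - q⁻¹) • 1 := r' 0
    have r1 : x 1 * x 2 = q⁻¹ • q⁻¹ • (x 2 * x 1) + q⁻¹ • (q - q⁻¹) • 1 := r' 1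
    have r2 : x 2 * x 3 = q⁻¹ • q⁻¹ • (x 3 * x 2) + q⁻¹ • (q - q⁻¹) • 1 := r' 2
    have r3 : x 3 * x 0 = q⁻¹ • q⁻¹ • (x 0 * x 3) + q⁻¹ • (q - q⁻¹) • 1 := r' 3
    have s0 : Serre q (x 0) (x 2) := hb.2 0
    have s1 : Serre q (x 1) (x 3) := hb.2 1
    have s2 : Serre q (x 2) (x 0) := hb.2 2
    have s3 : Serre q (x 3) (x 1) := hb.2 3
    have t0 := serre_blk_ul hq (t := q⁻¹) (Or.inr rfl) (q - q⁻¹) ((q - q⁻¹) * z⁻¹) s0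
    have t1 := serre_blk_ul hq (t := q) (Or.inl rfl) (-((q - q⁻¹) * z)) (-(q - q⁻¹)) s1
    have t2 := serre_blk_lu hq (t := q⁻¹) (Or.inr rfl) (q - q⁻¹) ((q - q⁻¹) * z⁻¹) s2
    have t3 := serre_blk_lu hq (t := q) (Or.inl rfl) (-((q - q⁻¹) * z)) (-(q - q⁻¹)) s3
    rw [inv_inv] at t0 t2
    rw [← b0, ← b2] at t0 t2
    rw [← b1, ← b3] at t1 t3
    constructor
    · have key : ∀ {a b c e a' b' c' e' : Module.End F V},
          q • (a * a' + b * c') - q⁻¹ • (a' * a + b' * c) = (q - q⁻¹) • 1 →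
          q • (a * b' + b * e') - q⁻¹ • (a' * b + b' * e) = 0 →
          q • (c * a' + e * c') - q⁻¹ • (c' * a + e' * c) = 0 →
          q • (c * b' + e * e') - q⁻¹ • (c' * b + e' * e) = (q - q⁻¹) • 1 →
          q • (blk a b c e * blk a' b' c' e') - q⁻¹ • (blk a' b' c' e' * blk a b c e) = (q - q⁻¹) • 1 := by
        intro a b c e a' b' c' e' h1 h2 h3 h4
        rw [blk_mul, blk_mul, blk_smul, blk_smul, blk_sub, blk_one, blk_smul, h1, h2, h3, h4, smul_zero]
      intro i
      fin_cases i
      · change q • (x' 0 * x' 1) - q⁻¹ • (x' 1 * x' 0) = _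
        rw [b0, b1]
        apply key <;> simp only [mul_zero, zero_mul, add_zero, zero_add, smul_zero, smul_mul_assoc,
          mul_smul_comm, smul_smul, smul_add, mul_one, one_mul, r0] <;> match_scalars <;> field_simp <;> ring
      · change q • (x' 1 * x' 2) - q⁻¹ • (x' 2 * x' 1) = _
        rw [b1, b2]
        apply key <;> simp only [mul_zero, zero_mul, add_zero, zero_add, smul_zero, smul_mul_assoc,
          mul_smul_comm, smul_smul, smul_add, mul_one, one_mul, r1] <;> match_scalars <;> field_simp <;> ring
      · change q • (x' 2 * x' 3) - q⁻¹ • (x' 3 * x' 2) = _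
        rw [b2, b3]
        apply key <;> simp only [mul_zero, zero_mul, add_zero, zero_add, smul_zero, smul_mul_assoc,
          mul_smul_comm, smul_smul, smul_add, mul_one, one_mul, r2] <;> match_scalars <;> field_simp <;> ring
      · change q • (x' 3 * x' 0) - q⁻¹ • (x' 0 * x' 3) = _
        rw [b3, b0]
        apply key <;> simp only [mul_zero, zero_mul, add_zero, zero_add, smul_zero, smul_mul_assoc,
          mul_smul_comm, smul_smul, smul_add, mul_one, one_mul, r3] <;> match_scalars <;> field_simp <;> ring
    · intro i
      fin_cases i
      exacts [t0, t1, t2, t3]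
  · set K' := blk (q⁻¹ • K) 0 0 (q • K) with hK'
    have htop : (⊤ : Submodule F V) ≤ ⨆ n : ℕ, ⨆ _ : n ≤ d, eigenspace K (lam q d n) := by
      have h1 := semisimple_of_ann (lam_injOn hq d) h.ann
      rw [← show _ = _ from h1]
      refine iSup_le fun θ => ?_
      by_cases hb : eigenspace K θ = ⊥
      · rw [hb]; exact bot_le
      · obtain ⟨n, hn, rfl⟩ := eigSet_subset_of_ann h.ann hb
        exact le_iSup₂_of_le n hn le_rfl
    have e1 : ∀ g : V →ₗ[F] V × V, (∀ n ≤ d, ∃ m ≤ d + 1, ∀ v ∈ eigenspace K (lam q d n),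
        g v ∈ eigenspace K' (lam q (d + 1) m)) → ∀ v, aeval K' (pr (lam q (d + 1)) (d + 1 + 1)) (g v) = 0 := by
      intro g hg v
      have : (⊤ : Submodule F V) ≤ (KA (lam q (d + 1)) K' (d + 1 + 1)).comap g := by
        refine htop.trans (iSup₂_le fun n hn v hv => ?_)
        obtain ⟨m, hm, hm'⟩ := hg n hn
        exact eig_le_KA (Nat.lt_succ_of_le hm) (hm' v hv)
      exact this (Submodule.mem_top (x := v))
    refine LinearMap.ext fun v => ?_
    have hv : v = LinearMap.inl F V V v.1 + LinearMap.inr F V V v.2 := by simp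
    rw [hv, map_add, e1, e1, add_zero, LinearMap.zero_apply]
    · refine fun n hn => ⟨n + 1, by omega, fun v hv => ?_⟩
      rw [mem_eigenspace_iff] at *
      have : lam q (d + 1) (n + 1) = q * lam q d n := by
        rw [lam, lam, ← zpow_one_add₀ hq0]; congr 1; push_cast; ring
      simp [hK', blk_apply, hv, this, smul_smul]
    · refine fun n hn => ⟨n, by omega, fun v hv => ?_⟩
      rw [mem_eigenspace_iff] at *
      have : lam q (d + 1) n = q⁻¹ * lam q d n := by
        rw [lam_scale hq d, ← mul_assoc, inv_mul_cancel₀ hq0, one_mul]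
      simp [hK', blk_apply, hv, this, smul_smul]

end BoxProof

end

/-! ### Every polynomial comes from a `U_q(L(sl₂))`-module -/

section

namespace BoxProof
open Polynomial Module.End
open scoped BigOperators
variable {F : Type} [Field F] {V : Type} [AddCommGroup V] [Module F V] {q : F} {d : ℕ}
  {K k e0p e0m e1p e1m : Module.End F V}

theorem qInt_one (hq : QGood q) : qInt F q 1 = 1 := by
  simp [qInt, div_self hq.c0_ne]

theorem qInt_rec (hq : QGood q) (j : ℕ) : q * qInt F q j + (q⁻¹) ^ j = qInt F q (j + 1) := by
  have hc := hq.c0_ne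
  have hq0 := hq.ne0
  simp only [qInt]
  rw [mul_div_assoc', div_add' _ _ _ hc]
  congr 1
  push_cast
  rw [zpow_neg, zpow_neg, zpow_add_one₀ hq0, zpow_natCast, inv_pow]
  field_simp
  ring

/-- Powers of the coproduct of `e₀⁺` on the tensor product with an evaluation module. -/
theorem pow_lower (hq : QGood q) (a : Module.End F V) (z : F) (v : V) (j : ℕ) :
    (blk (q⁻¹ • a) 0 (z • 1) (q • a) ^ (j + 1)) (v, 0) =
      ((q⁻¹) ^ (j + 1) • (a ^ (j + 1)) v, (z * qInt F q (j + 1)) • (a ^ j) v) := by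
  induction j with
  | zero => simp [blk_apply, qInt_one hq]
  | succ j ih =>
    rw [pow_succ', Module.End.mul_apply, ih, blk_apply]
    rw [← qInt_rec hq (j + 1), pow_succ' a (j + 1)]
    refine Prod.ext ?_ ?_
    · simp only [LinearMap.smul_apply, map_smul, LinearMap.zero_apply, smul_zero, add_zero,
        Module.End.mul_apply]
      rw [smul_smul, ← pow_succ]
    · simp only [LinearMap.smul_apply, map_smul, Module.End.one_apply, pow_succ' a j,
        Module.End.mul_apply]
      module

/-- Powers of the coproduct of `e₁⁺` on the tensor product with an evaluation module. -/
theorem pow_upper (hq : QGood q) (c : Module.End F V) (p r : V) (j : ℕ) :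
    (blk (q • c) 1 0 (q⁻¹ • c) ^ (j + 1)) (p, r) =
      (q ^ (j + 1) • (c ^ (j + 1)) p + qInt F q (j + 1) • (c ^ j) r, (q⁻¹) ^ (j + 1) • (c ^ (j + 1)) r) := by
  induction j with
  | zero => simp [blk_apply, qInt_one hq]
  | succ j ih =>
    rw [pow_succ', Module.End.mul_apply, ih, blk_apply]
    rw [← qInt_rec hq (j + 1), pow_succ' c (j + 1)]
    refine Prod.ext ?_ ?_
    · simp only [LinearMap.smul_apply, map_add, map_smul, Module.End.one_apply, pow_succ' c j,
        Module.End.mul_apply]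
      module
    · simp only [LinearMap.smul_apply, map_smul, LinearMap.zero_apply, zero_add, Module.End.mul_apply]
      rw [smul_smul, ← pow_succ]

/-- Every polynomial with constant coefficient `1` is recorded by a lowest weight vector of some
module: a tensor product of two-dimensional evaluation modules, one for each root. -/
theorem exists_uqMod [IsAlgClosed F] (hq : QGood q) : ∀ (d : ℕ) (f : F[X]), f.natDegree = d → f.coeff 0 = 1 →
    ∃ (V : Type) (_ : AddCommGroup V) (_ : Module F V) (_ : FiniteDimensional F V)
      (K k e0p e0m e1p e1m : Module.End F V) (v : V), IsUqMod q d K k e0p e0m e1p e1m ∧ v ≠ 0 ∧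
      K v = lam q d 0 • v ∧ e1p v = 0 ∧
      ∀ j, (e1p ^ j) ((e0p ^ j) v) = ((-1) ^ j * f.coeff j * qFact F q j ^ 2) • v := by
  intro d
  induction d with
  | zero =>
    intro f hf h0
    refine ⟨F, inferInstance, inferInstance, inferInstance, 1, 1, 0, 0, 0, 0, 1,
      ⟨⟨?_, ?_, ?_, ?_, ?_, ?_, ?_, ?_, ?_, ?_, ?_, ?_, ?_, ?_⟩, ?_⟩, one_ne_zero, ?_, ?_, ?_⟩
    any_goals simp [Serre]
    · simp [pr, lam]
    · simp [lam]
    · intro j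
      rcases j with _ | j
      · simp [h0, qFact]
      · rw [coeff_eq_zero_of_natDegree_lt (by omega)]; simp
  | succ d ih =>
    intro f hf h0
    have hf0 : f ≠ 0 := by rintro rfl; simp at h0
    obtain ⟨r, hr⟩ := IsAlgClosed.exists_root f (by
      rw [degree_eq_natDegree hf0, hf]; exact_mod_cast Nat.succ_ne_zero d)
    obtain ⟨g, hg⟩ := dvd_iff_isRoot.mpr hr
    have hr0 : r ≠ 0 := by
      rintro rfl
      rw [hg] at h0
      simp at h0
    obtain ⟨f0, hf0d⟩ : ∃ f0, f0 = C (-r) * g := ⟨_, rfl⟩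
    have hfac : f = (1 - C r⁻¹ * X) * f0 := by
      rw [hg, hf0d, C_neg]
      have : C r⁻¹ * C r = (1 : F[X]) := by rw [← C_mul, inv_mul_cancel₀ hr0, C_1]
      linear_combination (-X * g) * this
    have hg0 : g ≠ 0 := by rintro rfl; simp at hg; exact hf0 hg
    have hd : f0.natDegree = d := by
      rw [hf0d, natDegree_C_mul (neg_ne_zero.mpr hr0)]
      have := natDegree_mul (X_sub_C_ne_zero r) hg0
      rw [← hg, hf, natDegree_X_sub_C] at this
      omega
    have hc0 : f0.coeff 0 = 1 := by
      have := h0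
      rw [hfac, sub_mul, one_mul, mul_assoc, coeff_sub, coeff_C_mul, coeff_X_mul_zero, mul_zero, sub_zero] at this
      exact this
    have hcs : ∀ j, f.coeff (j + 1) = f0.coeff (j + 1) - r⁻¹ * f0.coeff j := fun j => by
      rw [hfac, sub_mul, one_mul, mul_assoc, coeff_sub, coeff_C_mul, coeff_X_mul]
    obtain ⟨V, _, _, _, K, k, e0p, e0m, e1p, e1m, v, hU, hv0, hK, he, hσ⟩ := ih f0 hd hc0
    refine ⟨V × V, inferInstance, inferInstance, inferInstance, _, _, _, _, _, _, (v, 0),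
      hU.tensor hq (inv_ne_zero hr0), fun h => hv0 (congrArg Prod.fst h), ?_, ?_, ?_⟩
    · rw [blk_apply]
      simp only [LinearMap.smul_apply, hK, lam_scale hq d, LinearMap.zero_apply, add_zero, map_zero, smul_zero,
        Prod.smul_mk]
      rw [smul_smul, ← mul_assoc, inv_mul_cancel₀ hq.ne0, one_mul]
    · rw [blk_apply]; simp [he]
    · intro j
      rcases j with _ | j
      · simp [h0, qFact]
      · rw [pow_lower hq, pow_upper hq]
        have e2 : (e1p ^ (j + 1)) ((e0p ^ j) v) = 0 := by
          rw [pow_succ', Module.End.mul_apply, hσ, map_smul, he, smul_zero]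
        rw [map_smul, map_smul, map_smul, hσ, hσ, e2, hcs, qFact, qFact, Finset.prod_range_succ]
        refine Prod.ext ?_ (by simp)
        simp only [Prod.smul_mk, smul_smul, ← add_smul]
        congr 1
        have := hq.ne0
        simp only [inv_pow]
        field_simp
        ring

end BoxProof

end

/-! ### The three parts of the bijection -/

section

namespace BoxProof
open Polynomial Module.End
open scoped BigOperators
variable {F : Type} [Field F] {V : Type} [AddCommGroup V] [Module F V] {q : F} {d : ℕ}
  {V' : Type} [AddCommGroup V'] [Module F V']
  {x : ZMod 4 → Module.End F V} {x' : ZMod 4 → Module.End F V'}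

theorem IsIrr.of_equiv (h : IsIrr x) (g : V ≃ₗ[F] V') (hg : Intw g.toLinearMap x x') : IsIrr x' := by
  refine ⟨?_, fun W hW => ?_⟩
  · have := h.1
    exact g.symm.toEquiv.nontrivial
  · have hW' : W = (W.comap g.toLinearMap).map g.toLinearMap :=
      (Submodule.map_comap_eq_of_surjective g.surjective W).symm
    rcases h.2 _ (hg.comap_inv hW) with h | h
    · left; rw [hW', h, Submodule.map_bot]
    · right; rw [hW', h, Submodule.map_top]; exact LinearMap.range_eq_top.mpr g.surjective

/-- A line in the lowest weight space, stable under all `T_j`, gives an irreducible module on which the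
`T_j` act by the same scalars; nonvanishing of the polynomial at `1` forces full diameter. -/
theorem exists_irr [FiniteDimensional F V] (hq : QGood q) (hx : IsBox q d x) {v : V}
    (hv : v ∈ Fl q d x 0 1) (hv0 : v ≠ 0) {σ : ℕ → F} (hσ : ∀ j, Tt q d x j v = σ j • v)
    (h1 : (polyOf F q d σ).eval 1 ≠ 0) :
    ∃ (n : ℕ) (y : ZMod 4 → Module.End F (Fin n → F)) (u : Fin n → F), IsBox q d y ∧ IsIrr y ∧
      Fl q d y 0 d ≠ ⊤ ∧ u ∈ Fl q d y 0 1 ∧ u ≠ 0 ∧ ∀ j, Tt q d y j u = σ j • u := by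
  have hvX : v ∈ F ∙ v := Submodule.mem_span_singleton_self v
  obtain ⟨Y, hY, hXY, -, N, hN, hirr, hNE, -⟩ := exists_subquot hq hx (X := F ∙ v)
    (by rwa [Submodule.span_singleton_le_iff_mem])
    (by rwa [Ne, Submodule.span_singleton_eq_bot])
    (by
      intro j u hu
      obtain ⟨c, rfl⟩ := Submodule.mem_span_singleton.mp hu
      rw [map_smul, hσ]
      exact Submodule.smul_mem _ _ (Submodule.smul_mem _ _ hvX))
    (by
      intro X' hle hne _
      obtain ⟨u, hu, hu0⟩ := Submodule.exists_mem_ne_zero_of_ne_bot hne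
      refine le_antisymm hle ?_
      rw [Submodule.span_singleton_le_iff_mem]
      obtain ⟨c, rfl⟩ := Submodule.mem_span_singleton.mp (hle hu)
      have hc : c ≠ 0 := by rintro rfl; simp at hu0
      simpa [smul_smul, inv_mul_cancel₀ hc] using Submodule.smul_mem _ c⁻¹ hu)
  have hg := intw_res (x := x) Y hY
  have hinj : Function.Injective Y.subtype := Subtype.val_injective
  have hxY : IsBox q d (resX x Y hY) := IsBox.of_inj hx hg hinj
  obtain ⟨w, hw⟩ : ∃ w : Y, (w : V) = v := ⟨⟨v, hXY hvX⟩, rfl⟩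
  have hwF : w ∈ Fl q d (resX x Y hY) 0 1 := (hg.mem_Fl hinj).mpr (by rw [Submodule.subtype_apply, hw]; exact hv)
  have hwσ : ∀ j, Tt q d (resX x Y hY) j w = σ j • w := fun j => hinj (by
    rw [hg.map_Tt, map_smul, Submodule.subtype_apply, hw, hσ])
  have hw0 : w ≠ 0 := by rintro rfl; exact hv0 hw.symm
  have hp := intw_quo (x := resX x Y hY) N hN
  have hxZ := IsBox.of_surj hxY hp N.mkQ_surjective
  have key : ∀ t : Y, EE q d (resX x Y hY) t ≠ 0 → N.mkQ t ≠ 0 := fun t ht h =>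
    ht (LinearMap.mem_ker.mp (hNE (by simpa using h)))
  have hu0 : N.mkQ w ≠ 0 := key w (by rw [EE_of_eig hq (by rwa [Fl01 hq hxY] at hwF)]; exact hw0)
  have he0 : N.mkQ (eta q d (resX x Y hY) w) ≠ 0 :=
    key _ (by rw [EE_eta_poly hq hwσ]; exact smul_ne_zero h1 hw0)
  have h3 : Fl q d (quoX _ N hN) 3 1 ≠ ⊥ := fun h => he0 (by
    have := hp.map_Fl (eta_mem hxY w); rwa [h] at this)
  have h0d : Fl q d (quoX _ N hN) 0 d ≠ ⊤ := (full_succ hq hxZ (i := 3)).1 h3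
  -- The quotient is moved to a coordinate space `Fin n → F`.
  let g : (Y ⧸ N) ≃ₗ[F] (Fin (Module.finrank F (Y ⧸ N)) → F) := (Module.finBasis F (Y ⧸ N)).equivFun
  obtain ⟨y, hy⟩ : ∃ y : ZMod 4 → Module.End F (Fin (Module.finrank F (Y ⧸ N)) → F),
      y = fun i => g.conj (quoX _ N hN i) := ⟨_, rfl⟩
  have hgy : Intw g.toLinearMap (quoX _ N hN) y := fun i v => by
    rw [hy]; simp [LinearEquiv.conj_apply]
  refine ⟨_, y, g (N.mkQ w), hxZ.of_surj hgy g.surjective, hirr.of_equiv g hgy, fun h => h0d ?_,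
    hgy.map_Fl (hp.map_Fl hwF), g.map_ne_zero_iff.mpr hu0, fun j => ?_⟩
  · rw [eq_top_iff]
    intro t _
    rw [hgy.mem_Fl g.injective, h]
    trivial
  · exact (hgy.map_Tt j (N.mkQ w)).symm.trans (by
      rw [← hp.map_Tt, hwσ, map_smul, map_smul]; rfl)

/-- Surjectivity of `V ↦ P_V`. -/
theorem drin_exists [IsAlgClosed F] (hq : QGood q) (f : F[X]) (h0 : f.coeff 0 = 1) (h1 : f.eval 1 ≠ 0) :
    ∃ (n : ℕ) (π : BoxQ F q →ₐ[F] Module.End F (Fin n → F)),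
      IsIrrep F π ∧ (∃ d : ℕ, Type1Diam F q π d) ∧ DrinOf F q π f := by
  obtain ⟨V, _, _, _, K, k, e0p, e0m, e1p, e1m, v, hU, hv0, hK, -, hσ⟩ :=
    exists_uqMod hq f.natDegree f rfl h0
  obtain ⟨σ, hσd⟩ : ∃ σ : ℕ → F, σ = fun j => (-1) ^ j * f.coeff j * qFact F q j ^ 2 := ⟨_, rfl⟩
  have hf : f = polyOf F q f.natDegree σ := by
    ext j
    rw [polyOf_coeff]
    split_ifs with hj
    · have h4 : (-1 : F) ^ j * (-1) ^ j = 1 := by rw [← mul_pow]; simp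
      have h2 := qFact_ne hq j
      rw [hσd, eq_div_iff (pow_ne_zero _ h2)]
      linear_combination (-(f.coeff j * qFact F q j ^ 2)) * h4
    · exact coeff_eq_zero_of_natDegree_lt (by omega)
  have hx := hU.isBox hq
  have hv : v ∈ eigenspace K (lam q f.natDegree 0) := mem_eigenspace_iff.mpr hK
  obtain ⟨n, y, u, hy, hirr, h0d, hu, hu0, huσ⟩ := exists_irr hq hx (v := v) (by rwa [← hU.eig0 hq]) hv0
    (σ := σ) (fun j => by rw [hU.Tt_eq hq hv, hσ, hσd]) (by rwa [← hf])
  obtain ⟨π, hπ⟩ := exists_boxHom (F := F) (q := q) (x := y) ⟨hy.rel1, hy.serre⟩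
  obtain rfl : (fun i => π (bx F q i)) = y := funext hπ
  have h01 : Fl q f.natDegree (fun i => π (bx F q i)) 0 1 ≠ ⊥ := fun h => hu0 (by rwa [h] at hu)
  refine ⟨n, π, (isIrrep_iff π).mpr hirr, ⟨_, type1_of_isBox hq hy hirr h01 h0d⟩, ?_⟩
  rw [hf]
  exact (drin_core hq hy hirr h01 h0d hu hu0 huσ).1

/-- `V ↦ P_V` is well defined and injective on isomorphism classes. -/
theorem drin_eq_iff [IsAlgClosed F] [FiniteDimensional F V] [FiniteDimensional F V'] (hq : QGood q)
    (π : BoxQ F q →ₐ[F] Module.End F V) (π' : BoxQ F q →ₐ[F] Module.End F V')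
    (hi : IsIrrep F π) (ht : ∃ d, Type1Diam F q π d) (hi' : IsIrrep F π') (ht' : ∃ d, Type1Diam F q π' d)
    (f f' : F[X]) (hf : DrinOf F q π f) (hf' : DrinOf F q π' f') : f = f' ↔ RepIso F π π' := by
  obtain ⟨d, hd⟩ := ht
  obtain ⟨d', hd'⟩ := ht'
  obtain ⟨hx, h1, -⟩ := isBox_of_type1 hq hd
  obtain ⟨hx', h1', -⟩ := isBox_of_type1 hq hd'
  rw [isIrrep_iff] at hi hi'
  obtain ⟨u, hu, hu0, σ, hσ, rfl⟩ := drin_sigma hq hx h1 hf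
  obtain ⟨u', hu', hu0', σ', hσ', rfl⟩ := drin_sigma hq hx' h1' hf'
  rw [repIso_iff]
  constructor
  · intro h
    obtain ⟨rfl, rfl⟩ := sigma_eq_of_poly hq h (sigma_top hq hx hu hu0 hσ) (sigma_top hq hx' hu' hu0' hσ')
    exact exists_iso hq hx hi hx' hi' hu hu0 hu' hu0' hσ hσ'
  · rintro ⟨g, hg⟩
    obtain ⟨rfl, rfl⟩ := sigma_eq_of_iso hq hx hx' hi' g hg hu hu0 hu' hu0' hσ hσ'
    rfl

/-- Every type 1 irreducible module has a Drinfel'd polynomial, with the two stated properties. -/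
theorem drin_defined [IsAlgClosed F] [FiniteDimensional F V] (hq : QGood q)
    (π : BoxQ F q →ₐ[F] Module.End F V) (hi : IsIrrep F π) (ht : ∃ d, Type1Diam F q π d) :
    ∃ f : F[X], DrinOf F q π f ∧ f.coeff 0 = 1 ∧ f.eval 1 ≠ 0 := by
  obtain ⟨d, hd⟩ := ht
  obtain ⟨hx, h1, h2⟩ := isBox_of_type1 hq hd
  rw [isIrrep_iff] at hi
  obtain ⟨u, hu, hu0, σ, hσ⟩ := exists_sigma hq hx hi h1
  exact ⟨_, drin_core hq hx hi h1 h2 hu hu0 hσ⟩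

end BoxProof

end

/-- The map `V ↦ P_V` induces a bijection between isomorphism classes of
finite-dimensional irreducible type-1 `□_q`-modules and polynomials with constant
coefficient 1 not vanishing at `z = 1`. -/
theorem stmt15 [IsAlgClosed F] [CharZero F] (q : F) (hq0 : q ≠ 0)
    (hq1 : ∀ n : ℕ, 0 < n → q ^ n ≠ 1) :
    (∀ (V : Type) [AddCommGroup V] [Module F V] [FiniteDimensional F V]
        (π : BoxQ F q →ₐ[F] Module.End F V),
        IsIrrep F π → (∃ d : ℕ, Type1Diam F q π d) →
        ∃ f : Polynomial F, DrinOf F q π f ∧ f.coeff 0 = 1 ∧ f.eval 1 ≠ 0) ∧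
    (∀ (V : Type) [AddCommGroup V] [Module F V] [FiniteDimensional F V]
        (W : Type) [AddCommGroup W] [Module F W] [FiniteDimensional F W]
        (π : BoxQ F q →ₐ[F] Module.End F V) (π' : BoxQ F q →ₐ[F] Module.End F W),
        IsIrrep F π → (∃ d : ℕ, Type1Diam F q π d) →
        IsIrrep F π' → (∃ d : ℕ, Type1Diam F q π' d) →
        ∀ f f' : Polynomial F, DrinOf F q π f → DrinOf F q π' f' →
        (f = f' ↔ RepIso F π π')) ∧
    (∀ f : Polynomial F, f.coeff 0 = 1 → f.eval 1 ≠ 0 →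
        ∃ (n : ℕ) (π : BoxQ F q →ₐ[F] Module.End F (Fin n → F)),
          IsIrrep F π ∧ (∃ d : ℕ, Type1Diam F q π d) ∧ DrinOf F q π f) := by
  have hq : BoxProof.QGood q := ⟨hq0, hq1⟩
  exact ⟨fun V _ _ _ π hi ht => BoxProof.drin_defined hq π hi ht,
    fun V _ _ _ W _ _ _ π π' hi ht hi' ht' f f' hf hf' =>
      BoxProof.drin_eq_iff hq π π' hi ht hi' ht' f f' hf hf',
    fun f h0 h1 => BoxProof.drin_exists hq f h0 h1⟩
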